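/- arXiv:2604.05304 — 7 statements merged into one kernel-verified Lean document; each statement's English description precedes it below -/
import Mathlib

section
/- The set of matchable positive integers has asymptotic density α, i.e., #{n ≤ x : n is matchable}/x → α as x → ∞, where α = ∏_p (1 − p^{−p}) over all primes p. -/
/-!
The density of matchable integers is `α = ∏_p (1 - p^{-p})` because, outside a set of arbitrarily
small upper density, `n` is matchable exactly when `p ^ p ∤ n` for all primes `p` below a large
constant `K`.

*Obstruction.* If `p ^ p ∣ n`, then `{1, …, τ(n)}` contains more multiples of `p` than `n` has
divisors prime to `p`, as soon as the prime-to-`p` part of `n` has at least `p` divisors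
(`not_matchable_of_pow_dvd`).

*Sufficiency* (`matchable_of_conditions`). Suppose `p ^ p ∤ n` for `p ≤ K` and `p ^ 2 ∤ n` for
`p > K`. A prime `p` with `p ^ (p - 1) ∥ n` leaves no slack: the multiples of `p` in `{1, …, τ(n)}`
are exactly as numerous as the divisors prime to `p`. Let `C` be the set of these primes and
`n = (∏_{p ∈ C} p ^ (p - 1)) * u * v`, where the primes of `v` exceed `L` and those of `u` do not.
For `p ∈ C` the exponents `0, …, p - 1` are put in bijection with the residues modulo `p`, exponent
`0` with residue `0`. This splits the problem into one matching problem for each residue class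
modulo `Q = ∏_{p ∈ C} p`, between the divisors of `u * v` and the `τ(u) τ(v)` integers of that class
(`matchable_of_classes`). There every prime of `u` has slack, `(a_p + 1) / p ≤ 1 - 1 / K`, and the
class problem is solved by Hall's theorem (`hall_condition`). Sorted by the primes of `u` dividing
them, the integers of a class follow a product measure with parameters `1 / p`; the primes of `u`
missing from a divisor follow one with the larger parameters `1 / (a_p + 1)`. The gap between the
two measures of an increasing family (`prodMeas_gap`) absorbs both the rounding errors and the
contribution of the large primes, which is governed by `∑_{1 < t ∣ v} 1 / t`.

*Density.* The integers with `p ^ p ∤ n` for all `p ≤ K` have density `∏_{p ≤ K} (1 - p^{-p})`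
(`exists_card_pow_free_bound`). The exceptions are few: a square factor `p ^ 2` with `p > K` has
density at most `1 / K` (`card_sq_dvd_le`), the sum over `t` is small for most `n` by a first-moment
bound (`card_bad_le`), and almost all integers have many prime factors above `L`
(`exists_card_few_primes_le`). Letting first `L` and then `K` grow gives the theorem.
-/

/-- A positive integer `n` is matchable if there is a bijection `ψ` from the set of
divisors of `n` to `{1, 2, ..., τ(n)}` with `gcd(d, ψ(d)) = 1` for every divisor `d`. -/
def Matchable (n : ℕ) : Prop :=
  ∃ ψ : ℕ → ℕ, Set.BijOn ψ ↑n.divisors ↑(Finset.Icc 1 n.divisors.card) ∧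
    ∀ d ∈ n.divisors, Nat.gcd d (ψ d) = 1

/-- `α = ∏_p (1 - p^{-p})`, the product over all primes `p`. -/
noncomputable def alphaConst : ℝ :=
  ∏' p : Nat.Primes, (1 - 1 / ((p : ℕ) : ℝ) ^ (p : ℕ))

namespace MatchDensity

open Finset

/-! ### Product measures of increasing families -/

/-- The measure of the family `{B ⊆ P : U B}` when each `p ∈ P` belongs to the random
subset `B` independently with probability `r p`. -/
noncomputable def prodMeas (P : Finset ℕ) (r : ℕ → ℝ) (U : Finset ℕ → Prop) : ℝ :=
  open Classical in
  ∑ B ∈ P.powerset, if U B then (∏ p ∈ B, r p) * ∏ p ∈ P \ B, (1 - r p) else 0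

lemma prodMeas_insert {P : Finset ℕ} {q : ℕ} (hq : q ∉ P) (r : ℕ → ℝ) (U : Finset ℕ → Prop) :
    prodMeas (insert q P) r U
      = (1 - r q) * prodMeas P r U + r q * prodMeas P r (fun B => U (insert q B)) := by
  classical
  unfold prodMeas
  rw [sum_powerset_insert hq, mul_sum, mul_sum]
  congr 1
  · refine sum_congr rfl fun B hB => ?_
    have hqB : q ∉ B := fun h => hq (mem_powerset.1 hB h)
    split_ifs with h
    · rw [insert_sdiff_of_notMem _ hqB, prod_insert (by simp [hq])]
      ring
    · simp
  · refine sum_congr rfl fun B hB => ?_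
    have hqB : q ∉ B := fun h => hq (mem_powerset.1 hB h)
    split_ifs with h
    · rw [insert_sdiff_insert, prod_insert hqB, sdiff_insert_of_notMem hq]
      ring
    · simp

lemma prodMeas_mono {P : Finset ℕ} {r : ℕ → ℝ} (h0 : ∀ p ∈ P, 0 ≤ r p) (h1 : ∀ p ∈ P, r p ≤ 1)
    {U V : Finset ℕ → Prop} (hUV : ∀ B, U B → V B) : prodMeas P r U ≤ prodMeas P r V := by
  classical
  unfold prodMeas
  refine sum_le_sum fun B hB => ?_
  have hBP := mem_powerset.1 hB
  have hnn : 0 ≤ (∏ p ∈ B, r p) * ∏ p ∈ P \ B, (1 - r p) :=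
    mul_nonneg (prod_nonneg fun p hp => h0 p (hBP hp))
      (prod_nonneg fun p hp => sub_nonneg.2 (h1 p (mem_sdiff.1 hp).1))
  by_cases hU : U B
  · simp [hU, hUV B hU]
  · by_cases hV : V B <;> simp [hU, hV, hnn]

lemma prodMeas_le_one {P : Finset ℕ} {r : ℕ → ℝ} (h0 : ∀ p ∈ P, 0 ≤ r p)
    (h1 : ∀ p ∈ P, r p ≤ 1) (U : Finset ℕ → Prop) : prodMeas P r U ≤ 1 := by
  refine (prodMeas_mono (V := fun _ => True) h0 h1 fun _ _ => trivial).trans ?_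
  have := prod_add r (fun p => 1 - r p) P
  simp only [add_sub_cancel, prod_const_one] at this
  unfold prodMeas
  simp [← this]

lemma prodMeas_nonneg {P : Finset ℕ} {r : ℕ → ℝ} (h0 : ∀ p ∈ P, 0 ≤ r p)
    (h1 : ∀ p ∈ P, r p ≤ 1) (U : Finset ℕ → Prop) : 0 ≤ prodMeas P r U := by
  refine le_trans ?_ (prodMeas_mono (U := fun _ => False) h0 h1 fun _ h => h.elim)
  simp [prodMeas]

lemma prod_le_prodMeas {P : Finset ℕ} {r : ℕ → ℝ} (h0 : ∀ p ∈ P, 0 ≤ r p)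
    (h1 : ∀ p ∈ P, r p ≤ 1) {U : Finset ℕ → Prop} (hU : U P) :
    ∏ p ∈ P, r p ≤ prodMeas P r U := by
  classical
  refine le_trans ?_ (prodMeas_mono (U := fun B => B = P) h0 h1 fun B h => h ▸ hU)
  unfold prodMeas
  rw [sum_eq_single P]
  · simp
  · exact fun B _ hB => if_neg hB
  · simp

/-- The probability of an increasing family grows with the parameters. -/
lemma prodMeas_le {P : Finset ℕ} {r s : ℕ → ℝ} (h0 : ∀ p ∈ P, 0 ≤ r p)
    (hrs : ∀ p ∈ P, r p ≤ s p) (h1 : ∀ p ∈ P, s p ≤ 1) {U : Finset ℕ → Prop}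
    (hU : ∀ A B, A ⊆ B → U A → U B) : prodMeas P r U ≤ prodMeas P s U := by
  induction P using Finset.induction_on generalizing U with
  | empty => simp [prodMeas]
  | insert q P hq ih =>
    have hs0 : ∀ p ∈ P, 0 ≤ s p := fun p hp =>
      (h0 p (mem_insert_of_mem hp)).trans (hrs p (mem_insert_of_mem hp))
    have hs1 : ∀ p ∈ P, s p ≤ 1 := fun p hp => h1 p (mem_insert_of_mem hp)
    have ih' := fun {V : Finset ℕ → Prop} => ih (U := V)
      (fun p hp => h0 p (mem_insert_of_mem hp)) (fun p hp => hrs p (mem_insert_of_mem hp)) hs1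
    have e1 := ih' hU
    have e2 := ih' (V := fun B => U (insert q B))
      fun A B hAB h => hU _ _ (insert_subset_insert _ hAB) h
    have e3 : prodMeas P s U ≤ prodMeas P s (fun B => U (insert q B)) :=
      prodMeas_mono hs0 hs1 fun B h => hU _ _ (subset_insert _ _) h
    rw [prodMeas_insert hq, prodMeas_insert hq]
    have a0 := h0 q (mem_insert_self _ _)
    have a1 := hrs q (mem_insert_self _ _)
    have a2 := h1 q (mem_insert_self _ _)
    nlinarith [mul_le_mul_of_nonneg_left e1 (by linarith : 0 ≤ 1 - r q),
      mul_le_mul_of_nonneg_left e2 a0,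
      mul_nonneg (sub_nonneg.2 a1) (sub_nonneg.2 e3)]

/-- A quantitative form of `prodMeas_le`: a nontrivial increasing family has a pivotal
coordinate, and raising that coordinate alone gains at least `c * ∏ s`. -/
lemma prodMeas_gap {P : Finset ℕ} {r s : ℕ → ℝ} {c : ℝ} (hc : 0 ≤ c) (h0 : ∀ p ∈ P, 0 ≤ r p)
    (hle : ∀ p ∈ P, r p ≤ s p) (hrs : ∀ p ∈ P, r p + c * s p ≤ s p) (h1 : ∀ p ∈ P, s p ≤ 1 / 2)
    {U : Finset ℕ → Prop} (hU : ∀ A B, A ⊆ B → U A → U B) (hfull : U P) (hempty : ¬ U ∅) :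
    prodMeas P r U + c * ∏ p ∈ P, s p ≤ prodMeas P s U := by
  induction P using Finset.induction_on generalizing U with
  | empty => exact absurd hfull hempty
  | insert q P hq ih =>
    have hr0 : ∀ p ∈ P, 0 ≤ r p := fun p hp => h0 p (mem_insert_of_mem hp)
    have hl : ∀ p ∈ P, r p ≤ s p := fun p hp => hle p (mem_insert_of_mem hp)
    have hs0 : ∀ p ∈ P, 0 ≤ s p := fun p hp => (hr0 p hp).trans (hl p hp)
    have hs2 : ∀ p ∈ P, s p ≤ 1 / 2 := fun p hp => h1 p (mem_insert_of_mem hp)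
    have hs1 : ∀ p ∈ P, s p ≤ 1 := fun p hp => (hs2 p hp).trans (by norm_num)
    have hr1 : ∀ p ∈ P, r p ≤ 1 := fun p hp => (hl p hp).trans (hs1 p hp)
    have hUq : ∀ A B, A ⊆ B → U (insert q A) → U (insert q B) :=
      fun A B hAB h => hU _ _ (insert_subset_insert _ hAB) h
    have e2 := prodMeas_le (P := P) hr0 hl hs1 (U := fun B => U (insert q B)) hUq
    have e3 : prodMeas P s U ≤ prodMeas P s (fun B => U (insert q B)) :=
      prodMeas_mono hs0 hs1 fun B h => hU _ _ (subset_insert _ _) h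
    have hpr : 0 ≤ ∏ p ∈ P, s p := prod_nonneg hs0
    rw [prodMeas_insert hq, prodMeas_insert hq, prod_insert hq]
    have a0 := h0 q (mem_insert_self _ _)
    have a1 := hle q (mem_insert_self _ _)
    have a2 := h1 q (mem_insert_self _ _)
    have a3 := hrs q (mem_insert_self _ _)
    by_cases hUP : U P
    · have e1 := ih hr0 hl (fun p hp => hrs p (mem_insert_of_mem hp)) hs2 hU hUP hempty
      have h4 : 0 ≤ (1 - r q - s q) * (c * ∏ p ∈ P, s p) :=
        mul_nonneg (by linarith) (mul_nonneg hc hpr)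
      nlinarith [mul_le_mul_of_nonneg_left e1 (by linarith : 0 ≤ 1 - r q),
        mul_le_mul_of_nonneg_left e2 a0,
        mul_nonneg (sub_nonneg.2 a1) (sub_nonneg.2 e3)]
    · -- `U` fails on every subset of `P`, so `q` itself is the pivotal coordinate.
      have hz : ∀ t : ℕ → ℝ, prodMeas P t U = 0 := fun t => by
        unfold prodMeas
        refine sum_eq_zero fun B hB => ?_
        rw [if_neg fun h => hUP (hU _ _ (mem_powerset.1 hB) h)]
      have e4 := prod_le_prodMeas (P := P) hs0 hs1 (U := fun B => U (insert q B)) hfull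
      rw [hz, hz]
      have e5 := prodMeas_nonneg (P := P) hs0 hs1 (fun B => U (insert q B))
      nlinarith [mul_le_mul_of_nonneg_left e2 a0, mul_le_mul_of_nonneg_right a3 e5,
        mul_le_mul_of_nonneg_left e4 (mul_nonneg hc (a0.trans a1))]

end MatchDensity

namespace MatchDensity

open Finset

/-! ### Counting divisors and residues by the primes dividing them -/

lemma factorization_prod_pow {A : Finset ℕ} (hA : ∀ p ∈ A, p.Prime) (a : ℕ → ℕ) (q : ℕ) :
    (∏ p ∈ A, p ^ a p).factorization q = if q ∈ A then a q else 0 := by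
  rw [Nat.factorization_prod fun p hp => pow_ne_zero _ (hA p hp).ne_zero, Finset.sum_apply']
  have : ∀ p ∈ A, (p ^ a p).factorization q = if p = q then a q else 0 := by
    intro p hp
    rw [(hA p hp).factorization_pow, Finsupp.single_apply]
    split_ifs with h
    · rw [h]
    · rfl
  rw [sum_congr rfl this]
  simp

lemma prod_pow_ne_zero {A : Finset ℕ} (hA : ∀ p ∈ A, p.Prime) (a : ℕ → ℕ) :
    ∏ p ∈ A, p ^ a p ≠ 0 :=
  prod_ne_zero_iff.2 fun p hp => pow_ne_zero _ (hA p hp).ne_zero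

lemma card_divisors_prod_pow {A : Finset ℕ} (hA : ∀ p ∈ A, p.Prime) (a : ℕ → ℕ) :
    (∏ p ∈ A, p ^ a p).divisors.card = ∏ p ∈ A, (a p + 1) := by
  rw [Nat.card_divisors (prod_pow_ne_zero hA a)]
  have hsub : (∏ p ∈ A, p ^ a p).primeFactors ⊆ A := by
    intro q hq
    rw [← Nat.support_factorization, Finsupp.mem_support_iff, factorization_prod_pow hA] at hq
    by_contra h
    simp [h] at hq
  rw [prod_subset hsub]
  · refine prod_congr rfl fun p hp => ?_
    rw [factorization_prod_pow hA, if_pos hp]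
  · intro p hp hn
    rw [← Nat.support_factorization, Finsupp.notMem_support_iff] at hn
    simp [hn]

lemma primeFactors_prod_pow {A : Finset ℕ} (hA : ∀ p ∈ A, p.Prime) {a : ℕ → ℕ}
    (ha : ∀ p ∈ A, 1 ≤ a p) : (∏ p ∈ A, p ^ a p).primeFactors = A := by
  ext q
  rw [← Nat.support_factorization, Finsupp.mem_support_iff, factorization_prod_pow hA]
  constructor
  · intro h
    by_contra h'
    simp [h'] at h
  · intro h
    have := ha q h
    rw [if_pos h]
    omega

lemma card_divisors_fiber {u : ℕ} (hu : u ≠ 0) {B : Finset ℕ} (hB : B ⊆ u.primeFactors) :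
    (u.divisors.filter fun d => u.primeFactors \ d.primeFactors = B).card
      = ∏ p ∈ u.primeFactors \ B, u.factorization p := by
  set A := u.primeFactors \ B with hAdef
  have hAP : A ⊆ u.primeFactors := sdiff_subset
  have hA : ∀ p ∈ A, p.Prime := fun p hp => Nat.prime_of_mem_primeFactors (hAP hp)
  have hpos : ∀ p ∈ A, 1 ≤ u.factorization p := fun p hp => by
    have := hAP hp
    rw [← Nat.support_factorization, Finsupp.mem_support_iff] at this
    omega
  have hcard := card_divisors_prod_pow hA (fun p => u.factorization p - 1)
  have : ∏ p ∈ A, u.factorization p = ∏ p ∈ A, (u.factorization p - 1 + 1) :=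
    prod_congr rfl fun p hp => by have := hpos p hp; omega
  rw [this, ← hcard]
  have hE0 := prod_pow_ne_zero hA (fun p => u.factorization p - 1)
  have hA0 : ∏ p ∈ A, p ≠ 0 := prod_ne_zero_iff.2 fun p hp => (hA p hp).ne_zero
  have hfA : ∀ q, (∏ p ∈ A, p).factorization q = if q ∈ A then 1 else 0 := by
    intro q
    have := factorization_prod_pow hA (fun _ => 1) q
    simpa using this
  have hsd : ∀ d, d ∈ u.divisors → (u.primeFactors \ d.primeFactors = B ↔ d.primeFactors = A) := by
    intro d hd
    have hdu : d.primeFactors ⊆ u.primeFactors :=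
      Nat.primeFactors_mono (Nat.dvd_of_mem_divisors hd) hu
    constructor
    · intro h
      rw [hAdef, ← h, Finset.sdiff_sdiff_eq_self hdu]
    · intro h
      rw [h, hAdef, Finset.sdiff_sdiff_eq_self hB]
  symm
  refine card_nbij' (fun e => e * ∏ p ∈ A, p) (fun d => d / ∏ p ∈ A, p) ?_ ?_ ?_ ?_
  · intro e he
    have he := Nat.dvd_of_mem_divisors he
    have he0 : e ≠ 0 := fun h => hE0 (by simpa [h] using he)
    have hf : ∀ q, e.factorization q ≤ if q ∈ A then u.factorization q - 1 else 0 := by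
      intro q
      rw [← factorization_prod_pow hA (fun q => u.factorization q - 1)]
      exact (Nat.factorization_le_iff_dvd he0 hE0).2 he q
    have hdiv : e * ∏ p ∈ A, p ∈ u.divisors := by
      refine Nat.mem_divisors.2 ⟨?_, hu⟩
      rw [← Nat.factorization_le_iff_dvd (mul_ne_zero he0 hA0) hu]
      intro q
      rw [Nat.factorization_mul he0 hA0, Finsupp.add_apply, hfA]
      have := hf q
      by_cases hq : q ∈ A
      · have h1 := hpos q hq
        simp only [hq, if_true] at this ⊢
        omega
      · simp only [hq, if_false] at this ⊢
        omega
    simp only [coe_filter, Set.mem_ofPred_eq]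
    refine ⟨hdiv, (hsd _ hdiv).2 ?_⟩
    ext q
    rw [← Nat.support_factorization, Finsupp.mem_support_iff,
      Nat.factorization_mul he0 hA0, Finsupp.add_apply, hfA]
    have := hf q
    by_cases hq : q ∈ A
    · simp [hq]
    · simp only [hq, if_false] at this ⊢
      simp; omega
  · intro d hd
    simp only [coe_filter, Set.mem_ofPred_eq] at hd
    have hdA := (hsd d hd.1).1 hd.2
    have hdu := Nat.dvd_of_mem_divisors hd.1
    have hd0 : d ≠ 0 := fun h => hu (by simpa [h] using hdu)
    have hAd : ∏ p ∈ A, p ∣ d := by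
      rw [← hdA]
      exact Nat.prod_primeFactors_dvd d
    refine Nat.mem_divisors.2 ⟨?_, hE0⟩
    have hq0 : d / ∏ p ∈ A, p ≠ 0 := (Nat.div_pos (Nat.le_of_dvd (Nat.pos_of_ne_zero hd0) hAd)
      (Nat.pos_of_ne_zero hA0)).ne'
    rw [← Nat.factorization_le_iff_dvd hq0 hE0]
    intro q
    rw [factorization_prod_pow hA, Nat.factorization_div hAd, Finsupp.tsub_apply, hfA]
    have h1 := (Nat.factorization_le_iff_dvd hd0 hu).2 hdu q
    by_cases hq : q ∈ A
    · simp only [hq, if_true]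
      omega
    · have : d.factorization q = 0 := by
        rw [← Finsupp.notMem_support_iff, Nat.support_factorization, hdA]
        exact hq
      simp [this]
  · intro e _
    exact Nat.mul_div_cancel _ (Nat.pos_of_ne_zero hA0)
  · intro d hd
    simp only [coe_filter, Set.mem_ofPred_eq] at hd
    have hdA := (hsd d hd.1).1 hd.2
    have hAd : ∏ p ∈ A, p ∣ d := by
      rw [← hdA]
      exact Nat.prod_primeFactors_dvd d
    exact Nat.div_mul_cancel hAd

/-- A random divisor `d` of `u` misses the prime `p` with probability `1 / (a_p + 1)`,
independently over the primes. -/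
lemma card_divisors_family {u : ℕ} (hu : u ≠ 0) (U : Finset ℕ → Prop) [DecidablePred U] :
    ((u.divisors.filter fun d => U (u.primeFactors \ d.primeFactors)).card : ℝ)
      = u.divisors.card * prodMeas u.primeFactors (fun p => 1 / ((u.factorization p : ℝ) + 1)) U := by
  classical
  rw [card_eq_sum_card_fiberwise (f := fun d => u.primeFactors \ d.primeFactors)
    (t := u.primeFactors.powerset) (fun d _ => by simp)]
  unfold prodMeas
  push_cast
  rw [mul_sum]
  refine sum_congr rfl fun B hB => ?_
  have hB := mem_powerset.1 hB
  rw [filter_filter]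
  by_cases hU : U B
  · have : (u.divisors.filter fun d => U (u.primeFactors \ d.primeFactors) ∧
        u.primeFactors \ d.primeFactors = B)
        = u.divisors.filter fun d => u.primeFactors \ d.primeFactors = B := by
      refine filter_congr fun d _ => ⟨fun h => h.2, fun h => ⟨h ▸ hU, h⟩⟩
    rw [this, card_divisors_fiber hu hB, if_pos hU, Nat.card_divisors hu]
    push_cast
    have h1 : (∏ p ∈ B, ((u.factorization p : ℝ) + 1)) *
        ∏ p ∈ B, (1 / ((u.factorization p : ℝ) + 1)) = 1 := by
      rw [← prod_mul_distrib]
      exact prod_eq_one fun p _ => by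
        have : (u.factorization p : ℝ) + 1 ≠ 0 := by positivity
        field_simp
    have h2 : (∏ p ∈ u.primeFactors \ B, ((u.factorization p : ℝ) + 1)) *
        ∏ p ∈ u.primeFactors \ B, (1 - 1 / ((u.factorization p : ℝ) + 1))
        = ∏ p ∈ u.primeFactors \ B, (u.factorization p : ℝ) := by
      rw [← prod_mul_distrib]
      refine prod_congr rfl fun p _ => ?_
      have : (u.factorization p : ℝ) + 1 ≠ 0 := by positivity
      field_simp
      ring
    rw [← h2, ← prod_sdiff hB (f := fun p => (u.factorization p : ℝ) + 1)]
    linear_combination (-(∏ p ∈ u.primeFactors \ B, ((u.factorization p : ℝ) + 1)) *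
      ∏ p ∈ u.primeFactors \ B, (1 - 1 / ((u.factorization p : ℝ) + 1))) * h1
  · rw [if_neg hU, mul_zero, filter_false_of_mem, card_empty, Nat.cast_zero]
    rintro d _ ⟨h1, h2⟩
    exact hU (h2 ▸ h1)

lemma card_residues_fiber_le {P : Finset ℕ} (hP : ∀ p ∈ P, p.Prime) {B : Finset ℕ} (hB : B ⊆ P) :
    (((range (∏ p ∈ P, p)).filter fun x => (P.filter fun p => p ∣ x) = B).card : ℝ)
      ≤ (∏ p ∈ P, (p : ℝ)) * ((∏ p ∈ B, (1 / (p : ℝ))) * ∏ p ∈ P \ B, (1 - 1 / (p : ℝ))) := by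
  have hB' : ∀ p ∈ B, p.Prime := fun p hp => hP p (hB hp)
  have hS : ∀ p ∈ P \ B, p.Prime := fun p hp => hP p (mem_sdiff.1 hp).1
  have hdvd : ∏ p ∈ B, p ∣ ∏ p ∈ P, p := prod_dvd_prod_of_subset _ _ _ hB
  have hw0 : ∏ p ∈ P, p ≠ 0 := prod_ne_zero_iff.2 fun p hp => (hP p hp).ne_zero
  have hB0 : 0 < ∏ p ∈ B, p := prod_pos fun p hp => (hB' p hp).pos
  have hsub : ((range (∏ p ∈ P, p)).filter fun x => (P.filter fun p => p ∣ x) = B) ⊆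
      (range (∏ p ∈ P, p)).filter fun x => (∏ p ∈ P, p).gcd x = ∏ p ∈ B, p := by
    refine monotone_filter_right _ fun x _ hx => ?_
    have hsq : Squarefree ((∏ p ∈ P, p).gcd x) := by
      refine Squarefree.squarefree_of_dvd (Nat.gcd_dvd_left _ _) ?_
      rw [Nat.squarefree_iff_factorization_le_one hw0]
      intro q
      have := factorization_prod_pow hP (fun _ => 1) q
      simp only [pow_one] at this
      rw [this]
      split_ifs <;> omega
    have hx : (P.filter fun p => p ∣ x) = B := hx
    show (∏ p ∈ P, p).gcd x = ∏ p ∈ B, p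
    rw [← Nat.prod_primeFactors_of_squarefree hsq]
    congr 1
    rw [← hx]
    ext q
    rw [Nat.mem_primeFactors, Nat.dvd_gcd_iff, mem_filter]
    constructor
    · rintro ⟨hq, ⟨h1, h2⟩, _⟩
      have : q ∈ (∏ p ∈ P, p).primeFactors := Nat.mem_primeFactors.2 ⟨hq, h1, hw0⟩
      rw [Nat.primeFactors_prod hP] at this
      exact ⟨this, h2⟩
    · rintro ⟨h1, h2⟩
      exact ⟨hP q h1, ⟨dvd_prod_of_mem _ h1, h2⟩, Nat.gcd_ne_zero_left hw0⟩
  have h1 := card_le_card hsub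
  rw [← Nat.totient_div_of_dvd hdvd, ← prod_sdiff hB, Nat.mul_div_cancel _ hB0] at h1
  have h2 := Nat.totient_eq_mul_prod_factors (∏ p ∈ P \ B, p)
  rw [Nat.primeFactors_prod hS] at h2
  have h2' : ((∏ p ∈ P \ B, p).totient : ℝ)
      = (∏ p ∈ P \ B, (p : ℝ)) * ∏ p ∈ P \ B, (1 - 1 / (p : ℝ)) := by
    have := congrArg (fun q : ℚ => (q : ℝ)) h2
    push_cast at this
    simpa using this
  have h1' : (_ : ℝ) ≤ _ := Nat.cast_le.2 h1
  rw [prod_sdiff hB] at h1'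
  refine h1'.trans (le_of_eq ?_)
  rw [h2', ← prod_sdiff hB (f := fun p : ℕ => (p : ℝ))]
  have : (∏ p ∈ B, (p : ℝ)) * ∏ p ∈ B, (1 / (p : ℝ)) = 1 := by
    rw [← prod_mul_distrib]
    exact prod_eq_one fun p hp => by
      have := (hB' p hp).ne_zero
      field_simp
  linear_combination (-(∏ p ∈ P \ B, (p : ℝ)) * ∏ p ∈ P \ B, (1 - 1 / (p : ℝ))) * this

end MatchDensity

namespace MatchDensity

open Finset

/-! ### Matching a residue class with the divisors of the noncritical part -/

lemma exists_injOn_of_hall (Y : Finset ℕ) (t : ℕ → Finset ℕ)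
    (h : ∀ S ⊆ Y, S.card ≤ (S.biUnion t).card) :
    ∃ f : ℕ → ℕ, (∀ y ∈ Y, f y ∈ t y) ∧ Set.InjOn f Y := by
  have h' : ∀ s : Finset Y, s.card ≤ (s.biUnion fun y : Y => t y).card := by
    intro s
    have := h (s.map (Function.Embedding.subtype _)) (by
      intro y hy
      obtain ⟨z, _, rfl⟩ := mem_map.1 hy
      exact z.2)
    rw [card_map] at this
    convert this using 2
    ext d
    simp
  obtain ⟨f, hf, hft⟩ := (all_card_le_biUnion_card_iff_exists_injective _).1 h'
  refine ⟨fun y => if hy : y ∈ Y then f ⟨y, hy⟩ else 0, fun y hy => ?_, fun x hx y hy hxy => ?_⟩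
  · simpa [hy] using hft ⟨y, hy⟩
  · have hx' : x ∈ Y := hx
    have hy' : y ∈ Y := hy
    simp only [hx', hy', dif_pos] at hxy
    simpa using hf hxy

lemma card_modEq_le (X v : ℕ) {m : ℕ} (hm : 0 < m) :
    (((Ioc 0 X).filter fun y => y ≡ v [MOD m]).card : ℝ) ≤ (X : ℝ) / m + 1 := by
  have h := Nat.Ioc_filter_modEq_card 0 X hm v
  have h' : (((Ioc 0 X).filter fun y => y ≡ v [MOD m]).card : ℝ)
      = ((max (⌊((X : ℚ) - v) / m⌋ - ⌊(((0 : ℕ) : ℚ) - v) / m⌋) 0 : ℤ) : ℝ) := by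
    rw [← h]; simp
  have hq : ((max (⌊((X : ℚ) - v) / m⌋ - ⌊(((0 : ℕ) : ℚ) - v) / m⌋) 0 : ℤ) : ℚ)
      ≤ (X : ℚ) / m + 1 := by
    push_cast
    refine max_le ?_ (by positivity)
    have h1 := Int.floor_le (((X : ℚ) - v) / m)
    have h2 := Int.lt_floor_add_one (((0 : ℚ) - v) / m)
    rw [sub_div] at h1 h2
    rw [sub_div, sub_div]
    simp only [zero_div] at h2 ⊢
    linarith
  rw [h']
  have := (Rat.cast_le (K := ℝ)).2 hq
  push_cast at this ⊢
  exact this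

lemma card_modEq_mul (T v : ℕ) {m : ℕ} (hm : 0 < m) :
    ((Ioc 0 (m * T)).filter fun y => y ≡ v [MOD m]).card = T := by
  have h := Nat.Ioc_filter_modEq_card 0 (m * T) hm v
  have e : (((m * T : ℕ) : ℚ) - v) / m = (((0 : ℕ) : ℚ) - v) / m + (T : ℤ) := by
    have : (m : ℚ) ≠ 0 := by positivity
    push_cast
    field_simp
    ring
  rw [e, Int.floor_add_intCast] at h
  simp at h
  exact_mod_cast h

lemma card_dvd_le (X t : ℕ) : (((Ioc 0 X).filter fun y => t ∣ y).card : ℝ) ≤ X * (1 / (t : ℝ)) := by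
  rw [Nat.Ioc_filter_dvd_card_eq_div, mul_one_div]
  exact Nat.cast_div_le

/-- In a residue class modulo `Q`, the set of primes of `P` dividing a number is distributed as under
the product measure with parameters `1 / p`, up to an error of at most `∏ P`. -/
lemma card_class_family_le {P : Finset ℕ} (hP : ∀ p ∈ P, p.Prime) {Q r T : ℕ} (hQ : 0 < Q)
    (hQP : Nat.Coprime Q (∏ p ∈ P, p)) (U : Finset ℕ → Prop) [DecidablePred U] :
    ((((Ioc 0 (Q * T)).filter fun y => y ≡ r [MOD Q]).filter
        fun y => U (P.filter fun p => p ∣ y)).card : ℝ)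
      ≤ T * prodMeas P (fun p => 1 / (p : ℝ)) U + ∏ p ∈ P, (p : ℝ) := by
  classical
  set w := ∏ p ∈ P, p with hw
  have hw0 : 0 < w := prod_pos fun p hp => (hP p hp).pos
  have hwR : ∏ p ∈ P, (p : ℝ) = (w : ℝ) := by rw [hw]; push_cast; rfl
  set Y := (Ioc 0 (Q * T)).filter fun y => y ≡ r [MOD Q] with hY
  have htype : ∀ y, (P.filter fun p => p ∣ y % w) = P.filter fun p => p ∣ y := by
    intro y
    refine filter_congr fun p hp => ?_
    exact Nat.dvd_mod_iff (dvd_prod_of_mem _ hp)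
  have hfib : ∀ x, ((Y.filter fun y => y % w = x).card : ℝ) ≤ (T : ℝ) / w + 1 := by
    intro x
    by_cases hne : (Y.filter fun y => y % w = x).Nonempty
    · obtain ⟨y0, hy0⟩ := hne
      have hsub : (Y.filter fun y => y % w = x) ⊆
          (Ioc 0 (Q * T)).filter fun y => y ≡ y0 [MOD Q * w] := by
        intro y hy
        simp only [hY, mem_filter] at hy hy0 ⊢
        refine ⟨hy.1.1, ?_⟩
        rw [← Nat.modEq_and_modEq_iff_modEq_mul hQP]
        exact ⟨hy.1.2.trans hy0.1.2.symm, hy.2.trans hy0.2.symm⟩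
      refine (Nat.cast_le.2 (card_le_card hsub)).trans ((card_modEq_le _ _ (by positivity)).trans ?_)
      have hQ' : (Q : ℝ) ≠ 0 := by positivity
      have hw' : (w : ℝ) ≠ 0 := by positivity
      push_cast
      rw [mul_div_mul_left _ _ hQ']
    · rw [not_nonempty_iff_eq_empty.1 hne]
      simp only [card_empty, Nat.cast_zero]
      positivity
  have hstep : ((Y.filter fun y => U (P.filter fun p => p ∣ y)).card : ℝ)
      ≤ ((range w).filter fun x => U (P.filter fun p => p ∣ x)).card * ((T : ℝ) / w + 1) := by
    rw [card_eq_sum_card_fiberwise (f := fun y => y % w)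
      (t := (range w).filter fun x => U (P.filter fun p => p ∣ x))]
    · push_cast
      rw [← nsmul_eq_mul]
      refine sum_le_card_nsmul _ _ _ fun x _ => le_trans ?_ (hfib x)
      exact_mod_cast card_le_card (filter_subset_filter _ (filter_subset _ _))
    · intro y hy
      simp only [coe_filter, Set.mem_ofPred_eq] at hy ⊢
      exact ⟨mem_range.2 (Nat.mod_lt _ hw0), by rw [htype]; exact hy.2⟩
  have hres : (((range w).filter fun x => U (P.filter fun p => p ∣ x)).card : ℝ)
      ≤ w * prodMeas P (fun p => 1 / (p : ℝ)) U := by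
    rw [card_eq_sum_card_fiberwise (f := fun x => P.filter fun p => p ∣ x) (t := P.powerset)
      (fun x _ => by
        rw [mem_coe, mem_powerset]
        exact filter_subset _ _)]
    unfold prodMeas
    push_cast
    rw [mul_sum]
    refine sum_le_sum fun B hB => ?_
    split_ifs with hU
    · rw [← hwR]
      refine le_trans ?_ (card_residues_fiber_le hP (mem_powerset.1 hB))
      exact_mod_cast card_le_card (filter_subset_filter _ (filter_subset _ _))
    · rw [mul_zero, filter_filter, filter_false_of_mem, card_empty, Nat.cast_zero]
      rintro x _ ⟨h1, h2⟩
      exact hU (h2 ▸ h1)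
  have hμ := prodMeas_le_one (P := P) (r := fun p => 1 / (p : ℝ)) (fun p _ => by positivity)
    (fun p hp => by
      have : (1 : ℝ) ≤ p := by exact_mod_cast (hP p hp).one_le
      exact (div_le_one (by linarith)).2 this) U
  rw [hwR]
  refine hstep.trans ((mul_le_mul_of_nonneg_right hres (by positivity)).trans ?_)
  have hw' : (0 : ℝ) < w := by positivity
  have : (w : ℝ) * prodMeas P (fun p => 1 / (p : ℝ)) U * ((T : ℝ) / w + 1)
      = T * prodMeas P (fun p => 1 / (p : ℝ)) U + w * prodMeas P (fun p => 1 / (p : ℝ)) U := by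
    field_simp
  rw [this]
  nlinarith

/-- The products `d * e` with `d ∈ N` and `e ∣ v` are distinct, because `d = gcd(u, d * e)`. -/
lemma card_mul_divisors_le {u v : ℕ} (huv : Nat.Coprime u v)
    (N : Finset ℕ) (hN : N ⊆ u.divisors) (M : Finset ℕ)
    (h : ∀ d ∈ N, ∀ e ∈ v.divisors, d * e ∈ M) : N.card * v.divisors.card ≤ M.card := by
  rw [← card_product]
  refine card_le_card_of_injOn (fun x => x.1 * x.2) ?_ ?_
  · rintro ⟨d, e⟩ hx
    have hx := mem_product.1 (mem_coe.1 hx)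
    exact h d hx.1 e hx.2
  · rintro ⟨d, e⟩ hx ⟨d', e'⟩ hx' heq
    have hx := mem_product.1 (mem_coe.1 hx)
    have hx' := mem_product.1 (mem_coe.1 hx')
    have key : ∀ d e, d ∈ N → e ∈ v.divisors → u.gcd (d * e) = d := by
      intro d e hd he
      have hcop : u.Coprime e := huv.coprime_dvd_right (Nat.dvd_of_mem_divisors he)
      rw [Nat.Coprime.gcd_mul_right_cancel_right _ hcop.symm]
      exact Nat.gcd_eq_right (Nat.dvd_of_mem_divisors (hN hd))
    have heq : d * e = d' * e' := heq
    have hd : d = d' := by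
      rw [← key d e hx.1 hx.2, heq, key d' e' hx'.1 hx'.2]
    subst hd
    have hd0 : 0 < d := Nat.pos_of_mem_divisors (hN hx.1)
    rw [Nat.eq_of_mul_eq_mul_left hd0 heq]

section Hall

variable {Q u v r : ℕ} {c : ℝ}

/-- Numbers `y` sharing a factor with `v` are few when `∑_{1 < t ∣ v} 1 / t` is small, even if
weighted by `τ(gcd(v, y))`. -/
lemma card_noncoprime_le (hv : v ≠ 0) (X : ℕ) (S : Finset ℕ) (hS : S ⊆ Ioc 0 X)
    (hS' : ∀ y ∈ S, ¬ Nat.Coprime v y) :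
    (∑ y ∈ S, ((v.gcd y).divisors.card : ℝ)) ≤ 2 * X * ∑ t ∈ v.divisors.erase 1, 1 / (t : ℝ) ∧
    (S.card : ℝ) ≤ X * ∑ t ∈ v.divisors.erase 1, 1 / (t : ℝ) := by
  have hsum : (∑ y ∈ S, (((v.divisors.erase 1).filter fun t => t ∣ y).card : ℝ))
      ≤ X * ∑ t ∈ v.divisors.erase 1, 1 / (t : ℝ) := by
    simp only [card_filter]
    push_cast
    rw [sum_comm, mul_sum]
    refine sum_le_sum fun t _ => le_trans ?_ (card_dvd_le X t)
    rw [card_filter]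
    push_cast
    exact sum_le_sum_of_subset_of_nonneg hS fun _ _ _ => by split_ifs <;> norm_num
  have hg : ∀ y ∈ S, (v.gcd y).divisors.card
      = ((v.divisors.erase 1).filter fun t => t ∣ y).card + 1 ∧
      1 ≤ ((v.divisors.erase 1).filter fun t => t ∣ y).card := by
    intro y hy
    have hy0 : y ≠ 0 := (mem_Ioc.1 (hS hy)).1.ne'
    have hset : (v.gcd y).divisors
        = insert 1 ((v.divisors.erase 1).filter fun t => t ∣ y) := by
      ext t
      simp only [Nat.mem_divisors, Nat.dvd_gcd_iff, mem_insert, mem_filter, mem_erase, ne_eq,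
        Nat.gcd_eq_zero_iff, hv, hy0, and_self, not_false_eq_true, and_true]
      constructor
      · rintro ⟨h1, h2⟩
        by_cases h : t = 1
        · exact Or.inl h
        · exact Or.inr ⟨⟨h, h1⟩, h2⟩
      · rintro (rfl | ⟨⟨_, h1⟩, h2⟩)
        · simp
        · exact ⟨h1, h2⟩
    refine ⟨by rw [hset, card_insert_of_notMem (by simp)], card_pos.2 ⟨v.gcd y, ?_⟩⟩
    simp only [mem_filter, mem_erase, Nat.mem_divisors]
    exact ⟨⟨hS' y hy, Nat.gcd_dvd_left _ _, hv⟩, Nat.gcd_dvd_right _ _⟩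
  constructor
  · rw [mul_assoc]
    refine le_trans ?_ (mul_le_mul_of_nonneg_left hsum zero_le_two)
    rw [mul_sum]
    refine sum_le_sum fun y hy => ?_
    obtain ⟨h1, h2⟩ := hg y hy
    rw [h1]
    have : (1 : ℝ) ≤ (((v.divisors.erase 1).filter fun t => t ∣ y).card : ℝ) := by
      exact_mod_cast h2
    push_cast
    linarith
  · refine le_trans ?_ hsum
    rw [card_eq_sum_ones]
    push_cast
    exact sum_le_sum fun y hy => by exact_mod_cast (hg y hy).2

/-- Hall's condition for the coprimality graph between a residue class modulo `Q` and the
divisors of `u * v`. If `S` has a member coprime to `u * v`, all divisors are neighbours. Otherwise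
let `S0` be the set of members coprime to `v`. The pattern of primes of `u` dividing `y ∈ S0` lies in
a nontrivial increasing family `U`, so `prodMeas_gap` makes the neighbourhood of `S0` larger than
`S0` by a margin exceeding the few members of `S` outside `S0`. If `S0` is empty, one member of `S`
has enough neighbours. -/
lemma hall_condition (hQ : 0 < Q) (hu : u ≠ 0) (hv : Squarefree v) (huv : Nat.Coprime u v)
    (hQu : Nat.Coprime Q u) (hc0 : 0 ≤ c) (hc1 : c ≤ 1)
    (hc : ∀ p ∈ u.primeFactors,
      1 / (p : ℝ) + c * (1 / ((u.factorization p : ℝ) + 1)) ≤ 1 / ((u.factorization p : ℝ) + 1))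
    (hη : 2 * Q * u.divisors.card * ∑ t ∈ v.divisors.erase 1, 1 / (t : ℝ) ≤ c)
    (hw : 2 * ∏ p ∈ u.primeFactors, (p : ℝ) ≤ c * v.divisors.card)
    (S : Finset ℕ)
    (hS : S ⊆ (Ioc 0 (Q * (u.divisors.card * v.divisors.card))).filter fun y => y ≡ r [MOD Q]) :
    S.card ≤ (S.biUnion fun y => (u * v).divisors.filter fun d => Nat.Coprime d y).card := by
  classical
  have hv0 : v ≠ 0 := hv.ne_zero
  have huv0 : u * v ≠ 0 := mul_ne_zero hu hv0
  set T := u.divisors.card * v.divisors.card with hT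
  set N := S.biUnion fun y => (u * v).divisors.filter fun d => Nat.Coprime d y with hN
  have hSI : S ⊆ Ioc 0 (Q * T) := hS.trans (filter_subset _ _)
  have hmemN : ∀ d, d ∈ N ↔ d ∣ u * v ∧ ∃ y ∈ S, Nat.Coprime d y := by
    intro d
    simp only [hN, mem_biUnion, mem_filter, Nat.mem_divisors]
    constructor
    · rintro ⟨y, h1, ⟨h2, _⟩, h3⟩
      exact ⟨h2, y, h1, h3⟩
    · rintro ⟨h2, y, h1, h3⟩
      exact ⟨y, h1, ⟨h2, huv0⟩, h3⟩
  have hτu : 0 < u.divisors.card := card_pos.2 ⟨1, by simp [hu]⟩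
  have hτuR : (0 : ℝ) < u.divisors.card := by exact_mod_cast hτu
  have hτvR : (0 : ℝ) ≤ v.divisors.card := by positivity
  by_cases hcop : ∃ y ∈ S, Nat.Coprime (u * v) y
  · obtain ⟨y, hy, hyc⟩ := hcop
    have h1 : S.card ≤ T := (card_le_card hS).trans (card_modEq_mul T r hQ).le
    have h2 : (u * v).divisors ⊆ N := fun d hd =>
      (hmemN d).2 ⟨Nat.dvd_of_mem_divisors hd, y, hy,
        hyc.coprime_dvd_left (Nat.dvd_of_mem_divisors hd)⟩
    have h3 := card_le_card h2
    rw [huv.card_divisors_mul] at h3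
    exact h1.trans h3
  push Not at hcop
  set η := ∑ t ∈ v.divisors.erase 1, 1 / (t : ℝ) with hηdef
  set S0 := S.filter fun y => Nat.Coprime v y with hS0
  set S1 := S.filter fun y => ¬ Nat.Coprime v y with hS1
  have hcard : S.card = S0.card + S1.card := (card_filter_add_card_filter_not _).symm
  obtain ⟨hsum1, hcard1⟩ := card_noncoprime_le hv0 (Q * T) S1
    ((filter_subset _ _).trans hSI) (fun y hy => (mem_filter.1 hy).2)
  have hTR : ((Q * T : ℕ) : ℝ) = Q * (u.divisors.card * v.divisors.card) := by
    rw [hT]; push_cast; ring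
  rw [hTR] at hsum1 hcard1
  have hη' := mul_le_mul_of_nonneg_right hη hτvR
  rcases S0.eq_empty_or_nonempty with h0 | h0
  · rcases S1.eq_empty_or_nonempty with h1 | h1
    · simp [hcard, h0, h1]
    -- The `y ∈ S1` minimising `τ(gcd(v, y))` is coprime to all divisors of `v / gcd(v, y)`, and
    -- these already number at least `#S1`.
    obtain ⟨y, hy, hmin⟩ := exists_min_image S1 (fun y => (v.gcd y).divisors.card) h1
    set g := v.gcd y with hg
    have hy0 : y ≠ 0 := (mem_Ioc.1 (hSI (mem_filter.1 hy).1)).1.ne'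
    have hgv : g ∣ v := Nat.gcd_dvd_left _ _
    have hcopy : Nat.Coprime (v / g) y := Nat.coprime_div_gcd_of_squarefree hv hy0
    have hmulg : (v / g).divisors.card * g.divisors.card = v.divisors.card := by
      rw [← (hcopy.coprime_dvd_right (Nat.gcd_dvd_right v y)).card_divisors_mul,
        Nat.div_mul_cancel hgv]
    have hsub : (v / g).divisors ⊆ N := fun d hd => by
      have hd := Nat.dvd_of_mem_divisors hd
      exact (hmemN d).2 ⟨(hd.trans (Nat.div_dvd_of_dvd hgv)).trans (dvd_mul_left _ _), y,
        (mem_filter.1 hy).1, hcopy.coprime_dvd_left hd⟩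
    have hlow : (S1.card : ℝ) * g.divisors.card ≤ ∑ y ∈ S1, ((v.gcd y).divisors.card : ℝ) := by
      rw [← nsmul_eq_mul]
      exact card_nsmul_le_sum _ _ _ fun z hz => by exact_mod_cast hmin z hz
    have hle : S1.card * g.divisors.card ≤ (v / g).divisors.card * g.divisors.card := by
      rw [hmulg]
      have : (S1.card : ℝ) * g.divisors.card ≤ v.divisors.card := by
        refine hlow.trans (hsum1.trans ?_)
        nlinarith
      exact_mod_cast this
    have hgpos : 0 < g.divisors.card :=
      card_pos.2 ⟨1, Nat.one_mem_divisors.2 (Nat.gcd_pos_of_pos_right v (Nat.pos_of_ne_zero hy0)).ne'⟩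
    rw [hcard, h0, card_empty, zero_add]
    exact (Nat.le_of_mul_le_mul_right hle hgpos).trans (card_le_card hsub)
  · set P := u.primeFactors with hPdef
    have hP : ∀ p ∈ P, p.Prime := fun p hp => Nat.prime_of_mem_primeFactors hp
    set U : Finset ℕ → Prop := fun A => ∃ y ∈ S0, (P.filter fun p => p ∣ y) ⊆ A with hUdef
    have hUmono : ∀ A B, A ⊆ B → U A → U B := fun A B hAB ⟨y, hy, h⟩ => ⟨y, hy, h.trans hAB⟩
    have hcop_iff : ∀ d, d ∣ u → ∀ y, Nat.Coprime d y ↔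
        (P.filter fun p => p ∣ y) ⊆ P \ d.primeFactors := by
      intro d hd y
      have hd0 : d ≠ 0 := fun h => hu (by simpa [h] using hd)
      constructor
      · intro h p hp
        rw [mem_filter] at hp
        rw [mem_sdiff]
        refine ⟨hp.1, fun hpd => ?_⟩
        exact Nat.not_coprime_of_dvd_of_dvd (hP p hp.1).one_lt
          (Nat.dvd_of_mem_primeFactors hpd) hp.2 h
      · intro h
        refine Nat.Coprime.symm (Nat.coprime_of_dvd fun p hp hpy hpd => ?_)
        have hpP : p ∈ P := Nat.mem_primeFactors.2 ⟨hp, hpd.trans hd, hu⟩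
        exact (mem_sdiff.1 (h (mem_filter.2 ⟨hpP, hpy⟩))).2
          (Nat.mem_primeFactors.2 ⟨hp, hpd, hd0⟩)
    have hUfull : U P := by
      obtain ⟨y, hy⟩ := h0
      exact ⟨y, hy, filter_subset _ _⟩
    have hUempty : ¬ U ∅ := by
      rintro ⟨y, hy, h⟩
      obtain ⟨hyS, hyv⟩ := mem_filter.1 hy
      refine hcop y hyS (Nat.Coprime.mul_left ?_ hyv)
      exact (hcop_iff u dvd_rfl y).2 (h.trans (empty_subset _))
    have hgap := prodMeas_gap (P := P) hc0 (r := fun p => 1 / (p : ℝ))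
      (s := fun p => 1 / ((u.factorization p : ℝ) + 1)) (fun p _ => by positivity)
      (fun p hp => by
        have := hc p hp
        have h2 : 0 ≤ c * (1 / ((u.factorization p : ℝ) + 1)) := by positivity
        linarith) hc
      (fun p hp => by
        have h1 : 1 ≤ u.factorization p :=
          (hP p hp).factorization_pos_of_dvd hu (Nat.dvd_of_mem_primeFactors hp)
        have h1' : (1 : ℝ) ≤ u.factorization p := by exact_mod_cast h1
        exact one_div_le_one_div_of_le (by norm_num) (by linarith)) hUmono hUfull hUempty
    have hprod : (u.divisors.card : ℝ) * ∏ p ∈ P, (1 / ((u.factorization p : ℝ) + 1)) = 1 := by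
      rw [Nat.card_divisors hu]
      push_cast
      rw [← prod_mul_distrib]
      exact prod_eq_one fun p _ => by
        have : (u.factorization p : ℝ) + 1 ≠ 0 := by positivity
        field_simp
    have hwdvd : ∏ p ∈ P, p ∣ u := Nat.prod_primeFactors_dvd u
    have hS0card : (S0.card : ℝ) ≤ T * prodMeas P (fun p => 1 / (p : ℝ)) U + ∏ p ∈ P, (p : ℝ) := by
      refine le_trans ?_ (card_class_family_le hP (r := r) (T := T) hQ
        (hQu.coprime_dvd_right hwdvd) U)
      refine Nat.cast_le.2 (card_le_card fun y hy => ?_)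
      exact mem_filter.2 ⟨hS (mem_filter.1 hy).1, y, hy, subset_rfl⟩
    have hNcard : (u.divisors.filter fun d => U (P \ d.primeFactors)).card * v.divisors.card
        ≤ N.card := by
      refine card_mul_divisors_le huv _ (filter_subset _ _) _ fun d hd e he => ?_
      obtain ⟨hd1, y, hy, hsub⟩ := mem_filter.1 hd
      have hd1 := Nat.dvd_of_mem_divisors hd1
      have he := Nat.dvd_of_mem_divisors he
      obtain ⟨hyS, hyv⟩ := mem_filter.1 hy
      exact (hmemN _).2 ⟨mul_dvd_mul hd1 he, y, hyS,
        Nat.Coprime.mul_left ((hcop_iff d hd1 y).2 hsub) (hyv.coprime_dvd_left he)⟩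
    have hNR : (u.divisors.card : ℝ) * prodMeas P (fun p => 1 / ((u.factorization p : ℝ) + 1)) U
        * v.divisors.card ≤ N.card := by
      rw [← card_divisors_family hu U]
      exact_mod_cast hNcard
    have hfin : (S.card : ℝ) ≤ N.card := by
      rw [hcard]
      push_cast
      have hTR' : (T : ℝ) = u.divisors.card * v.divisors.card := by rw [hT]; push_cast; ring
      rw [hTR'] at hS0card
      have h5 := mul_le_mul_of_nonneg_left hgap (mul_nonneg hτuR.le hτvR)
      have h6 : (u.divisors.card : ℝ) * v.divisors.card *
          (c * ∏ p ∈ P, (1 / ((u.factorization p : ℝ) + 1))) = c * v.divisors.card := by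
        linear_combination (c * (v.divisors.card : ℝ)) * hprod
      rw [mul_add, h6] at h5
      nlinarith
    exact_mod_cast hfin

end Hall

end MatchDensity

namespace MatchDensity

open Finset

/-! ### A sufficient condition for matchability -/

lemma matchable_of_injOn {n : ℕ} (φ : ℕ → ℕ)
    (hmem : ∀ y ∈ Icc 1 n.divisors.card, φ y ∈ n.divisors)
    (hcop : ∀ y ∈ Icc 1 n.divisors.card, Nat.Coprime (φ y) y)
    (hinj : Set.InjOn φ (Icc 1 n.divisors.card : Finset ℕ)) : Matchable n := by
  classical
  have hsurj : Set.SurjOn φ (Icc 1 n.divisors.card : Finset ℕ) (n.divisors : Finset ℕ) :=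
    surjOn_of_injOn_of_card_le φ hmem hinj (by simp)
  have hbij : Set.BijOn φ (Icc 1 n.divisors.card : Finset ℕ) (n.divisors : Finset ℕ) :=
    ⟨hmem, hinj, hsurj⟩
  have hinv := hbij.invOn_invFunOn
  refine ⟨Function.invFunOn φ (Icc 1 n.divisors.card : Finset ℕ), hbij.symm hinv.symm, ?_⟩
  intro d hd
  have h1 := hinv.2 hd
  have h2 := (hbij.symm hinv.symm).mapsTo hd
  have h3 := hcop _ h2
  rwa [h1] at h3

lemma modEq_prod_of_forall {C : Finset ℕ} (hC : ∀ p ∈ C, p.Prime) {y z : ℕ}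
    (h : ∀ p ∈ C, y % p = z % p) : y ≡ z [MOD ∏ p ∈ C, p] := by
  rw [Nat.modEq_iff_dvd]
  have : ∏ p ∈ C, p ∣ ((z : ℤ) - y).natAbs := by
    refine prod_primes_dvd _ (fun p hp => (hC p hp).prime) fun p hp => ?_
    have := (Nat.modEq_iff_dvd (n := p) (a := y) (b := z)).1 (h p hp)
    exact Int.natCast_dvd.1 this
  exact Int.natCast_dvd.2 this

/-- Gluing: if `C` is a set of critical primes of `n` and every residue class modulo `∏ C` can be
matched with the divisors of the remaining part `m`, then `n` is matchable. The critical part of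
the divisor attached to `y` is `∏ p ^ (y % p)`. -/
lemma matchable_of_classes {n m : ℕ} {C : Finset ℕ} (hC : ∀ p ∈ C, p.Prime) (hm : m ≠ 0)
    (hCm : ∀ p ∈ C, ¬ p ∣ m) (hn : n = (∏ p ∈ C, p ^ (p - 1)) * m)
    (hclass : ∀ r, ∃ f : ℕ → ℕ,
      (∀ y ∈ (Ioc 0 ((∏ p ∈ C, p) * m.divisors.card)).filter fun y => y ≡ r [MOD ∏ p ∈ C, p],
        f y ∈ m.divisors.filter fun d => Nat.Coprime d y) ∧
      Set.InjOn f ((Ioc 0 ((∏ p ∈ C, p) * m.divisors.card)).filter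
        fun y => y ≡ r [MOD ∏ p ∈ C, p] : Finset ℕ)) : Matchable n := by
  classical
  choose f hf hinj using hclass
  set Q := ∏ p ∈ C, p with hQ
  have hcopm : Nat.Coprime (∏ p ∈ C, p ^ (p - 1)) m :=
    Nat.Coprime.prod_left fun p hp =>
      Nat.Coprime.pow_left _ (((hC p hp).coprime_iff_not_dvd).2 (hCm p hp))
  have hcard : n.divisors.card = Q * m.divisors.card := by
    rw [hn, hcopm.card_divisors_mul, card_divisors_prod_pow hC]
    congr 1
    exact prod_congr rfl fun p hp => Nat.sub_add_cancel (hC p hp).one_le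
  have hn0 : n ≠ 0 := by
    rw [hn]
    exact mul_ne_zero (prod_pow_ne_zero hC _) hm
  have hI : Icc 1 n.divisors.card = Ioc 0 (Q * m.divisors.card) := by
    rw [hcard]
    rfl
  have hy : ∀ y ∈ Icc 1 n.divisors.card, y ∈ (Ioc 0 (Q * m.divisors.card)).filter
      fun z => z ≡ y % Q [MOD Q] := fun y hy =>
    mem_filter.2 ⟨hI ▸ hy, (Nat.mod_modEq y Q).symm⟩
  refine matchable_of_injOn (fun y => (∏ p ∈ C, p ^ (y % p)) * f (y % Q) y) ?_ ?_ ?_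
  · intro y hyI
    have h := mem_filter.1 (hf _ y (hy y hyI))
    refine Nat.mem_divisors.2 ⟨?_, hn0⟩
    rw [hn]
    refine mul_dvd_mul (prod_dvd_prod_of_dvd _ _ fun p hp => pow_dvd_pow _ ?_)
      (Nat.dvd_of_mem_divisors h.1)
    have := Nat.mod_lt y (hC p hp).pos
    omega
  · intro y hyI
    have h := mem_filter.1 (hf _ y (hy y hyI))
    refine Nat.Coprime.mul_left (Nat.Coprime.prod_left fun p hp => ?_) h.2
    by_cases hpy : p ∣ y
    · rw [Nat.mod_eq_zero_of_dvd hpy]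
      simp
    · exact Nat.Coprime.pow_left _ (((hC p hp).coprime_iff_not_dvd).2 hpy)
  · intro y hyI z hzI heq
    have h1 := mem_filter.1 (hf _ y (hy y hyI))
    have h2 := mem_filter.1 (hf _ z (hy z hzI))
    have hfac : ∀ x ∈ Icc 1 n.divisors.card, ∀ p ∈ C,
        ((∏ p ∈ C, p ^ (x % p)) * f (x % Q) x).factorization p = x % p := by
      intro x hx p hp
      have h := mem_filter.1 (hf _ x (hy x hx))
      have hd := Nat.dvd_of_mem_divisors h.1
      have h0 : f (x % Q) x ≠ 0 := (Nat.pos_of_mem_divisors h.1).ne'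
      rw [Nat.factorization_mul (prod_pow_ne_zero hC _) h0, Finsupp.add_apply,
        factorization_prod_pow hC, if_pos hp,
        Nat.factorization_eq_zero_of_not_dvd fun h' => hCm p hp (h'.trans hd), add_zero]
    have hmod : ∀ p ∈ C, y % p = z % p := fun p hp => by
      have heq : (∏ p ∈ C, p ^ (y % p)) * f (y % Q) y = (∏ p ∈ C, p ^ (z % p)) * f (z % Q) z := heq
      rw [← hfac y hyI p hp, heq, hfac z hzI p hp]
    have hmodQ : y % Q = z % Q := modEq_prod_of_forall hC hmod
    have he : ∏ p ∈ C, p ^ (y % p) = ∏ p ∈ C, p ^ (z % p) :=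
      prod_congr rfl fun p hp => by rw [hmod p hp]
    simp only [he, hmodQ] at heq
    have heq' := Nat.eq_of_mul_eq_mul_left
      (Nat.pos_of_ne_zero (prod_pow_ne_zero hC fun p => z % p)) heq
    have hyz := hy y hyI
    rw [hmodQ] at hyz
    exact hinj _ (mem_coe.2 hyz) (mem_coe.2 (hy z hzI)) heq'

lemma prod_primes_dvd_factorial {A : Finset ℕ} {N : ℕ} (hA : ∀ p ∈ A, p.Prime ∧ p ≤ N) :
    ∏ p ∈ A, p ∣ N.factorial :=
  prod_primes_dvd _ (fun p hp => (hA p hp).1.prime)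
    fun p hp => Nat.dvd_factorial (hA p hp).1.pos (hA p hp).2

/-- The deterministic core: `p ^ p ∤ n` for small `p`, together with conditions that hold for
almost all `n`, implies that `n` is matchable. -/
theorem matchable_of_conditions {n K L : ℕ} (hK : 3 ≤ K) (hKL : K ≤ L) (hn : n ≠ 0)
    (h1 : ∀ p, p.Prime → p ≤ K → ¬ p ^ p ∣ n) (h2 : ∀ p, p.Prime → K < p → ¬ p ^ 2 ∣ n)
    (h3 : 2 * K * K.factorial * K ^ K
      * 2 ^ (n.primeFactors.filter fun p => K < p ∧ p ≤ L).card
      * ∑ t ∈ n.divisors.filter (fun t => L < t ∧ Nat.Coprime t L.factorial), 1 / (t : ℝ) ≤ 1)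
    (h4 : 2 * K * L.factorial ≤ 2 ^ (n.primeFactors.filter fun p => L < p).card) :
    Matchable n := by
  classical
  set P := n.primeFactors with hPdef
  set a := n.factorization with ha
  have hP : ∀ p ∈ P, p.Prime := fun p hp => Nat.prime_of_mem_primeFactors hp
  have hpos : ∀ p ∈ P, 1 ≤ a p := fun p hp =>
    (hP p hp).factorization_pos_of_dvd hn (Nat.dvd_of_mem_primeFactors hp)
  have hsmall : ∀ p ∈ P, p ≤ K → a p ≤ p - 1 := fun p hp hpK => by
    by_contra h
    exact h1 p (hP p hp) hpK ((hP p hp).pow_dvd_iff_le_factorization hn |>.2 (by rw [← ha]; omega))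
  have hlarge : ∀ p ∈ P, K < p → a p = 1 := fun p hp hpK => by
    have h5 := hpos p hp
    by_contra h
    exact h2 p (hP p hp) hpK ((hP p hp).pow_dvd_iff_le_factorization hn |>.2 (by rw [← ha]; omega))
  set C := P.filter fun p => a p = p - 1 with hCdef
  set Pu := P.filter fun p => a p ≠ p - 1 ∧ p ≤ L with hPu
  set Pv := P.filter fun p => L < p with hPv
  have hC : ∀ p ∈ C, p.Prime := fun p hp => hP p (mem_filter.1 hp).1
  have hCK : ∀ p ∈ C, p ≤ K := fun p hp => by
    obtain ⟨hp1, hp2⟩ := mem_filter.1 hp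
    by_contra h
    have := hlarge p hp1 (by omega)
    omega
  have hPuP : ∀ p ∈ Pu, p.Prime := fun p hp => hP p (mem_filter.1 hp).1
  have hPvP : ∀ p ∈ Pv, p.Prime := fun p hp => hP p (mem_filter.1 hp).1
  have hupos : ∀ p ∈ Pu, 1 ≤ a p := fun p hp => hpos p (mem_filter.1 hp).1
  have hv1 : ∀ p ∈ Pv, a p = 1 := fun p hp => by
    obtain ⟨hp1, hp2⟩ := mem_filter.1 hp
    exact hlarge p hp1 (by omega)
  set u := ∏ p ∈ Pu, p ^ a p with hu
  set v := ∏ p ∈ Pv, p ^ a p with hv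
  have hu0 : u ≠ 0 := prod_pow_ne_zero hPuP _
  have hv0 : v ≠ 0 := prod_pow_ne_zero hPvP _
  have hpfu : u.primeFactors = Pu := primeFactors_prod_pow hPuP hupos
  have hpfv : v.primeFactors = Pv := primeFactors_prod_pow hPvP fun p hp => (hv1 p hp).ge
  have hfu : ∀ p ∈ Pu, u.factorization p = a p := fun p hp => by
    rw [hu, factorization_prod_pow hPuP, if_pos hp]
  have hvsq : Squarefree v := by
    rw [Nat.squarefree_iff_factorization_le_one hv0]
    intro q
    rw [hv, factorization_prod_pow hPvP]
    split_ifs with hq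
    · rw [hv1 q hq]
    · omega
  have huv : Nat.Coprime u v := by
    rw [← Nat.disjoint_primeFactors hu0 hv0, hpfu, hpfv, disjoint_left]
    intro p hp hp'
    have e1 := (mem_filter.1 hp).2.2
    have e2 := (mem_filter.1 hp').2
    omega
  have hCuv : ∀ p ∈ C, ¬ p ∣ u * v := by
    intro p hp hdvd
    rcases (hC p hp).dvd_mul.1 hdvd with h | h
    · have : p ∈ Pu := hpfu ▸ Nat.mem_primeFactors.2 ⟨hC p hp, h, hu0⟩
      exact (mem_filter.1 this).2.1 (mem_filter.1 hp).2
    · have : p ∈ Pv := hpfv ▸ Nat.mem_primeFactors.2 ⟨hC p hp, h, hv0⟩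
      have e1 := (mem_filter.1 this).2
      have e2 := hCK p hp
      omega
  have hfact : n = (∏ p ∈ C, p ^ (p - 1)) * (u * v) := by
    have e1 : n = ∏ p ∈ P, p ^ a p := (Nat.prod_factorization_pow_eq_self hn).symm
    have e2 : ∏ p ∈ C, p ^ (p - 1) = ∏ p ∈ C, p ^ a p :=
      prod_congr rfl fun p hp => by rw [(mem_filter.1 hp).2]
    have e3 : (P.filter fun p => ¬ a p = p - 1) = Pu ∪ Pv := by
      ext p
      simp only [hPu, hPv, mem_filter, mem_union]
      constructor
      · rintro ⟨h, h'⟩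
        by_cases hpL : p ≤ L
        · exact Or.inl ⟨h, h', hpL⟩
        · exact Or.inr ⟨h, by omega⟩
      · rintro (⟨h, h', _⟩ | ⟨h, h'⟩)
        · exact ⟨h, h'⟩
        · have := hlarge p h (by omega)
          exact ⟨h, by omega⟩
    rw [e2, hu, hv, ← prod_union (by
      rw [← hpfu, ← hpfv]
      exact huv.disjoint_primeFactors), ← e3, prod_filter_mul_prod_filter_not]
    exact e1
  set Q := ∏ p ∈ C, p with hQ
  have hQ0 : 0 < Q := prod_pos fun p hp => (hC p hp).pos
  have hQu : Nat.Coprime Q u := Nat.Coprime.prod_left fun p hp =>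
    ((hC p hp).coprime_iff_not_dvd).2 fun h => hCuv p hp (h.mul_right v)
  have hQle : Q ≤ K.factorial := Nat.le_of_dvd (Nat.factorial_pos _)
    (prod_primes_dvd_factorial fun p hp => ⟨hC p hp, hCK p hp⟩)
  have hwle : ∏ p ∈ Pu, p ≤ L.factorial := Nat.le_of_dvd (Nat.factorial_pos _)
    (prod_primes_dvd_factorial fun p hp => ⟨hPuP p hp, (mem_filter.1 hp).2.2⟩)
  have hτv : v.divisors.card = 2 ^ Pv.card := by
    rw [hv, card_divisors_prod_pow hPvP, prod_congr rfl fun p hp => by rw [hv1 p hp],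
      prod_const]
  have hτu : u.divisors.card ≤ K ^ K * 2 ^ (P.filter fun p => K < p ∧ p ≤ L).card := by
    rw [hu, card_divisors_prod_pow hPuP, ← prod_filter_mul_prod_filter_not Pu (fun p => p ≤ K)]
    refine Nat.mul_le_mul ?_ ?_
    · have e1 : ∀ p ∈ Pu.filter (fun p => p ≤ K), a p + 1 ≤ K := fun p hp => by
        obtain ⟨hp1, hp2⟩ := mem_filter.1 hp
        have := hsmall p (mem_filter.1 hp1).1 hp2
        have := (hPuP p hp1).pos
        omega
      refine (prod_le_pow_card _ _ _ e1).trans (Nat.pow_le_pow_right (by omega) ?_)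
      have : Pu.filter (fun p => p ≤ K) ⊆ Icc 1 K := fun p hp => by
        obtain ⟨hp1, hp2⟩ := mem_filter.1 hp
        exact mem_Icc.2 ⟨(hPuP p hp1).pos, hp2⟩
      simpa using card_le_card this
    · have e1 : ∀ p ∈ Pu.filter (fun p => ¬ p ≤ K), a p + 1 ≤ 2 := fun p hp => by
        obtain ⟨hp1, hp2⟩ := mem_filter.1 hp
        have := hlarge p (mem_filter.1 hp1).1 (by omega)
        omega
      refine (prod_le_pow_card _ _ _ e1).trans (Nat.pow_le_pow_right (by omega) ?_)
      refine card_le_card fun p hp => ?_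
      obtain ⟨hp1, hp2⟩ := mem_filter.1 hp
      exact mem_filter.2 ⟨(mem_filter.1 hp1).1, by omega, (mem_filter.1 hp1).2.2⟩
  have hvn : v ∣ n := by
    rw [hfact]
    exact (dvd_mul_left v u).mul_left _
  have hηle : ∑ t ∈ v.divisors.erase 1, 1 / (t : ℝ)
      ≤ ∑ t ∈ n.divisors.filter (fun t => L < t ∧ Nat.Coprime t L.factorial), 1 / (t : ℝ) := by
    refine sum_le_sum_of_subset_of_nonneg (fun t ht => ?_) fun _ _ _ => by positivity
    obtain ⟨ht1, htv⟩ := mem_erase.1 ht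
    have htv := Nat.dvd_of_mem_divisors htv
    have hmin : L < t.minFac := by
      have hpr := Nat.minFac_prime ht1
      have : t.minFac ∈ Pv := hpfv ▸ Nat.mem_primeFactors.2
        ⟨hpr, (Nat.minFac_dvd t).trans htv, hv0⟩
      exact (mem_filter.1 this).2
    have ht0 : 0 < t := Nat.pos_of_dvd_of_pos htv (Nat.pos_of_ne_zero hv0)
    exact mem_filter.2 ⟨Nat.mem_divisors.2 ⟨htv.trans hvn, hn⟩,
      hmin.trans_le (Nat.minFac_le ht0), (Nat.coprime_factorial_iff ht1).2 hmin⟩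
  have hKR : (3 : ℝ) ≤ K := by exact_mod_cast hK
  refine matchable_of_classes hC (mul_ne_zero hu0 hv0) hCuv hfact fun r => ?_
  rw [huv.card_divisors_mul]
  refine exists_injOn_of_hall _ _ fun S hS => ?_
  refine hall_condition (c := 1 / (K : ℝ)) hQ0 hu0 hvsq huv hQu (by positivity)
    ((div_le_one (by linarith)).2 (by linarith)) ?_ ?_ ?_ S hS
  · intro p hp
    rw [hpfu] at hp
    rw [hfu p hp]
    obtain ⟨hpP, hpa, hpL⟩ := mem_filter.1 hp
    have hpp : (2 : ℝ) ≤ p := by exact_mod_cast (hP p hpP).two_le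
    have hap : (0 : ℝ) < (a p : ℝ) + 1 := by positivity
    have hKp : (0 : ℝ) < K := by linarith
    -- This is `(a_p + 1) / p ≤ 1 - 1 / K`, cleared of denominators.
    have key : ((a p : ℝ) + 1) * K + p ≤ p * K := by
      by_cases hpK : p ≤ K
      · have e1 := hsmall p hpP hpK
        have e2 : a p + 2 ≤ p := by
          have := (hP p hpP).two_le
          omega
        have e2' : (a p : ℝ) + 2 ≤ p := by exact_mod_cast e2
        have e3 : (p : ℝ) ≤ K := by exact_mod_cast hpK
        nlinarith
      · have e1 := hlarge p hpP (by omega)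
        have e3 : (K : ℝ) + 1 ≤ p := by exact_mod_cast (by omega : K + 1 ≤ p)
        rw [e1]
        push_cast
        nlinarith
    have hp0 : (0 : ℝ) < p := by linarith
    have : 1 / ((a p : ℝ) + 1) - (1 / (p : ℝ) + 1 / (K : ℝ) * (1 / ((a p : ℝ) + 1)))
        = (p * K - (((a p : ℝ) + 1) * K + p)) / (p * K * ((a p : ℝ) + 1)) := by
      field_simp
    have h6 : 0 ≤ (p * K - (((a p : ℝ) + 1) * K + p)) / (p * K * ((a p : ℝ) + 1)) :=
      div_nonneg (by linarith) (by positivity)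
    linarith
  · rw [le_div_iff₀ (by linarith)]
    refine le_trans ?_ h3
    have e1 : (Q : ℝ) ≤ K.factorial := by exact_mod_cast hQle
    have e2 : (u.divisors.card : ℝ) ≤ K ^ K * 2 ^ (P.filter fun p => K < p ∧ p ≤ L).card := by
      exact_mod_cast hτu
    have hη0 : 0 ≤ ∑ t ∈ v.divisors.erase 1, 1 / (t : ℝ) := sum_nonneg fun _ _ => by positivity
    have e3 : (2 * K * Q : ℝ) ≤ 2 * K * K.factorial :=
      mul_le_mul_of_nonneg_left e1 (by positivity)
    have e4 := mul_le_mul (mul_le_mul e3 e2 (Nat.cast_nonneg _) (by positivity)) hηle hη0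
      (by positivity)
    rw [← mul_assoc (2 * (K : ℝ) * K.factorial)] at e4
    refine le_of_eq_of_le ?_ e4
    generalize ∑ t ∈ v.divisors.erase 1, 1 / (t : ℝ) = z
    ring
  · rw [hpfu, hτv]
    have e1 : ∏ p ∈ Pu, (p : ℝ) ≤ L.factorial := by
      have := (Nat.cast_le (α := ℝ)).2 hwle
      rwa [Nat.cast_prod] at this
    have e2 : (2 : ℝ) * K * L.factorial ≤ 2 ^ Pv.card := by exact_mod_cast h4
    push_cast
    rw [one_div, inv_mul_eq_div, le_div_iff₀ (by linarith)]
    nlinarith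

end MatchDensity

namespace MatchDensity

open Finset

/-! ### An obstruction to matchability -/

/-- If `p ^ p ∣ n` and the prime-to-`p` part of `n` has at least `p` divisors, then there are more
multiples of `p` in `{1, …, τ(n)}` than divisors of `n` not divisible by `p`, and only the latter
can be matched with the former. -/
theorem not_matchable_of_pow_dvd {n p : ℕ} (hn : n ≠ 0) (hp : p.Prime) (hpn : p ^ p ∣ n)
    (hm : p ≤ (ordCompl[p] n).divisors.card) : ¬ Matchable n := by
  rintro ⟨ψ, hψ, hcop⟩
  set a := n.factorization p with ha
  set m := (ordCompl[p] n).divisors.card with hmdef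
  have hap : p ≤ a := (hp.pow_dvd_iff_le_factorization hn).1 hpn
  have hτ : n.divisors.card = (a + 1) * m := by
    conv_lhs => rw [← Nat.ordProj_mul_ordCompl_eq_self n p]
    rw [((Nat.coprime_ordCompl hp hn).pow_left _).card_divisors_mul, Nat.divisors_prime_pow hp,
      card_map, card_range]
  have hcard : n.divisors.card / p ≤ m := by
    rw [← Nat.Ioc_filter_dvd_card_eq_div]
    refine card_le_card_of_surjOn ψ ?_
    intro y hy
    obtain ⟨hy1, hpy⟩ := mem_filter.1 (mem_coe.1 hy)
    obtain ⟨d, hd, rfl⟩ := hψ.surjOn (mem_coe.2 hy1)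
    have hd' : d ∈ n.divisors := hd
    refine ⟨d, ?_, rfl⟩
    have hpd : ¬ p ∣ d := fun h => hp.one_lt.ne' (Nat.dvd_one.1 (hcop d hd' ▸ Nat.dvd_gcd h hpy))
    have hdn := Nat.dvd_of_mem_divisors hd'
    rw [← Nat.ordProj_mul_ordCompl_eq_self n p] at hdn
    have hc : Nat.Coprime d (p ^ n.factorization p) :=
      ((hp.coprime_iff_not_dvd.2 hpd).symm).pow_right _
    exact mem_coe.2 (Nat.mem_divisors.2 ⟨hc.dvd_of_dvd_mul_left hdn, (Nat.ordCompl_pos p hn).ne'⟩)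
  have h1 : m + 1 ≤ n.divisors.card / p := by
    rw [Nat.le_div_iff_mul_le hp.pos, hτ]
    nlinarith
  omega

theorem not_matchable_of_conditions {n K L p : ℕ} (hKL : K ≤ L) (hn : n ≠ 0)
    (hp : p.Prime) (hpK : p ≤ K) (hpn : p ^ p ∣ n)
    (h4 : 2 * K * L.factorial ≤ 2 ^ (n.primeFactors.filter fun p => L < p).card) :
    ¬ Matchable n := by
  refine not_matchable_of_pow_dvd hn hp hpn ?_
  have hsub : (n.primeFactors.filter fun p => L < p) ⊆ (ordCompl[p] n).primeFactors := by
    intro q hq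
    obtain ⟨hq1, hq2⟩ := mem_filter.1 hq
    have hqp := Nat.prime_of_mem_primeFactors hq1
    have hne : q ≠ p := by omega
    refine Nat.mem_primeFactors.2 ⟨hqp, ?_, (Nat.ordCompl_pos p hn).ne'⟩
    have h := Nat.dvd_of_mem_primeFactors hq1
    rw [← Nat.ordProj_mul_ordCompl_eq_self n p] at h
    exact (((Nat.coprime_primes hqp hp).2 hne).pow_right _).dvd_of_dvd_mul_left h
  have h5 : 2 ^ (ordCompl[p] n).primeFactors.card ≤ (ordCompl[p] n).divisors.card := by
    rw [Nat.card_divisors (Nat.ordCompl_pos p hn).ne']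
    refine pow_card_le_prod _ _ _ fun q hq => ?_
    have := (Nat.prime_of_mem_primeFactors hq).factorization_pos_of_dvd
      (Nat.ordCompl_pos p hn).ne' (Nat.dvd_of_mem_primeFactors hq)
    omega
  have h6 := Nat.pow_le_pow_right (n := 2) (by norm_num) (card_le_card hsub)
  have h7 : p ≤ 2 * K * L.factorial := by
    have := Nat.factorial_pos L
    nlinarith
  omega

end MatchDensity

namespace MatchDensity

open Finset

/-! ### Counting integers free of the divisors `p ^ p` -/

lemma card_pow_free_insert {q : ℕ} {P : Finset ℕ} (hq : q.Prime) (hP : ∀ p ∈ P, p.Prime)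
    (hqP : q ∉ P) (x : ℕ) :
    #{n ∈ Ioc 0 x | ∀ p ∈ insert q P, ¬ p ^ p ∣ n} + #{n ∈ Ioc 0 (x / q ^ q) | ∀ p ∈ P, ¬ p ^ p ∣ n}
      = #{n ∈ Ioc 0 x | ∀ p ∈ P, ¬ p ^ p ∣ n} := by
  have hq0 : 0 < q ^ q := pow_pos hq.pos q
  have h1 : #{n ∈ Ioc 0 (x / q ^ q) | ∀ p ∈ P, ¬ p ^ p ∣ n}
      = #{n ∈ Ioc 0 x | (∀ p ∈ P, ¬ p ^ p ∣ n) ∧ q ^ q ∣ n} := by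
    refine card_bij (fun m _ => q ^ q * m) ?_ ?_ ?_
    · intro m hm
      obtain ⟨hm1, hm2⟩ := mem_filter.1 hm
      rw [mem_Ioc] at hm1
      refine mem_filter.2 ⟨mem_Ioc.2 ⟨Nat.mul_pos hq0 hm1.1, ?_⟩, ?_, dvd_mul_right _ _⟩
      · rw [mul_comm]
        exact (Nat.le_div_iff_mul_le hq0).1 hm1.2
      · intro p hp h
        have hne : p ≠ q := fun h => hqP (h ▸ hp)
        exact hm2 p hp ((Nat.Coprime.pow p q
          ((Nat.coprime_primes (hP p hp) hq).2 hne)).dvd_of_dvd_mul_left h)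
    · intro m _ m' _ h
      exact Nat.eq_of_mul_eq_mul_left hq0 h
    · intro n hn
      obtain ⟨hn1, hn2, m, rfl⟩ := mem_filter.1 hn
      rw [mem_Ioc] at hn1
      refine ⟨m, mem_filter.2 ⟨mem_Ioc.2 ⟨Nat.pos_of_mul_pos_left hn1.1, ?_⟩, ?_⟩, rfl⟩
      · rw [Nat.le_div_iff_mul_le hq0, mul_comm]
        exact hn1.2
      · exact fun p hp h => hn2 p hp (h.mul_left _)
  rw [h1, add_comm, ← card_filter_add_card_filter_not (s := {n ∈ Ioc 0 x | ∀ p ∈ P, ¬ p ^ p ∣ n})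
    (fun n => q ^ q ∣ n), filter_filter, filter_filter]
  congr 2
  ext n
  simp only [mem_filter, forall_mem_insert]
  tauto

lemma exists_card_pow_free_bound (P : Finset ℕ) (hP : ∀ p ∈ P, p.Prime) :
    ∃ C : ℝ, ∀ x : ℕ, |(#{n ∈ Ioc 0 x | ∀ p ∈ P, ¬ p ^ p ∣ n} : ℝ)
      - (∏ p ∈ P, (1 - 1 / (p : ℝ) ^ p)) * x| ≤ C := by
  induction P using Finset.induction_on with
  | empty => exact ⟨0, fun x => by simp⟩
  | insert q P hqP ih =>
    obtain ⟨C, hC⟩ := ih fun p hp => hP p (mem_insert_of_mem hp)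
    have hq := hP q (mem_insert_self _ _)
    have hq0 : 0 < q ^ q := pow_pos hq.pos q
    have hpr : |∏ p ∈ P, (1 - 1 / (p : ℝ) ^ p)| ≤ 1 := by
      rw [abs_prod]
      refine prod_le_one (fun _ _ => abs_nonneg _) fun p hp => ?_
      have h1 : (1 : ℝ) ≤ (p : ℝ) ^ p :=
        one_le_pow₀ (by exact_mod_cast (hP p (mem_insert_of_mem hp)).one_le)
      have h2 : 1 / (p : ℝ) ^ p ≤ 1 := (div_le_one (by positivity)).2 h1
      have h3 : 0 ≤ 1 / (p : ℝ) ^ p := by positivity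
      rw [abs_le]
      constructor <;> linarith
    refine ⟨2 * C + 1, fun x => ?_⟩
    have h := card_pow_free_insert hq (fun p hp => hP p (mem_insert_of_mem hp)) hqP x
    have h' := congrArg (Nat.cast (R := ℝ)) h
    push_cast at h'
    have h1 := hC x
    have h2 := hC (x / q ^ q)
    rw [prod_insert hqP]
    set c := ∏ p ∈ P, (1 - 1 / (p : ℝ) ^ p)
    have h3 : |(x : ℝ) / (q : ℝ) ^ q - ((x / q ^ q : ℕ) : ℝ)| ≤ 1 := by
      have e1 : ((x / q ^ q : ℕ) : ℝ) ≤ (x : ℝ) / (q : ℝ) ^ q := by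
        simpa using Nat.cast_div_le (α := ℝ) (m := x) (n := q ^ q)
      have e2 : (x : ℝ) / (q : ℝ) ^ q < ((x / q ^ q : ℕ) : ℝ) + 1 := by
        rw [div_lt_iff₀ (by exact_mod_cast hq0)]
        rw [mul_comm]
        exact_mod_cast Nat.lt_mul_div_succ x hq0
      rw [abs_le]
      constructor <;> linarith
    have h4 : |c * ((x : ℝ) / (q : ℝ) ^ q - ((x / q ^ q : ℕ) : ℝ))| ≤ 1 := by
      rw [abs_mul]
      exact mul_le_one₀ hpr (abs_nonneg _) h3
    have h5 : (1 - 1 / (q : ℝ) ^ q) * c * x = c * x - c * ((x / q ^ q : ℕ) : ℝ)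
        - c * ((x : ℝ) / (q : ℝ) ^ q - ((x / q ^ q : ℕ) : ℝ)) := by ring
    rw [h5]
    rw [abs_le] at h1 h2 h4 ⊢
    constructor <;> linarith

/-! ### Integers with a large square factor -/

open Classical in
lemma card_sq_dvd_le {K : ℕ} (hK : 0 < K) (x : ℕ) :
    (#{n ∈ Ioc 0 x | ∃ p, p.Prime ∧ K < p ∧ p ^ 2 ∣ n} : ℝ) ≤ x * (1 / K) := by
  have hsub : {n ∈ Ioc 0 x | ∃ p, p.Prime ∧ K < p ∧ p ^ 2 ∣ n}
      ⊆ (Ioc K (x + K)).biUnion fun p => {n ∈ Ioc 0 x | p ^ 2 ∣ n} := by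
    intro n hn
    obtain ⟨hn1, p, hp, hKp, hpn⟩ := mem_filter.1 hn
    have hn2 := mem_Ioc.1 hn1
    have := Nat.le_of_dvd hn2.1 hpn
    have : p ≤ p ^ 2 := Nat.le_self_pow (by norm_num) p
    exact mem_biUnion.2 ⟨p, mem_Ioc.2 ⟨hKp, by omega⟩, mem_filter.2 ⟨hn1, hpn⟩⟩
  have h1 := (card_le_card hsub).trans card_biUnion_le
  have h2 : (#{n ∈ Ioc 0 x | ∃ p, p.Prime ∧ K < p ∧ p ^ 2 ∣ n} : ℝ)
      ≤ ∑ p ∈ Ioc K (x + K), (#{n ∈ Ioc 0 x | p ^ 2 ∣ n} : ℝ) := by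
    exact_mod_cast h1
  refine h2.trans ((sum_le_sum fun p _ => card_dvd_le x (p ^ 2)).trans ?_)
  rw [← mul_sum]
  refine mul_le_mul_of_nonneg_left ?_ (by positivity)
  have h3 := sum_Ioc_inv_sq_le_sub (α := ℝ) hK.ne' (by omega : K ≤ x + K)
  have h4 : (0 : ℝ) ≤ ((x + K : ℕ) : ℝ)⁻¹ := by positivity
  simp only [one_div, Nat.cast_pow]
  linarith

end MatchDensity

namespace MatchDensity

open Finset

/-! ### A first-moment bound for the divisor sum over large coprime divisors -/

/-- Since `(1 + 1/(2j+1))² ≤ (j+1)/j`, the product over odd `3 ≤ m ≤ 2N+1` of `1 + 1/m` is at most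
`√(N+1)`. -/
lemma prod_odd_sq_le (N : ℕ) :
    (∏ j ∈ range N, (1 + 1 / (2 * (j : ℝ) + 3))) ^ 2 ≤ N + 1 := by
  induction N with
  | zero => simp
  | succ N ih =>
    rw [prod_range_succ, mul_pow]
    push_cast
    have h0 : (0 : ℝ) ≤ N := Nat.cast_nonneg N
    have h1 : (1 + 1 / (2 * (N : ℝ) + 3)) ^ 2 * (N + 1) ≤ N + 1 + 1 := by
      have : (1 + 1 / (2 * (N : ℝ) + 3)) = (2 * N + 4) / (2 * N + 3) := by
        field_simp
        ring
      rw [this, div_pow, div_mul_eq_mul_div, div_le_iff₀ (by positivity)]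
      nlinarith
    calc _ ≤ (N + 1) * (1 + 1 / (2 * (N : ℝ) + 3)) ^ 2 :=
          mul_le_mul_of_nonneg_right ih (by positivity)
      _ ≤ _ := by linarith

lemma prod_primes_one_add_le {K N : ℕ} (hK : 2 ≤ K) :
    ∏ p ∈ (Ioc K (2 * N + 1)).filter Nat.Prime, (1 + 1 / (p : ℝ)) ≤ √(N + 1) := by
  refine Real.le_sqrt_of_sq_le (le_trans ?_ (prod_odd_sq_le N))
  have hnn : 0 ≤ ∏ p ∈ (Ioc K (2 * N + 1)).filter Nat.Prime, (1 + 1 / (p : ℝ)) :=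
    prod_nonneg fun _ _ => by positivity
  refine pow_le_pow_left₀ hnn ?_ 2
  have h1 : ∏ j ∈ range N, (1 + 1 / (2 * (j : ℝ) + 3))
      = ∏ m ∈ (range N).image (fun j : ℕ => 2 * j + 3), (1 + 1 / ((m : ℕ) : ℝ)) := by
    rw [prod_image fun a _ b _ (h : 2 * a + 3 = 2 * b + 3) => by omega]
    push_cast
    rfl
  rw [h1]
  refine prod_le_prod_of_subset_of_one_le ?_ ?_ ?_
  · intro p hp
    obtain ⟨hp1, hp2⟩ := mem_filter.1 hp
    have hp3 := mem_Ioc.1 hp1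
    have hodd : p % 2 = 1 := (hp2.eq_two_or_odd).resolve_left (by omega)
    exact mem_image.2 ⟨(p - 3) / 2, mem_range.2 (by omega), by omega⟩
  · exact fun _ _ => by positivity
  · intro m _ _
    have : 0 ≤ 1 / (m : ℝ) := by positivity
    linarith

/-- Summed over `n ≤ x`, the quantity controlling matchability in `matchable_of_conditions` is
`O(x √N / L)`. Here `2 ^ k` counts the sets `T` of primes in `(K, L]` with `∏ T ∣ n`, and
`∏ T` is coprime to `t`, so that `∏ T * t ∣ n`. -/
theorem sum_bad_le {K N : ℕ} (hK : 2 ≤ K) (x : ℕ) :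
    ∑ n ∈ Ioc 0 x, (2 : ℝ) ^ (n.primeFactors.filter fun p => K < p ∧ p ≤ 2 * N + 1).card
      * ∑ t ∈ n.divisors.filter
        (fun t => 2 * N + 1 < t ∧ Nat.Coprime t (2 * N + 1).factorial), 1 / (t : ℝ)
      ≤ x * (√(N + 1) / (2 * N + 1)) := by
  set L := 2 * N + 1 with hL
  set R := (Ioc K L).filter Nat.Prime with hR
  set G := (Ioc L (x + L)).filter fun t => Nat.Coprime t L.factorial with hG
  have hRp : ∀ T ∈ R.powerset, ∀ p ∈ T, p.Prime ∧ p ≤ L := fun T hT p hp => by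
    obtain ⟨h1, h2⟩ := mem_filter.1 (mem_powerset.1 hT hp)
    exact ⟨h2, (mem_Ioc.1 h1).2⟩
  have hterm : ∀ n ∈ Ioc 0 x,
      (2 : ℝ) ^ (n.primeFactors.filter fun p => K < p ∧ p ≤ L).card
      * ∑ t ∈ n.divisors.filter (fun t => L < t ∧ Nat.Coprime t L.factorial), 1 / (t : ℝ)
      ≤ ∑ z ∈ R.powerset ×ˢ G, if (∏ p ∈ z.1, p) * z.2 ∣ n then 1 / (z.2 : ℝ) else 0 := by
    intro n hn
    have hn1 := mem_Ioc.1 hn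
    set F := n.primeFactors.filter fun p => K < p ∧ p ≤ L with hF
    set D := n.divisors.filter (fun t => L < t ∧ Nat.Coprime t L.factorial) with hD
    have e1 : (2 : ℝ) ^ F.card * ∑ t ∈ D, 1 / (t : ℝ)
        = ∑ z ∈ F.powerset ×ˢ D, 1 / (z.2 : ℝ) := by
      rw [sum_product]
      simp
    rw [e1, ← sum_filter]
    refine sum_le_sum_of_subset_of_nonneg ?_ fun _ _ _ => by positivity
    rintro ⟨T, t⟩ hz
    obtain ⟨hT, ht⟩ := mem_product.1 hz
    obtain ⟨ht1, ht2, ht3⟩ := mem_filter.1 ht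
    have htn := Nat.dvd_of_mem_divisors ht1
    have hTF := mem_powerset.1 hT
    have hTR : T ∈ R.powerset := mem_powerset.2 fun p hp => by
      obtain ⟨h1, h2⟩ := mem_filter.1 (hTF hp)
      exact mem_filter.2 ⟨mem_Ioc.2 h2, Nat.prime_of_mem_primeFactors h1⟩
    have hTn : ∏ p ∈ T, p ∣ n :=
      (prod_dvd_prod_of_subset _ _ _ fun p hp => (mem_filter.1 (hTF hp)).1).trans
        (Nat.prod_primeFactors_dvd n)
    have hcop : Nat.Coprime (∏ p ∈ T, p) t :=
      Nat.Coprime.coprime_dvd_left (prod_primes_dvd_factorial (hRp T hTR)) ht3.symm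
    refine mem_filter.2 ⟨mem_product.2 ⟨hTR, mem_filter.2 ⟨mem_Ioc.2 ⟨ht2, ?_⟩, ht3⟩⟩,
      hcop.mul_dvd_of_dvd_of_dvd hTn htn⟩
    have := Nat.le_of_dvd hn1.1 htn
    simp only
    omega
  refine (sum_le_sum hterm).trans ?_
  rw [sum_comm]
  have hz : ∀ z ∈ R.powerset ×ˢ G,
      ∑ n ∈ Ioc 0 x, (if (∏ p ∈ z.1, p) * z.2 ∣ n then 1 / (z.2 : ℝ) else 0)
      ≤ x * ((∏ p ∈ z.1, 1 / (p : ℝ)) * ((z.2 : ℝ) ^ 2)⁻¹) := by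
    rintro ⟨T, t⟩ _
    rw [← sum_filter, sum_const, nsmul_eq_mul]
    refine (mul_le_mul_of_nonneg_right (card_dvd_le x _) (by positivity)).trans (le_of_eq ?_)
    push_cast
    rw [prod_div_distrib, prod_const_one]
    simp only [one_div, mul_inv]
    ring
  refine (sum_le_sum hz).trans ?_
  rw [← mul_sum, sum_product]
  simp only
  rw [← sum_mul_sum]
  refine mul_le_mul_of_nonneg_left ?_ (by positivity)
  rw [div_eq_mul_inv]
  have hL0 : L ≠ 0 := by omega
  refine mul_le_mul ?_ ?_ (sum_nonneg fun _ _ => by positivity) (by positivity)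
  · rw [← prod_one_add]
    exact prod_primes_one_add_le hK
  · refine (sum_le_sum_of_subset_of_nonneg (filter_subset _ _) fun _ _ _ => by positivity).trans ?_
    have h3 := sum_Ioc_inv_sq_le_sub (α := ℝ) hL0 (by omega : L ≤ x + L)
    have h4 : (0 : ℝ) ≤ ((x + L : ℕ) : ℝ)⁻¹ := by positivity
    have h5 : (L : ℝ) = 2 * N + 1 := by rw [hL]; push_cast; ring
    rw [← h5]
    linarith

open Classical in
theorem card_bad_le {K N : ℕ} (hK : 2 ≤ K) (c : ℝ) (hc : 0 ≤ c) (x : ℕ) :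
    (((Ioc 0 x).filter fun n : ℕ => ¬ (c * 2 ^ (n.primeFactors.filter fun p => K < p ∧ p ≤ 2 * N + 1).card
      * ∑ t ∈ n.divisors.filter
        (fun t : ℕ => 2 * N + 1 < t ∧ Nat.Coprime t (2 * N + 1).factorial), 1 / (t : ℝ) ≤ 1)).card : ℝ)
      ≤ x * (c * (√(N + 1) / (2 * N + 1))) := by
  have h := mul_le_mul_of_nonneg_left (sum_bad_le (N := N) hK x) hc
  rw [mul_sum] at h
  rw [card_filter]
  push_cast
  refine (sum_le_sum fun n _ => ?_).trans (h.trans (le_of_eq (by ring)))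
  rw [← mul_assoc]
  split_ifs with h1
  · have : 0 ≤ ∑ t ∈ n.divisors.filter
        (fun t : ℕ => 2 * N + 1 < t ∧ Nat.Coprime t (2 * N + 1).factorial), 1 / (t : ℝ) :=
      sum_nonneg fun _ _ => by positivity
    positivity
  · exact (not_le.1 h1).le

end MatchDensity

namespace MatchDensity

open Finset

/-! ### Most integers have many large prime factors -/

/-- A consequence of the divergence of `∑ 1 / p`. -/
lemma exists_primes_prod_le (L : ℕ) {ε : ℝ} (hε : 0 < ε) :
    ∃ B : Finset ℕ, (∀ p ∈ B, p.Prime ∧ L < p) ∧ ∏ p ∈ B, (1 - (p : ℝ)⁻¹) ≤ ε := by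
  classical
  set f : ℕ → ℝ := Set.indicator {p | p.Prime} (fun n : ℕ => (1 : ℝ) / n) with hf
  have hf0 : ∀ n, 0 ≤ f n := Set.indicator_nonneg fun _ _ => by positivity
  have hdiv := (not_summable_iff_tendsto_nat_atTop_of_nonneg hf0).1
    not_summable_one_div_on_primes
  obtain ⟨Y, hLY, hY⟩ := ((Filter.eventually_ge_atTop (L + 1)).and
    (hdiv.eventually_ge_atTop (∑ i ∈ range (L + 1), f i - Real.log ε))).exists
  refine ⟨(Ico (L + 1) Y).filter Nat.Prime, fun p hp => ?_, ?_⟩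
  · obtain ⟨h1, h2⟩ := mem_filter.1 hp
    have := mem_Ico.1 h1
    exact ⟨h2, by omega⟩
  · have h1 : ∏ p ∈ (Ico (L + 1) Y).filter Nat.Prime, (1 - (p : ℝ)⁻¹)
        ≤ ∏ p ∈ (Ico (L + 1) Y).filter Nat.Prime, Real.exp (-(p : ℝ)⁻¹) := by
      refine prod_le_prod (fun p hp => ?_) fun p hp => ?_
      · have : (1 : ℝ) ≤ p := by exact_mod_cast (mem_filter.1 hp).2.one_le
        have := inv_le_one_of_one_le₀ this
        linarith
      · have := Real.add_one_le_exp (-(p : ℝ)⁻¹)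
        linarith
    refine h1.trans ?_
    rw [← Real.exp_sum, sum_neg_distrib]
    have h2 : ∑ p ∈ (Ico (L + 1) Y).filter Nat.Prime, (p : ℝ)⁻¹ = ∑ p ∈ Ico (L + 1) Y, f p := by
      rw [sum_filter]
      refine sum_congr rfl fun p _ => ?_
      simp [hf, Set.indicator_apply]
    rw [h2, sum_Ico_eq_sub _ hLY]
    calc _ ≤ Real.exp (Real.log ε) := Real.exp_le_exp.2 (by linarith)
      _ = ε := Real.exp_log hε

lemma card_coprime_prod_le {B : Finset ℕ} (hB : ∀ p ∈ B, p.Prime) (x : ℕ) :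
    (#{n ∈ Ioc 0 x | Nat.Coprime (∏ p ∈ B, p) n} : ℝ)
      ≤ (∏ p ∈ B, (1 - (p : ℝ)⁻¹)) * x + ((∏ p ∈ B, p : ℕ) : ℝ) := by
  set W := ∏ p ∈ B, p with hW
  have hW0 : 0 < W := prod_pos fun p hp => (hB p hp).pos
  have h1 : #{n ∈ Ioc 0 x | Nat.Coprime W n} ≤ W.totient * (x / W + 1) := by
    have h := Nat.Ico_filter_coprime_le 1 x hW0.ne'
    rwa [show Ico 1 (1 + x) = Ioc 0 x by
      ext n
      simp only [mem_Ico, mem_Ioc]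
      omega] at h
  have h2 : (W.totient : ℝ) = W * ∏ p ∈ B, (1 - (p : ℝ)⁻¹) := by
    have h := Nat.totient_eq_mul_prod_factors W
    rw [hW, Nat.primeFactors_prod hB, ← hW] at h
    have h' := congrArg (Rat.cast (K := ℝ)) h
    push_cast at h'
    exact h'
  have h3 : (W.totient : ℝ) ≤ W := by exact_mod_cast Nat.totient_le W
  have hWR : (0 : ℝ) < W := by exact_mod_cast hW0
  calc (#{n ∈ Ioc 0 x | Nat.Coprime W n} : ℝ) ≤ W.totient * ((x / W : ℕ) + 1) := by
        exact_mod_cast h1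
    _ ≤ W.totient * (x / W + 1) := by
        have := Nat.cast_div_le (α := ℝ) (m := x) (n := W)
        exact mul_le_mul_of_nonneg_left (by linarith) (Nat.cast_nonneg _)
    _ = (∏ p ∈ B, (1 - (p : ℝ)⁻¹)) * x + W.totient := by
        rw [mul_add, mul_one]
        congr 1
        rw [h2]
        field_simp
    _ ≤ _ := by linarith

/-- For every `M`, all but a set of density zero of the integers have at least `M` prime factors
exceeding `L`. -/
theorem exists_card_few_primes_le (M : ℕ) : ∀ (L : ℕ) {δ : ℝ}, 0 < δ → ∃ C : ℝ, ∀ x : ℕ,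
    (#{n ∈ Ioc 0 x | #{p ∈ n.primeFactors | L < p} < M} : ℝ) ≤ δ * x + C := by
  induction M with
  | zero =>
    intro L δ hδ
    exact ⟨0, fun x => by simp; positivity⟩
  | succ M ih =>
    intro L δ hδ
    obtain ⟨B, hB, hprod⟩ := exists_primes_prod_le L (half_pos hδ)
    set L' := max L (B.sup id) with hL'
    obtain ⟨C, hC⟩ := ih L' (half_pos hδ)
    refine ⟨C + ((∏ p ∈ B, p : ℕ) : ℝ), fun x => ?_⟩
    -- If `n` is divisible by some `p ∈ B`, then `L < p ≤ L'`, so at least one prime factor is lost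
    -- in passing from `L` to `L'`.
    have hsub : {n ∈ Ioc 0 x | #{p ∈ n.primeFactors | L < p} < M + 1}
        ⊆ {n ∈ Ioc 0 x | Nat.Coprime (∏ p ∈ B, p) n}
          ∪ {n ∈ Ioc 0 x | #{p ∈ n.primeFactors | L' < p} < M} := by
      intro n hn
      obtain ⟨hn1, hn2⟩ := mem_filter.1 hn
      by_cases hc : Nat.Coprime (∏ p ∈ B, p) n
      · exact mem_union_left _ (mem_filter.2 ⟨hn1, hc⟩)
      · refine mem_union_right _ (mem_filter.2 ⟨hn1, ?_⟩)
        rw [Nat.coprime_prod_left_iff] at hc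
        push Not at hc
        obtain ⟨q, hq, hqn⟩ := hc
        have hqp := (hB q hq).1
        have hqd : q ∣ n := by
          by_contra h
          exact hqn (hqp.coprime_iff_not_dvd.2 h)
        have hqL : q ≤ L' := (le_sup (f := id) hq).trans (le_max_right _ _)
        have hlt : #{p ∈ n.primeFactors | L' < p} < #{p ∈ n.primeFactors | L < p} := by
          refine card_lt_card ((ssubset_iff_of_subset fun p hp => ?_).2 ⟨q, ?_, ?_⟩)
          · obtain ⟨h1, h2⟩ := mem_filter.1 hp
            exact mem_filter.2 ⟨h1, (le_max_left _ _).trans_lt h2⟩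
          · exact mem_filter.2 ⟨Nat.mem_primeFactors.2 ⟨hqp, hqd, by
              have := mem_Ioc.1 hn1
              omega⟩, (hB q hq).2⟩
          · intro h
            have := (mem_filter.1 h).2
            omega
        omega
    have h1 : (#{n ∈ Ioc 0 x | #{p ∈ n.primeFactors | L < p} < M + 1} : ℝ)
        ≤ #{n ∈ Ioc 0 x | Nat.Coprime (∏ p ∈ B, p) n}
          + #{n ∈ Ioc 0 x | #{p ∈ n.primeFactors | L' < p} < M} := by
      exact_mod_cast (card_le_card hsub).trans (card_union_le _ _)
    have h2 := card_coprime_prod_le (fun p hp => (hB p hp).1) x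
    have h3 := hC x
    have h4 := mul_le_mul_of_nonneg_right hprod (Nat.cast_nonneg (α := ℝ) x)
    linarith

end MatchDensity

namespace MatchDensity

open Finset

/-! ### The density of matchable integers -/

lemma tendsto_prod_alphaConst :
    Filter.Tendsto (fun K : ℕ => ∏ p ∈ (range (K + 1)).filter Nat.Prime, (1 - 1 / (p : ℝ) ^ p))
      Filter.atTop (nhds alphaConst) := by
  have hsum : Summable fun p : Nat.Primes => -(1 / ((p : ℕ) : ℝ) ^ (p : ℕ)) := by
    refine Summable.neg (Summable.of_nonneg_of_le (fun _ => by positivity) (fun p => ?_)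
      ((Real.summable_one_div_nat_pow.2 (by norm_num : 1 < 2)).comp_injective
        (Subtype.val_injective (p := Nat.Prime))))
    have h1 : (1 : ℝ) ≤ ((p : ℕ) : ℝ) := by exact_mod_cast p.2.one_le
    exact one_div_le_one_div_of_le (by positivity) (pow_le_pow_right₀ h1 p.2.two_le)
  have hmul := (Real.multipliable_one_add_of_summable hsum).hasProd
  have heq : (∏' p : Nat.Primes, (1 + -(1 / ((p : ℕ) : ℝ) ^ (p : ℕ)))) = alphaConst := by
    simp only [← sub_eq_add_neg]
    rfl
  rw [heq] at hmul
  have hfin : Filter.Tendsto (fun K : ℕ => ((range (K + 1)).subtype Nat.Prime : Finset Nat.Primes))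
      Filter.atTop Filter.atTop := by
    refine Filter.tendsto_atTop_finset_of_monotone ?_ fun p => ⟨p, ?_⟩
    · intro a b hab
      exact subtype_mono (range_mono (by omega))
    · exact mem_subtype.2 (mem_range.2 (Nat.lt_succ_self _))
  refine (hmul.comp hfin).congr fun K => ?_
  simp only [Function.comp, ← sub_eq_add_neg]
  exact prod_subtype_eq_prod_filter (s := range (K + 1)) (p := Nat.Prime)
    fun p : ℕ => 1 - 1 / (p : ℝ) ^ p

lemma tendsto_sqrt_div :
    Filter.Tendsto (fun N : ℕ => √((N : ℝ) + 1) / (2 * N + 1)) Filter.atTop (nhds 0) := by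
  have h1 : Filter.Tendsto (fun N : ℕ => (√((N : ℝ) + 1))⁻¹) Filter.atTop (nhds 0) :=
    (Real.tendsto_sqrt_atTop.comp
      (Filter.tendsto_atTop_add_const_right _ _ tendsto_natCast_atTop_atTop)).inv_tendsto_atTop
  refine squeeze_zero (fun _ => by positivity) (fun N => ?_) h1
  have h0 : (0 : ℝ) ≤ N := Nat.cast_nonneg N
  rw [div_le_iff₀ (by positivity), inv_mul_eq_div, le_div_iff₀ (by positivity),
    Real.mul_self_sqrt (by positivity)]
  linarith

/-- The heart of the density computation: up to `O(δ) x + O(1)` exceptions, an integer `n ≤ x` is matchable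
if and only if `p ^ p ∤ n` for all primes `p ≤ K`. -/
theorem exists_bound {δ : ℝ} (hδ : 0 < δ) {K : ℕ} (hK : 3 ≤ K) (hKδ : 1 / (K : ℝ) ≤ δ) :
    ∃ C : ℝ, ∀ (T : Finset ℕ) (x : ℕ), (∀ n, n ∈ T ↔ n ∈ Ioc 0 x ∧ Matchable n) →
      |(T.card : ℝ) - (∏ p ∈ (range (K + 1)).filter Nat.Prime, (1 - 1 / (p : ℝ) ^ p)) * x|
        ≤ 3 * δ * x + C := by
  classical
  set c : ℝ := 2 * K * K.factorial * K ^ K with hc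
  have hc0 : 0 ≤ c := by positivity
  obtain ⟨N, hNK, hN⟩ := ((Filter.eventually_ge_atTop K).and
    ((tendsto_sqrt_div.const_mul c).eventually_le_const (u := δ) (by simpa using hδ))).exists
  set L := 2 * N + 1 with hL
  have hKL : K ≤ L := by omega
  obtain ⟨C₁, hC₁⟩ := exists_card_pow_free_bound ((range (K + 1)).filter Nat.Prime)
    fun p hp => (mem_filter.1 hp).2
  obtain ⟨C₂, hC₂⟩ := exists_card_few_primes_le (2 * K * L.factorial) L hδ
  refine ⟨C₁ + C₂, fun T x hT => ?_⟩
  set A := {n ∈ Ioc 0 x | ∀ p ∈ (range (K + 1)).filter Nat.Prime, ¬ p ^ p ∣ n} with hA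
  set B₁ := {n ∈ Ioc 0 x | ∃ p, p.Prime ∧ K < p ∧ p ^ 2 ∣ n} with hB₁
  set B₂ := (Ioc 0 x).filter fun n : ℕ =>
    ¬ (c * 2 ^ (n.primeFactors.filter fun p => K < p ∧ p ≤ 2 * N + 1).card
      * ∑ t ∈ n.divisors.filter
        (fun t : ℕ => 2 * N + 1 < t ∧ Nat.Coprime t (2 * N + 1).factorial), 1 / (t : ℝ) ≤ 1)
    with hB₂
  set B₃ := {n ∈ Ioc 0 x | #{p ∈ n.primeFactors | L < p} < 2 * K * L.factorial} with hB₃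
  have hfew : ∀ n ∈ Ioc 0 x, n ∉ B₃ →
      2 * K * L.factorial ≤ 2 ^ (n.primeFactors.filter fun p => L < p).card := by
    intro n hn h
    have : 2 * K * L.factorial ≤ #{p ∈ n.primeFactors | L < p} := by
      by_contra h'
      exact h (mem_filter.2 ⟨hn, not_le.1 h'⟩)
    exact this.trans Nat.lt_two_pow_self.le
  have hTA : T ⊆ A ∪ B₃ := by
    intro n hn
    obtain ⟨hn1, hn2⟩ := (hT n).1 hn
    by_cases h3 : n ∈ B₃
    · exact mem_union_right _ h3
    · refine mem_union_left _ (mem_filter.2 ⟨hn1, fun p hp hpn => ?_⟩)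
      obtain ⟨hp1, hp2⟩ := mem_filter.1 hp
      exact not_matchable_of_conditions hKL (mem_Ioc.1 hn1).1.ne' hp2
        (Nat.lt_succ_iff.1 (mem_range.1 hp1)) hpn (hfew n hn1 h3) hn2
  have hAT : A ⊆ T ∪ B₁ ∪ B₂ ∪ B₃ := by
    intro n hn
    obtain ⟨hn1, hn2⟩ := mem_filter.1 hn
    by_cases h1 : n ∈ B₁
    · exact mem_union_left _ (mem_union_left _ (mem_union_right _ h1))
    by_cases h2 : n ∈ B₂
    · exact mem_union_left _ (mem_union_right _ h2)
    by_cases h3 : n ∈ B₃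
    · exact mem_union_right _ h3
    refine mem_union_left _ (mem_union_left _ (mem_union_left _ ((hT n).2 ⟨hn1, ?_⟩)))
    refine matchable_of_conditions (K := K) (L := L) hK hKL (mem_Ioc.1 hn1).1.ne' ?_ ?_ ?_
      (hfew n hn1 h3)
    · exact fun p hp hpK => hn2 p (mem_filter.2 ⟨mem_range.2 (by omega), hp⟩)
    · exact fun p hp hpK hpn => h1 (mem_filter.2 ⟨hn1, p, hp, hpK, hpn⟩)
    · by_contra h
      exact h2 (mem_filter.2 ⟨hn1, h⟩)
  have hx : (0 : ℝ) ≤ x := Nat.cast_nonneg x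
  have b1 : (B₁.card : ℝ) ≤ x * (1 / K) := card_sq_dvd_le (by omega) x
  have b2 : (B₂.card : ℝ) ≤ x * (c * (√(N + 1) / (2 * N + 1))) :=
    card_bad_le (by omega) c hc0 x
  have b3 : (B₃.card : ℝ) ≤ δ * x + C₂ := hC₂ x
  have b1' := mul_le_mul_of_nonneg_left hKδ hx
  have b2' := mul_le_mul_of_nonneg_left hN hx
  have bA := abs_le.1 (hC₁ x)
  have c1 : (T.card : ℝ) ≤ A.card + B₃.card := by
    exact_mod_cast (card_le_card hTA).trans (card_union_le _ _)
  have c2 : (A.card : ℝ) ≤ T.card + B₁.card + B₂.card + B₃.card := by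
    have h := card_le_card hAT
    have h1 := card_union_le (T ∪ B₁ ∪ B₂) B₃
    have h2 := card_union_le (T ∪ B₁) B₂
    have h3 := card_union_le T B₁
    exact_mod_cast (by omega : A.card ≤ T.card + B₁.card + B₂.card + B₃.card)
  have hδx : 0 ≤ δ * x := by positivity
  rw [abs_le]
  constructor <;> linarith

end MatchDensity

open Classical in
theorem stmt_13 :
    Filter.Tendsto
      (fun x : ℕ =>
        (((Finset.Icc 1 x).filter (fun n => Matchable n)).card : ℝ) / (x : ℝ))
      Filter.atTop (nhds alphaConst) := by
  rw [Metric.tendsto_atTop']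
  intro ε hε
  have hδ : 0 < ε / 5 := by positivity
  obtain ⟨K, hK3, hK1, hK2⟩ := ((Filter.eventually_ge_atTop 3).and
    ((tendsto_one_div_atTop_nhds_zero_nat.eventually_le_const hδ).and
      (Metric.tendsto_nhds.1 MatchDensity.tendsto_prod_alphaConst _ hδ))).exists
  obtain ⟨C, hC⟩ := MatchDensity.exists_bound hδ hK3 hK1
  obtain ⟨X, hX⟩ := exists_nat_gt (C / (ε / 5))
  refine ⟨X, fun x hx => ?_⟩
  have h := hC ((Finset.Icc 1 x).filter fun n => Matchable n) x fun n => by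
    simp [Nat.succ_le_iff]
  have hx0 : (0 : ℝ) < x := by exact_mod_cast (Nat.zero_le X).trans_lt hx
  have hCx : C < ε / 5 * x := by
    have h1 : (X : ℝ) < x := by exact_mod_cast hx
    have h2 := (div_lt_iff₀ hδ).1 (hX.trans h1)
    linarith
  rw [Real.dist_eq] at hK2 ⊢
  set a := ∏ p ∈ (Finset.range (K + 1)).filter Nat.Prime, (1 - 1 / (p : ℝ) ^ p)
  set t : ℝ := (((Finset.Icc 1 x).filter (fun n => Matchable n)).card : ℝ)
  have h1 : |t / x - a| < 4 * (ε / 5) := by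
    rw [show t / x - a = (t - a * x) / x by field_simp, abs_div, abs_of_pos hx0, div_lt_iff₀ hx0]
    linarith
  calc |t / x - alphaConst| ≤ |t / x - a| + |a - alphaConst| := abs_sub_le _ _ _
    _ < ε := by linarith
end

section
/- The set of M-numbers has asymptotic density α, i.e., #{n ≤ x : n is an M-number}/x → α as x → ∞, where α = ∏_p (1 − p^{−p}) over all primes p. -/
/-!
For a finite set `S` of primes, let `A(S, x)` count the `n ≤ x` divisible by no `p ^ p` with `p ∈ S`.
Adding a prime `q` to `S` removes the multiples `q ^ q * m`, and since `q ^ q` is coprime to the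
other moduli, `A(S ∪ {q}, x) = A(S, x) - A(S, ⌊x / q ^ q⌋)`. By induction
`A(S, x) = x * ∏_{p ∈ S} (1 - p ^ (-p)) + O_S(1)` (`sieveCount_bound`).

The integers counted by `A(S, x)` that are not M-numbers are multiples of `p ^ p` for some prime
`p ∉ S` with `p ≤ x`, so there are at most `x * ∑_{p ∉ S} p ^ (-p)` of them (`sieveCount_sub_le`).
As `∑ p ^ (-p)` converges, this is small relative to `x`, uniformly in `x`, for `S` large, and the
finite products tend to `α`.
-/

/-- An M-number is a positive integer not divisible by `p^p` for any prime `p`. -/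
def IsMNumber (n : ℕ) : Prop := ∀ p : ℕ, p.Prime → ¬ p ^ p ∣ n

open Classical in
/-- The number of `1 ≤ n ≤ x` that are divisible by no `p ^ p` with `p ∈ S`. -/
noncomputable def sieveCount (S : Finset Nat.Primes) (x : ℕ) : ℕ :=
  ((Finset.Icc 1 x).filter (fun n => ∀ p ∈ S, ¬ (p : ℕ) ^ (p : ℕ) ∣ n)).card

open Classical in
/-- Multiples `q ^ q * m` of `q ^ q` survive the sieve by `S ∌ q` exactly when `m` does. -/
lemma sieveCount_insert (S : Finset Nat.Primes) (q : Nat.Primes) (hq : q ∉ S) (x : ℕ) :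
    sieveCount (insert q S) x + sieveCount S (x / (q : ℕ) ^ (q : ℕ)) = sieveCount S x := by
  have hQ : 0 < (q : ℕ) ^ (q : ℕ) := pow_pos q.2.pos _
  have himg : sieveCount S (x / (q : ℕ) ^ (q : ℕ)) =
      (((Finset.Icc 1 x).filter (fun n => ∀ p ∈ S, ¬ (p : ℕ) ^ (p : ℕ) ∣ n)).filter
        (fun n => (q : ℕ) ^ (q : ℕ) ∣ n)).card := by
    unfold sieveCount
    have hdvd : ∀ p ∈ S, ∀ m : ℕ,
        (p : ℕ) ^ (p : ℕ) ∣ (q : ℕ) ^ (q : ℕ) * m ↔ (p : ℕ) ^ (p : ℕ) ∣ m := by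
      intro p hp m
      have hne : (p : ℕ) ≠ q := fun h => hq (Subtype.ext h ▸ hp)
      exact (Nat.Coprime.pow _ _ ((Nat.coprime_primes p.2 q.2).2 hne)).dvd_mul_left
    refine Finset.card_bij (fun m _ => (q : ℕ) ^ (q : ℕ) * m) ?_ ?_ ?_
    · intro m hm
      simp only [Finset.mem_filter, Finset.mem_Icc] at hm ⊢
      obtain ⟨⟨h1, h2⟩, h3⟩ := hm
      refine ⟨⟨⟨Nat.mul_pos hQ h1, ?_⟩, ?_⟩, dvd_mul_right _ _⟩
      · rw [mul_comm]
        exact (Nat.le_div_iff_mul_le hQ).1 h2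
      · intro p hp
        rw [hdvd p hp]
        exact h3 p hp
    · intro a _ b _ h
      exact Nat.eq_of_mul_eq_mul_left hQ h
    · intro n hn
      simp only [Finset.mem_filter, Finset.mem_Icc] at hn
      obtain ⟨⟨⟨h1, h2⟩, h3⟩, m, rfl⟩ := hn
      refine ⟨m, ?_, rfl⟩
      simp only [Finset.mem_filter, Finset.mem_Icc]
      refine ⟨⟨Nat.pos_of_mul_pos_left h1, ?_⟩, ?_⟩
      · rw [Nat.le_div_iff_mul_le hQ, mul_comm]
        exact h2
      · intro p hp
        rw [← hdvd p hp]
        exact h3 p hp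
  rw [himg]
  unfold sieveCount
  rw [← Finset.card_filter_add_card_filter_not
    (s := (Finset.Icc 1 x).filter (fun n => ∀ p ∈ S, ¬ (p : ℕ) ^ (p : ℕ) ∣ n))
    (fun n => (q : ℕ) ^ (q : ℕ) ∣ n), add_comm]
  congr 2
  ext n
  simp only [Finset.mem_filter, Finset.mem_insert, forall_eq_or_imp]
  tauto

lemma sieveCount_bound (S : Finset Nat.Primes) :
    ∃ C : ℝ, ∀ x : ℕ, |(sieveCount S x : ℝ) -
      x * ∏ p ∈ S, (1 - 1 / ((p : ℕ) : ℝ) ^ (p : ℕ))| ≤ C := by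
  classical
  induction S using Finset.induction_on with
  | empty => exact ⟨0, fun x => by simp [sieveCount]⟩
  | insert q S hq ih =>
    obtain ⟨C, hC⟩ := ih
    set P : ℝ := ∏ p ∈ S, (1 - 1 / ((p : ℕ) : ℝ) ^ (p : ℕ)) with hP
    refine ⟨C + C + |P|, fun x => ?_⟩
    rw [Finset.prod_insert hq, ← hP]
    have h := sieveCount_insert S q hq x
    have h' : (sieveCount (insert q S) x : ℝ) =
        sieveCount S x - sieveCount S (x / (q : ℕ) ^ (q : ℕ)) := by
      rw [← h]; push_cast; ring
    have hQ : 0 < (q : ℕ) ^ (q : ℕ) := pow_pos q.2.pos _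
    have hQr : (0 : ℝ) < ((q : ℕ) : ℝ) ^ (q : ℕ) := by exact_mod_cast hQ
    have h1 := hC x
    have h2 := hC (x / (q : ℕ) ^ (q : ℕ))
    set y : ℕ := x / (q : ℕ) ^ (q : ℕ) with hy
    -- rounding down `x / q ^ q` costs at most one
    have h3 : |(y : ℝ) - x / ((q : ℕ) : ℝ) ^ (q : ℕ)| ≤ 1 := by
      have a1 : (y : ℝ) ≤ x / ((q : ℕ) : ℝ) ^ (q : ℕ) := by
        have := @Nat.cast_div_le ℝ _ _ _ x ((q : ℕ) ^ (q : ℕ))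
        push_cast at this
        exact this
      have a2 : (x : ℝ) / ((q : ℕ) : ℝ) ^ (q : ℕ) ≤ y + 1 := by
        rw [div_le_iff₀ hQr]
        have := Nat.lt_mul_div_succ x hQ
        rw [mul_comm] at this
        exact_mod_cast this.le
      rw [abs_le]; constructor <;> linarith
    have key : (sieveCount (insert q S) x : ℝ) -
        x * ((1 - 1 / ((q : ℕ) : ℝ) ^ (q : ℕ)) * P) =
        (sieveCount S x - x * P) - (sieveCount S y - y * P)
          - (y - x / ((q : ℕ) : ℝ) ^ (q : ℕ)) * P := by
      rw [h']; ring
    rw [key]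
    have h4 : |((y : ℝ) - x / ((q : ℕ) : ℝ) ^ (q : ℕ)) * P| ≤ |P| := by
      rw [abs_mul]
      exact mul_le_of_le_one_left (abs_nonneg _) h3
    calc _ ≤ _ := abs_sub _ _
      _ ≤ _ := add_le_add ((abs_sub _ _).trans (add_le_add h1 h2)) h4

lemma summable_primes_pow : Summable (fun p : Nat.Primes => 1 / ((p : ℕ) : ℝ) ^ (p : ℕ)) := by
  have h2 : Summable (fun p : Nat.Primes => 1 / ((p : ℕ) : ℝ) ^ 2) :=
    (Real.summable_one_div_nat_pow.2 one_lt_two).comp_injective Subtype.val_injective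
  refine Summable.of_nonneg_of_le (fun p => by positivity) (fun p => ?_) h2
  have hp : (0 : ℝ) < (p : ℕ) := by exact_mod_cast p.2.pos
  have hp1 : (1 : ℝ) ≤ (p : ℕ) := by exact_mod_cast p.2.one_lt.le
  exact one_div_le_one_div_of_le (by positivity) (pow_le_pow_right₀ hp1 p.2.two_le)

open Classical in
/-- The witness `T` is the set of primes `p ≤ x` outside `S`: a larger prime has no multiple of
`p ^ p` up to `x`. -/
lemma sieveCount_sub_le (S : Finset Nat.Primes) (x : ℕ) :
    ∃ T : Finset Nat.Primes, Disjoint T S ∧ (sieveCount S x : ℝ) ≤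
      ((Finset.Icc 1 x).filter (fun n => IsMNumber n)).card
        + x * ∑ p ∈ T, 1 / ((p : ℕ) : ℝ) ^ (p : ℕ) := by
  set U : Finset Nat.Primes :=
    (Finset.range (x + 1)).preimage (fun p : Nat.Primes => (p : ℕ))
      Subtype.val_injective.injOn
  refine ⟨U \ S, Finset.sdiff_disjoint, ?_⟩
  have hsub : (Finset.Icc 1 x).filter (fun n => ∀ p ∈ S, ¬ (p : ℕ) ^ (p : ℕ) ∣ n) ⊆
      (Finset.Icc 1 x).filter (fun n => IsMNumber n) ∪
      (U \ S).biUnion (fun p => (Finset.Ioc 0 x).filter (fun n => (p : ℕ) ^ (p : ℕ) ∣ n)) := by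
    intro n hn
    simp only [Finset.mem_filter, Finset.mem_Icc] at hn
    obtain ⟨⟨h1, h2⟩, h3⟩ := hn
    by_cases hM : IsMNumber n
    · exact Finset.mem_union_left _ (by simp [h1, h2, hM])
    · unfold IsMNumber at hM
      push Not at hM
      obtain ⟨p, hp, hd⟩ := hM
      refine Finset.mem_union_right _ (Finset.mem_biUnion.2 ⟨⟨p, hp⟩, ?_, ?_⟩)
      · refine Finset.mem_sdiff.2 ⟨?_, fun hS => h3 _ hS hd⟩
        have : p ≤ p ^ p := Nat.le_self_pow hp.ne_zero p
        have := Nat.le_of_dvd h1 hd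
        exact Finset.mem_preimage.2 (Finset.mem_range.2 (show p < x + 1 by omega))
      · simp only [Finset.mem_filter, Finset.mem_Ioc]
        exact ⟨⟨h1, h2⟩, hd⟩
  have hcard := (Finset.card_le_card hsub).trans ((Finset.card_union_le _ _).trans
    (Nat.add_le_add_left Finset.card_biUnion_le _))
  simp only [Nat.Ioc_filter_dvd_card_eq_div] at hcard
  have hcast : (sieveCount S x : ℝ) ≤ ((Finset.Icc 1 x).filter (fun n => IsMNumber n)).card +
      ∑ p ∈ U \ S, ((x / (p : ℕ) ^ (p : ℕ) : ℕ) : ℝ) := by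
    unfold sieveCount
    exact_mod_cast hcard
  refine hcast.trans ?_
  rw [Finset.mul_sum]
  gcongr with p hp
  rw [mul_one_div]
  have := @Nat.cast_div_le ℝ _ _ _ x ((p : ℕ) ^ (p : ℕ))
  push_cast at this
  exact this

open Classical in
lemma le_sieveCount (S : Finset Nat.Primes) (x : ℕ) :
    ((Finset.Icc 1 x).filter (fun n => IsMNumber n)).card ≤ sieveCount S x := by
  unfold sieveCount
  exact Finset.card_le_card
    (Finset.monotone_filter_right _ (fun n _ hn p _ => hn p p.2))

open Classical in
theorem stmt_14 :
    Filter.Tendsto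
      (fun x : ℕ =>
        (((Finset.Icc 1 x).filter (fun n => IsMNumber n)).card : ℝ) / (x : ℝ))
      Filter.atTop (nhds alphaConst) := by
  have hsum := summable_primes_pow
  have hprod : Filter.Tendsto
      (fun S : Finset Nat.Primes => ∏ p ∈ S, (1 - 1 / ((p : ℕ) : ℝ) ^ (p : ℕ)))
      Filter.atTop (nhds alphaConst) := by
    have h : Multipliable (fun p : Nat.Primes => 1 + -(1 / ((p : ℕ) : ℝ) ^ (p : ℕ))) :=
      Real.multipliable_one_add_of_summable hsum.neg
    simp only [← sub_eq_add_neg] at h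
    exact h.hasProd
  rw [Metric.tendsto_atTop]
  intro ε hε
  have hε3 : 0 < ε / 3 := by positivity
  obtain ⟨S₁, hS₁⟩ := summable_iff_vanishing_norm.1 hsum (ε / 3) hε3
  obtain ⟨S₂, hS₂⟩ := Metric.tendsto_atTop.1 hprod (ε / 3) hε3
  -- `S` is large enough both for the tail of the sum and for the partial product
  set S := S₁ ∪ S₂
  have hPα := hS₂ S Finset.subset_union_right
  obtain ⟨C, hC⟩ := sieveCount_bound S
  set P : ℝ := ∏ p ∈ S, (1 - 1 / ((p : ℕ) : ℝ) ^ (p : ℕ))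
  obtain ⟨N, hN⟩ := exists_nat_gt (C / (ε / 3))
  refine ⟨N + 1, fun x hx => ?_⟩
  have hNx : (N : ℝ) + 1 ≤ x := by exact_mod_cast hx
  have hx0 : (0 : ℝ) < x := by
    have : (0 : ℝ) ≤ N := Nat.cast_nonneg N
    linarith
  have hCx : C < ε / 3 * x := by
    rw [div_lt_iff₀ hε3] at hN
    nlinarith
  obtain ⟨T, hTS, hT⟩ := sieveCount_sub_le S x
  have htail := hS₁ T (hTS.mono_right Finset.subset_union_left)
  have htail' := (abs_lt.1 htail).2
  have hle : (((Finset.Icc 1 x).filter (fun n => IsMNumber n)).card : ℝ) ≤ sieveCount S x := by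
    exact_mod_cast le_sieveCount S x
  have hCx' := abs_le.1 (hC x)
  rw [Real.dist_eq, abs_lt] at hPα ⊢
  have hmul := mul_lt_mul_of_pos_left htail' hx0
  have hα1 := mul_lt_mul_of_pos_left hPα.1 hx0
  have hα2 := mul_lt_mul_of_pos_left hPα.2 hx0
  constructor
  · rw [lt_sub_iff_add_lt, lt_div_iff₀ hx0]
    nlinarith
  · rw [sub_lt_iff_lt_add, div_lt_iff₀ hx0]
    nlinarith
end

section
/- Every strongly matchable positive integer is an M-number. -/
/-!
Suppose `p ^ p ∣ n`, and let `C` be the set of divisors of `n` not divisible by `p`, with `m = |C|`.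
The products `c * p ^ i` with `c ∈ C` and `i ≤ p` are distinct divisors of `n`, so
`m * (p + 1) ≤ τ(n)`. Hence the progression `p, p + 1, ..., p + τ(n) - 1` contains the `m + 1`
multiples `p, 2p, ..., (m + 1)p` of `p`. A coprime matching has to pair each of these with an element
of `C`, and `C` has only `m` elements.
-/

/-- A coprime matching from a finite set `A` of positive integers to a finite set `B`
is a bijection `ψ : A → B` with `gcd(a, ψ(a)) = 1` for every `a ∈ A`. -/
def CoprimeMatching (A B : Finset ℕ) : Prop :=
  ∃ ψ : ℕ → ℕ, Set.BijOn ψ ↑A ↑B ∧ ∀ a ∈ A, Nat.gcd a (ψ a) = 1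

/-- A positive integer `n` is strongly matchable if for every arithmetic progression
`{a, a+d, ..., a+(τ(n)-1)d}` of `τ(n)` positive integers with `gcd(a,d) = 1`, there is
a coprime matching from the set of divisors of `n` to it. -/
def StronglyMatchable (n : ℕ) : Prop :=
  ∀ a d : ℕ, 0 < a → 0 < d → Nat.gcd a d = 1 →
    CoprimeMatching n.divisors
      ((Finset.range n.divisors.card).image (fun i => a + i * d))

/-- If `p ^ p ∣ n`, the proportion of divisors of `n` prime to `p` is at most `1 / (p + 1)`. -/
lemma card_divisors_not_dvd_mul_le {n p : ℕ} (hn : 0 < n) (hp : p.Prime) (hpn : p ^ p ∣ n) :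
    (n.divisors.filter (fun c => ¬ p ∣ c)).card * (p + 1) ≤ n.divisors.card := by
  rw [← Finset.card_range (p + 1), ← Finset.card_product]
  apply Finset.card_le_card_of_injOn (fun x => x.1 * p ^ x.2)
  · rintro ⟨c, i⟩ hx
    simp only [Finset.coe_product, Set.mem_prod, Finset.mem_coe, Finset.mem_filter,
      Nat.mem_divisors, Finset.mem_range] at hx
    obtain ⟨⟨⟨hcn, -⟩, hpc⟩, hi⟩ := hx
    simp only [Finset.mem_coe, Nat.mem_divisors]
    refine ⟨Nat.Coprime.mul_dvd_of_dvd_of_dvd ?_ hcn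
      ((pow_dvd_pow p (by omega)).trans hpn), hn.ne'⟩
    exact (((Nat.Prime.coprime_iff_not_dvd hp).2 hpc).pow_left i).symm
  · rintro ⟨c, i⟩ hx ⟨c', j⟩ hy hxy
    simp only [Finset.coe_product, Set.mem_prod, Finset.mem_coe, Finset.mem_filter,
      Nat.mem_divisors, Finset.mem_range] at hx hy
    have hc := hx.1.2
    have hc' := hy.1.2
    simp only at hxy
    have hp0 : ∀ k, 0 < p ^ k := fun k => pow_pos hp.pos k
    -- The exponent of `p` in `c * p ^ i` is exactly `i`, because `p ∤ c`.
    have key : ∀ u v k l : ℕ, ¬ p ∣ u → u * p ^ k = v * p ^ l → l ≤ k := by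
      intro u v k l hu h
      by_contra! hlt
      obtain ⟨t, rfl⟩ := Nat.exists_eq_add_of_lt hlt
      apply hu
      have : u = v * p ^ t * p := by
        apply Nat.eq_of_mul_eq_mul_right (hp0 k)
        rw [h]; ring
      exact this ▸ dvd_mul_left _ _
    have hij : i = j := le_antisymm (key _ _ _ _ hc' hxy.symm) (key _ _ _ _ hc hxy)
    subst hij
    rw [Nat.eq_of_mul_eq_mul_right (hp0 i) hxy]

theorem stmt_15 (n : ℕ) (hn : 0 < n) (h : StronglyMatchable n) : IsMNumber n := by
  intro p hp hpn
  obtain ⟨ψ, hψ, hcop⟩ := h p 1 hp.pos one_pos (Nat.gcd_one_right p)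
  have hle := card_divisors_not_dvd_mul_le hn hp hpn
  set C := n.divisors.filter (fun c => ¬ p ∣ c) with hC
  have hCpos : 0 < C.card := Finset.card_pos.2
    ⟨1, by simp [hC, hn.ne', hp.one_lt.ne']⟩
  have hsub : (Finset.range (C.card + 1)).image (fun j => p + p * j) ⊆ C.image ψ := by
    intro y hy
    obtain ⟨j, hj, rfl⟩ := Finset.mem_image.1 hy
    have hj' : j ≤ C.card := by simpa [Nat.lt_succ_iff] using hj
    have hlt : p * j < n.divisors.card := by
      have := Nat.mul_le_mul_left p hj'
      nlinarith
    obtain ⟨x, hx, hxy⟩ := hψ.surjOn (Finset.mem_coe.2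
      (Finset.mem_image.2 ⟨p * j, Finset.mem_range.2 hlt, by rw [mul_one]⟩ :
        p + p * j ∈ (Finset.range n.divisors.card).image (fun i => p + i * 1)))
    refine Finset.mem_image.2 ⟨x, Finset.mem_filter.2 ⟨hx, fun hpx => ?_⟩, hxy⟩
    have hg := hcop x hx
    rw [hxy] at hg
    exact hp.one_lt.ne' (Nat.dvd_one.1 (hg ▸ Nat.dvd_gcd hpx ⟨1 + j, by ring⟩))
  have hcard := (Finset.card_le_card hsub).trans Finset.card_image_le
  rw [Finset.card_image_of_injective, Finset.card_range] at hcard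
  · omega
  · intro i j hij
    exact Nat.eq_of_mul_eq_mul_left hp.pos (Nat.add_left_cancel hij)
end

section
/- If n is a strongly matchable positive integer and p is a prime not dividing n, then p^{p−1}·n is strongly matchable. -/
/-- The terms with index `≡ j` modulo `p` admit a coprime matching from the divisors of `n`. -/
lemma exists_matching_residue {n p a d : ℕ} (hp : p.Prime) (hpn : ¬ p ∣ n)
    (h : StronglyMatchable n) (ha : 0 < a) (hd : 0 < d) (had : Nat.gcd a d = 1) (j : ℕ) :
    ∃ g : ℕ → ℕ,
      (∀ m ∈ n.divisors, ∃ k < n.divisors.card, g m = a + (j + p * k) * d) ∧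
      (∀ k < n.divisors.card, ∃ m ∈ n.divisors, g m = a + (j + p * k) * d) ∧
      ∀ m ∈ n.divisors, Nat.Coprime m (g m) := by
  have hjd : Nat.Coprime (a + j * d) d := by
    simpa [Nat.Coprime] using had
  by_cases hj : p ∣ a + j * d
  · obtain ⟨b, hb⟩ := hj
    have hb0 : 0 < b := by
      rcases Nat.eq_zero_or_pos b with rfl | hb0
      · omega
      · exact hb0
    have hbd : Nat.Coprime b d := Nat.Coprime.coprime_dvd_left ⟨p, by rw [hb, mul_comm]⟩ hjd
    have key : ∀ k, p * (b + k * d) = a + (j + p * k) * d := fun k => by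
      rw [mul_add, ← hb]; ring
    obtain ⟨ψ, ⟨hmaps, -, hsurj⟩, hcop⟩ := h b d hb0 hd hbd
    refine ⟨fun m => p * ψ m, fun m hm => ?_, fun k hk => ?_, fun m hm => ?_⟩
    · obtain ⟨k, hk, hkm⟩ := Finset.mem_image.1 (Finset.mem_coe.1 (hmaps hm))
      exact ⟨k, Finset.mem_range.1 hk, by simp only [← hkm, key]⟩
    · obtain ⟨m, hm, hmk⟩ := hsurj
        (Finset.mem_coe.2 (Finset.mem_image.2 ⟨k, Finset.mem_range.2 hk, rfl⟩))
      exact ⟨m, hm, by simp only [hmk, key]⟩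
    · have hpm : Nat.Coprime m p := ((Nat.Prime.coprime_iff_not_dvd hp).2
        fun hpm => hpn (hpm.trans (Nat.dvd_of_mem_divisors hm))).symm
      exact Nat.Coprime.mul_right hpm (hcop m hm)
  · have hcop' : Nat.Coprime (a + j * d) (p * d) :=
      Nat.Coprime.mul_right ((Nat.Prime.coprime_iff_not_dvd hp).2 hj).symm hjd
    have key : ∀ k, a + j * d + k * (p * d) = a + (j + p * k) * d := fun k => by ring
    obtain ⟨ψ, ⟨hmaps, -, hsurj⟩, hcop⟩ :=
      h (a + j * d) (p * d) (by omega) (Nat.mul_pos hp.pos hd) hcop'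
    refine ⟨ψ, fun m hm => ?_, fun k hk => ?_, hcop⟩
    · obtain ⟨k, hk, hkm⟩ := Finset.mem_image.1 (Finset.mem_coe.1 (hmaps hm))
      exact ⟨k, Finset.mem_range.1 hk, by rw [← hkm, key]⟩
    · obtain ⟨m, hm, hmk⟩ := hsurj
        (Finset.mem_coe.2 (Finset.mem_image.2 ⟨k, Finset.mem_range.2 hk, rfl⟩))
      exact ⟨m, hm, by rw [hmk, key]⟩

/-- All multiples of `p` among the terms `a + i * d` have their index in a single class modulo
`p`. -/
lemma exists_bad_residue {p a d : ℕ} (hp : p.Prime) (had : Nat.gcd a d = 1) :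
    ∃ j₀ < p, ∀ j < p, p ∣ a + j * d → j = j₀ := by
  by_cases hex : ∃ j₀ < p, p ∣ a + j₀ * d
  · obtain ⟨j₀, hj₀, hdvd₀⟩ := hex
    refine ⟨j₀, hj₀, fun j hj hdvd => ?_⟩
    have hpd : Nat.Coprime p d := by
      rw [Nat.Prime.coprime_iff_not_dvd hp]
      intro hpd
      have hpa : p ∣ a := (Nat.dvd_add_left (hpd.mul_left j)).1 hdvd
      exact hp.one_lt.ne' (Nat.dvd_one.1 (had ▸ Nat.dvd_gcd hpa hpd))
    have hmod : a + j * d ≡ a + j₀ * d [MOD p] :=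
      ((Nat.modEq_zero_iff_dvd).2 hdvd).trans ((Nat.modEq_zero_iff_dvd).2 hdvd₀).symm
    have hmod' : j ≡ j₀ [MOD p] :=
      Nat.ModEq.cancel_right_of_coprime hpd (Nat.ModEq.add_left_cancel' a hmod)
    exact hmod'.eq_of_lt_of_lt hj hj₀
  · exact ⟨0, hp.pos, fun j hj hdvd => (hex ⟨j, hj, hdvd⟩).elim⟩

lemma card_divisors_pow_pred_mul {n p : ℕ} (hp : p.Prime) (hpn : ¬ p ∣ n) :
    (p ^ (p - 1) * n).divisors.card = p * n.divisors.card := by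
  have hcop : Nat.Coprime (p ^ (p - 1)) n :=
    Nat.Coprime.pow_left _ ((Nat.Prime.coprime_iff_not_dvd hp).2 hpn)
  rw [hcop.card_divisors_mul, Nat.divisors_prime_pow hp]
  simp [Nat.sub_add_cancel hp.one_le]

theorem stmt_16 (n p : ℕ) (hn : 0 < n) (hp : p.Prime) (hpn : ¬ p ∣ n)
    (h : StronglyMatchable n) : StronglyMatchable (p ^ (p - 1) * n) := by
  intro a d ha hd had
  have hcard := card_divisors_pow_pred_mul hp hpn
  choose g hgmaps hgsurj hgcop using exists_matching_residue hp hpn h ha hd had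
  obtain ⟨j₀, hj₀, hbad⟩ := exists_bad_residue hp had
  -- `σ e` is the residue class assigned to the layer `p ^ e * D(n)`; the bad class goes to `e = 0`.
  set σ : Equiv.Perm ℕ := Equiv.swap 0 j₀ with hσ
  have hσ0 : σ 0 = j₀ := Equiv.swap_apply_left 0 j₀
  have hσσ : ∀ e, σ (σ e) = e := Equiv.swap_apply_self 0 j₀
  have hσlt : ∀ e < p, σ e < p := fun e he => by
    rw [hσ, Equiv.swap_apply_def]
    split_ifs
    exacts [hj₀, hp.pos, he]
  set ψ : ℕ → ℕ := fun x => g (σ (x.factorization p)) (x / p ^ x.factorization p) with hψ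
  have hψval : ∀ e, ∀ m ∈ n.divisors, ψ (p ^ e * m) = g (σ e) m := fun e m hm => by
    have hpm : ¬ p ∣ m := fun hpm => hpn (hpm.trans (Nat.dvd_of_mem_divisors hm))
    have hfac : (p ^ e * m).factorization p = e := by
      rw [Nat.factorization_mul (pow_ne_zero _ hp.ne_zero) (Nat.pos_of_mem_divisors hm).ne',
        Finsupp.add_apply, hp.factorization_pow, Finsupp.single_eq_same,
        Nat.factorization_eq_zero_of_not_dvd hpm, add_zero]
    simp only [hψ, hfac, Nat.mul_div_cancel_left m (pow_pos hp.pos e)]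
  have hsplit : ∀ x ∈ (p ^ (p - 1) * n).divisors, ∃ e < p, ∃ m ∈ n.divisors, x = p ^ e * m := by
    intro x hx
    obtain ⟨u, m, hu, hm, rfl⟩ := (Nat.dvd_mul).1 (Nat.dvd_of_mem_divisors hx)
    obtain ⟨e, he, rfl⟩ := (Nat.dvd_prime_pow hp).1 hu
    have := hp.pos
    exact ⟨e, by omega, m, Nat.mem_divisors.2 ⟨hm, hn.ne'⟩, rfl⟩
  have hmaps : Set.MapsTo ψ ↑(p ^ (p - 1) * n).divisors
      ↑((Finset.range (p ^ (p - 1) * n).divisors.card).image (fun i => a + i * d)) := by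
    intro x hx
    obtain ⟨e, he, m, hm, rfl⟩ := hsplit x hx
    obtain ⟨k, hk, hgk⟩ := hgmaps (σ e) m hm
    rw [Finset.mem_coe, hψval e m hm, hgk, hcard]
    refine Finset.mem_image.2 ⟨σ e + p * k, Finset.mem_range.2 ?_, rfl⟩
    have := hσlt e he
    calc σ e + p * k < p * (k + 1) := by rw [mul_add]; omega
      _ ≤ p * n.divisors.card := Nat.mul_le_mul_left p hk
  have hsurj : Set.SurjOn ψ ↑(p ^ (p - 1) * n).divisors
      ↑((Finset.range (p ^ (p - 1) * n).divisors.card).image (fun i => a + i * d)) := by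
    intro y hy
    obtain ⟨i, hi, rfl⟩ := Finset.mem_image.1 (Finset.mem_coe.1 hy)
    rw [hcard, Finset.mem_range] at hi
    obtain ⟨m, hm, hgm⟩ := hgsurj (i % p) (i / p) (Nat.div_lt_of_lt_mul hi)
    have he : σ (i % p) < p := hσlt _ (Nat.mod_lt _ hp.pos)
    refine ⟨p ^ σ (i % p) * m, Finset.mem_coe.2 (Nat.mem_divisors.2 ⟨?_, ?_⟩), ?_⟩
    · exact mul_dvd_mul (pow_dvd_pow p (by omega)) (Nat.dvd_of_mem_divisors hm)
    · exact mul_ne_zero (pow_ne_zero _ hp.ne_zero) hn.ne'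
    · rw [hψval _ m hm, hσσ, hgm, Nat.mod_add_div]
  have hinj : Set.InjOn ψ ↑(p ^ (p - 1) * n).divisors := by
    refine Finset.injOn_of_surjOn_of_card_le ψ hmaps hsurj (le_of_eq ?_)
    rw [Finset.card_image_of_injective _ fun i i' hii' => ?_, Finset.card_range]
    exact Nat.eq_of_mul_eq_mul_right hd (Nat.add_left_cancel hii')
  refine ⟨ψ, ⟨hmaps, hinj, hsurj⟩, fun x hx => ?_⟩
  obtain ⟨e, he, m, hm, rfl⟩ := hsplit x hx
  rw [hψval e m hm]
  refine Nat.Coprime.mul_left ?_ (hgcop (σ e) m hm)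
  rcases Nat.eq_zero_or_pos e with rfl | he0
  · simp
  · refine Nat.Coprime.pow_left e ((Nat.Prime.coprime_iff_not_dvd hp).2 fun hdvd => ?_)
    obtain ⟨k, -, hgk⟩ := hgmaps (σ e) m hm
    have hterm : a + (σ e + p * k) * d = a + σ e * d + p * (k * d) := by ring
    rw [hgk, hterm] at hdvd
    have hbad' : σ e = j₀ :=
      hbad _ (hσlt e he) ((Nat.dvd_add_left (dvd_mul_right p (k * d))).1 hdvd)
    exact he0.ne' (σ.injective (hbad'.trans hσ0.symm))
end

section
/- The lower asymptotic density of the set of strongly matchable positive integers is greater than 4/11, i.e., liminf_{x→∞} #{n ≤ x : n is strongly matchable}/x > 4/11. -/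
section

open Finset

/-! ### Building coprime matchings -/

/-- The terms `a, a + d, ..., a + (k - 1) * d` of an arithmetic progression. -/
def progression (a d k : ℕ) : Finset ℕ := (range k).image (fun i => a + i * d)

lemma mem_progression {a d k t : ℕ} : t ∈ progression a d k ↔ ∃ i < k, a + i * d = t := by
  simp [progression]

lemma CoprimeMatching.union {A A' B B' : Finset ℕ} (h : CoprimeMatching A B)
    (h' : CoprimeMatching A' B') (hA : Disjoint A A') (hB : Disjoint B B') :
    CoprimeMatching (A ∪ A') (B ∪ B') := by
  obtain ⟨f, hf, hfc⟩ := h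
  obtain ⟨g, hg, hgc⟩ := h'
  have hA' : ∀ a ∈ A', a ∉ A := fun a ha h => (Finset.disjoint_left.mp hA h) ha
  have e1 : Set.EqOn (fun a => if a ∈ A then f a else g a) f (A : Set ℕ) := fun a ha => by
    simp [Finset.mem_coe.mp ha]
  have e2 : Set.EqOn (fun a => if a ∈ A then f a else g a) g (A' : Set ℕ) := fun a ha => by
    simp [hA' a ha]
  have b1 := hf.congr e1.symm
  have b2 := hg.congr e2.symm
  refine ⟨fun a => if a ∈ A then f a else g a, ?_, ?_⟩
  · rw [Finset.coe_union, Finset.coe_union]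
    refine b1.union b2 ?_
    rw [Set.injOn_union (by exact_mod_cast hA)]
    refine ⟨b1.injOn, b2.injOn, fun x hx y hy hxy => ?_⟩
    have h1 := b1.mapsTo hx
    have h2 := b2.mapsTo hy
    rw [hxy] at h1
    exact Finset.disjoint_left.mp hB h1 h2
  · intro a ha
    by_cases h : a ∈ A
    · simpa [h] using hfc a h
    · have : a ∈ A' := by simpa [h] using ha
      simpa [h] using hgc a this

lemma CoprimeMatching.mul_left {A B : Finset ℕ} (h : CoprimeMatching A B) {p : ℕ} (hp : 0 < p)
    (hB : ∀ b ∈ B, Nat.Coprime p b) : CoprimeMatching (A.image (p * ·)) B := by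
  obtain ⟨f, hf, hfc⟩ := h
  have hdiv : ∀ a, p * a / p = a := fun a => Nat.mul_div_cancel_left a hp
  refine ⟨fun a => f (a / p), ⟨?_, ?_, ?_⟩, ?_⟩
  · intro a ha
    obtain ⟨b, hb, rfl⟩ := Finset.mem_image.mp (Finset.mem_coe.mp ha)
    simpa only [hdiv] using hf.mapsTo hb
  · intro a ha a' ha' e
    obtain ⟨b, hb, rfl⟩ := Finset.mem_image.mp (Finset.mem_coe.mp ha)
    obtain ⟨c, hc, rfl⟩ := Finset.mem_image.mp (Finset.mem_coe.mp ha')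
    simp only [hdiv] at e
    rw [hf.injOn hb hc e]
  · intro b hb
    obtain ⟨a, ha, rfl⟩ := hf.surjOn hb
    exact ⟨p * a, Finset.mem_coe.mpr (Finset.mem_image_of_mem _ ha), by simp only [hdiv]⟩
  · intro a ha
    obtain ⟨b, hb, rfl⟩ := Finset.mem_image.mp ha
    simp only [hdiv]
    exact Nat.Coprime.mul_left (hB _ (hf.mapsTo hb)) (hfc b hb)

lemma CoprimeMatching.mul_right {A B : Finset ℕ} (h : CoprimeMatching A B) {p : ℕ} (hp : 0 < p)
    (hA : ∀ a ∈ A, Nat.Coprime a p) : CoprimeMatching A (B.image (p * ·)) := by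
  obtain ⟨f, hf, hfc⟩ := h
  refine ⟨fun a => p * f a, ?_, fun a ha => Nat.Coprime.mul_right (hA a ha) (hfc a ha)⟩
  rw [Finset.coe_image]
  exact Set.BijOn.comp ((mul_right_injective₀ hp.ne').injOn.bijOn_image) hf

lemma divisors_prime_mul {p m : ℕ} (hp : p.Prime) (hm : 0 < m) :
    (p * m).divisors = m.divisors ∪ m.divisors.image (p * ·) := by
  ext t
  simp only [Nat.mem_divisors, Finset.mem_union, Finset.mem_image]
  constructor
  · rintro ⟨h, -⟩
    obtain ⟨u, v, hu, hv, rfl⟩ := (Nat.dvd_mul).mp h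
    rcases (Nat.dvd_prime hp).mp hu with rfl | rfl
    · left; simpa using ⟨hv, hm.ne'⟩
    · right; exact ⟨v, ⟨hv, hm.ne'⟩, rfl⟩
  · rintro (⟨h, -⟩ | ⟨u, ⟨h, -⟩, rfl⟩)
    · exact ⟨h.mul_left p, by have := hp.pos; positivity⟩
    · exact ⟨mul_dvd_mul_left p h, by have := hp.pos; positivity⟩

lemma disjoint_divisors_image {p m : ℕ} (hpm : ¬ p ∣ m) :
    Disjoint m.divisors (m.divisors.image (p * ·)) := by
  rw [Finset.disjoint_left]
  intro t ht ht'
  obtain ⟨u, -, rfl⟩ := Finset.mem_image.mp ht'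
  exact hpm ((Dvd.intro u rfl).trans (Nat.dvd_of_mem_divisors ht))

lemma card_divisors_prime_mul {p m : ℕ} (hp : p.Prime) (hm : 0 < m) (hpm : ¬ p ∣ m) :
    (p * m).divisors.card = 2 * m.divisors.card := by
  rw [divisors_prime_mul hp hm, Finset.card_union_of_disjoint (disjoint_divisors_image hpm),
    Finset.card_image_of_injective _ (mul_right_injective₀ hp.ne_zero), two_mul]

/-- Divisors of `p * m` are those of `m` together with their multiples by `p`. If the target splits
into two parts, each matchable with the divisors of `m`, and one part has no multiple of `p`, then
that part can receive the multiples of `p`. -/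
lemma coprimeMatching_of_split {p m : ℕ} (hp : p.Prime) (hm : 0 < m) (hpm : ¬ p ∣ m)
    {B B' : Finset ℕ} (hB : CoprimeMatching m.divisors B) (hB' : CoprimeMatching m.divisors B')
    (hd : Disjoint B B') (hc : ∀ b ∈ B', ¬ p ∣ b) :
    CoprimeMatching (p * m).divisors (B ∪ B') := by
  rw [divisors_prime_mul hp hm]
  exact hB.union (hB'.mul_left hp.pos fun b hb => (hp.coprime_iff_not_dvd).mpr (hc b hb))
    (disjoint_divisors_image hpm) hd

lemma progression_halves (a d k : ℕ) :
    progression a d (2 * k) = progression a d k ∪ progression (a + k * d) d k := by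
  ext t
  simp only [Finset.mem_union, mem_progression]
  constructor
  · rintro ⟨i, hi, rfl⟩
    by_cases h : i < k
    · exact Or.inl ⟨i, h, rfl⟩
    · refine Or.inr ⟨i - k, by omega, ?_⟩
      obtain ⟨c, rfl⟩ := Nat.exists_eq_add_of_le (not_lt.mp h)
      simp; ring
  · rintro (⟨i, hi, rfl⟩ | ⟨i, hi, rfl⟩)
    · exact ⟨i, by omega, rfl⟩
    · exact ⟨k + i, by omega, by ring⟩

lemma disjoint_halves (a k : ℕ) {d : ℕ} (hd : 0 < d) :
    Disjoint (progression a d k) (progression (a + k * d) d k) := by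
  rw [Finset.disjoint_left]
  intro t h h'
  obtain ⟨i, hi, rfl⟩ := mem_progression.mp h
  obtain ⟨j, hj, e⟩ := mem_progression.mp h'
  have : i * d = (k + j) * d := by linarith
  have := Nat.eq_of_mul_eq_mul_right hd this
  omega

lemma progression_parity (a d k : ℕ) :
    progression a d (2 * k) = progression a (2 * d) k ∪ progression (a + d) (2 * d) k := by
  ext t
  simp only [Finset.mem_union, mem_progression]
  constructor
  · rintro ⟨i, hi, rfl⟩
    rcases Nat.even_or_odd' i with ⟨c, rfl | rfl⟩
    · exact Or.inl ⟨c, by omega, by ring⟩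
    · exact Or.inr ⟨c, by omega, by ring⟩
  · rintro (⟨i, hi, rfl⟩ | ⟨i, hi, rfl⟩)
    · exact ⟨2 * i, by omega, by ring⟩
    · exact ⟨2 * i + 1, by omega, by ring⟩

lemma disjoint_parity (a k : ℕ) {d : ℕ} (hd : 0 < d) :
    Disjoint (progression a (2 * d) k) (progression (a + d) (2 * d) k) := by
  rw [Finset.disjoint_left]
  intro t h h'
  obtain ⟨i, hi, rfl⟩ := mem_progression.mp h
  obtain ⟨j, hj, e⟩ := mem_progression.mp h'
  have : (2 * i) * d = (2 * j + 1) * d := by linarith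
  have := Nat.eq_of_mul_eq_mul_right hd this
  omega

/-! ### Multiplying a strongly matchable integer by a prime -/

lemma stronglyMatchable_one : StronglyMatchable 1 := by
  intro a d ha hd h
  refine ⟨fun _ => a, ?_, by simp⟩
  simp

/-- A progression of length `2 * τ(m) ≤ p` has at most one multiple of `p`, so one of its two halves
has none. -/
lemma StronglyMatchable.prime_mul {p m : ℕ} (hp : p.Prime) (hm : 0 < m) (hpm : ¬ p ∣ m)
    (hle : 2 * m.divisors.card ≤ p) (h : StronglyMatchable m) : StronglyMatchable (p * m) := by
  intro a d ha hd hg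
  rw [card_divisors_prime_mul hp hm hpm]
  set k := m.divisors.card with hk
  change CoprimeMatching _ (progression a d (2 * k))
  have h1 : CoprimeMatching m.divisors (progression a d k) := h a d ha hd hg
  have h2 : CoprimeMatching m.divisors (progression (a + k * d) d k) :=
    h (a + k * d) d (by omega) hd (by simpa using hg)
  have hdis := disjoint_halves a k hd
  rw [progression_halves]
  by_cases hc : ∀ b ∈ progression (a + k * d) d k, ¬ p ∣ b
  · exact coprimeMatching_of_split hp hm hpm h1 h2 hdis hc
  · rw [Finset.union_comm]
    refine coprimeMatching_of_split hp hm hpm h2 h1 hdis.symm ?_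
    push Not at hc
    obtain ⟨b, hb, hpb⟩ := hc
    obtain ⟨j, hj, rfl⟩ := mem_progression.mp hb
    intro c hc hpc
    obtain ⟨i, hi, rfl⟩ := mem_progression.mp hc
    -- Two multiples of `p` in the progression have indices differing by a multiple of `p`.
    have hsub : p ∣ (k + j - i) * d := by
      have := Nat.dvd_sub hpb hpc
      have e : a + k * d + j * d - (a + i * d) = (k + j - i) * d := by
        rw [Nat.sub_mul, Nat.add_mul]; omega
      rwa [e] at this
    rcases hp.dvd_mul.mp hsub with h3 | h3
    · have := Nat.le_of_dvd (by omega) h3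
      omega
    · have h4 : p ∣ a := (Nat.dvd_add_left (h3.mul_left i)).mp hpc
      have := Nat.dvd_gcd h4 h3
      rw [hg] at this
      exact hp.one_lt.ne' (Nat.dvd_one.mp this)

/-- No size condition is needed for the prime 2: the terms of even index and the terms of odd index
form two subprogressions, one of which consists of odd numbers. -/
lemma StronglyMatchable.two_mul {m : ℕ} (hm : Odd m) (h : StronglyMatchable m) :
    StronglyMatchable (2 * m) := by
  have hm0 : 0 < m := hm.pos
  have h2m : ¬ 2 ∣ m := by rw [← even_iff_two_dvd]; exact Nat.not_even_iff_odd.mpr hm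
  intro a d ha hd hg
  rw [card_divisors_prime_mul Nat.prime_two hm0 h2m]
  set k := m.divisors.card with hk
  change CoprimeMatching _ (progression a d (2 * k))
  -- An odd first term coprime to `d` is coprime to `2 * d`, so strong matchability of `m` applies.
  have hodd : ∀ b, 0 < b → Nat.gcd b d = 1 → ¬ 2 ∣ b →
      CoprimeMatching m.divisors (progression b (2 * d) k) ∧
        ∀ t ∈ progression b (2 * d) k, ¬ 2 ∣ t := by
    intro b hb hbd h2
    refine ⟨h b (2 * d) hb (by omega) ?_, ?_⟩
    · exact Nat.Coprime.mul_right ((Nat.prime_two.coprime_iff_not_dvd.mpr h2).symm) hbd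
    · intro t ht
      obtain ⟨i, -, rfl⟩ := mem_progression.mp ht
      intro h3
      apply h2
      have : 2 ∣ i * (2 * d) := ⟨i * d, by ring⟩
      exact (Nat.dvd_add_left this).mp h3
  -- Even terms are twice a progression of difference `d`; the factor 2 is harmless as `m` is odd.
  have heven : ∀ b, 0 < b → Nat.gcd b d = 1 → 2 ∣ b →
      CoprimeMatching m.divisors (progression b (2 * d) k) := by
    rintro b hb hbd ⟨c, rfl⟩
    have e : progression (2 * c) (2 * d) k = (progression c d k).image (2 * ·) := by
      simp only [progression, Finset.image_image]
      refine Finset.image_congr fun i _ => ?_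
      simp only [Function.comp]; ring
    rw [e]
    refine CoprimeMatching.mul_right (h c d (by omega) hd ?_) two_pos ?_
    · exact Nat.Coprime.coprime_mul_left hbd
    · intro t ht
      refine (Nat.prime_two.coprime_iff_not_dvd.mpr fun h3 => h2m ?_).symm
      exact h3.trans (Nat.dvd_of_mem_divisors ht)
  have hg' : Nat.gcd (a + d) d = 1 := by simpa using hg
  by_cases h2d : 2 ∣ d
  · have h2a : ¬ 2 ∣ a := fun h3 => by
      have := Nat.dvd_gcd h3 h2d
      rw [hg] at this; omega
    rw [progression_parity]
    obtain ⟨u, -⟩ := hodd a ha hg h2a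
    obtain ⟨v, v'⟩ := hodd (a + d) (by omega) hg' (by omega)
    exact coprimeMatching_of_split Nat.prime_two hm0 h2m u v (disjoint_parity a k hd) v'
  · rw [progression_parity]
    by_cases h2a : 2 ∣ a
    · obtain ⟨v, v'⟩ := hodd (a + d) (by omega) hg' (by omega)
      exact coprimeMatching_of_split Nat.prime_two hm0 h2m (heven a ha hg h2a) v
        (disjoint_parity a k hd) v'
    · obtain ⟨u, huodd⟩ := hodd a ha hg h2a
      rw [Finset.union_comm]
      exact coprimeMatching_of_split Nat.prime_two hm0 h2m
        (heven (a + d) (by omega) hg' (by omega)) u (disjoint_parity a k hd).symm huodd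

/-! ### Squarefree integers without too many small primes -/

/-- The odd primes below `2 ^ j`. -/
def oddPrimes (j : ℕ) : Finset ℕ := (range (2 ^ j)).filter fun p => p.Prime ∧ p ≠ 2

/-- `n` is crowded at level `j` if at least `j` odd primes below `2 ^ j` divide it. -/
def Crowded (j n : ℕ) : Prop := j ≤ ((oddPrimes j).filter (· ∣ n)).card

instance (j n : ℕ) : Decidable (Crowded j n) := by unfold Crowded; infer_instance

lemma mem_oddPrimes {j p : ℕ} : p ∈ oddPrimes j ↔ p < 2 ^ j ∧ p.Prime ∧ p ≠ 2 := by
  simp [oddPrimes]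

lemma Crowded.of_dvd {j m n : ℕ} (h : Crowded j m) (hmn : m ∣ n) : Crowded j n :=
  le_trans h (Finset.card_le_card
    (Finset.monotone_filter_right _ fun _ _ hp => hp.trans hmn))

/-- Levels one and two are never crowded: there is no odd prime below 2, and only 3 below 4. -/
lemma Crowded.three_le {j n : ℕ} (hj : 0 < j) (h : Crowded j n) : 3 ≤ j := by
  by_contra hlt
  have hc : (oddPrimes j).card < j := by
    interval_cases j
    · decide
    · decide
  exact absurd (h.trans (Finset.card_filter_le _ _)) (not_le.mpr hc)

lemma Crowded.le {j n : ℕ} (hn : 0 < n) (h : Crowded j n) : j ≤ n := by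
  refine le_trans h (le_trans (Finset.card_le_card (t := Finset.Icc 1 n) ?_) (by simp))
  intro p hp
  rw [Finset.mem_filter, mem_oddPrimes] at hp
  exact Finset.mem_Icc.mpr ⟨hp.1.2.1.pos, Nat.le_of_dvd hn hp.2⟩

lemma card_divisors_squarefree {n : ℕ} (hn : Squarefree n) :
    n.divisors.card = 2 ^ n.primeFactors.card := by
  rw [Nat.card_divisors hn.ne_zero, ← Finset.prod_const]
  refine Finset.prod_congr rfl fun p hp => ?_
  rw [Nat.factorization_eq_one_of_squarefree hn (Nat.prime_of_mem_primeFactors hp)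
    (Nat.dvd_of_mem_primeFactors hp)]

/-- Induction removing the largest prime factor, which is at least `τ(n)` because `n` is not crowded
at level `ω(n)`. -/
lemma stronglyMatchable_of_odd (n : ℕ) (hodd : Odd n) (hsq : Squarefree n)
    (hc : ∀ j, 0 < j → ¬ Crowded j n) : StronglyMatchable n := by
  induction n using Nat.strong_induction_on with
  | _ n ih =>
    rcases eq_or_ne n 1 with rfl | hn1
    · exact stronglyMatchable_one
    have hne : n.primeFactors.Nonempty := Nat.nonempty_primeFactors.mpr (by
      have := hodd.pos; omega)
    obtain ⟨p, hpmem, hpmax⟩ := n.primeFactors.exists_max_image id hne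
    have hp := Nat.prime_of_mem_primeFactors hpmem
    obtain ⟨m, rfl⟩ := Nat.dvd_of_mem_primeFactors hpmem
    have hm : 0 < m := Nat.pos_of_ne_zero fun h => by simp [h] at hodd
    have hpm : ¬ p ∣ m := by
      rintro ⟨c, rfl⟩
      exact hp.one_lt.ne' (Nat.isUnit_iff.mp (hsq p ⟨c, by ring⟩))
    refine StronglyMatchable.prime_mul hp hm hpm ?_
      (ih m (lt_mul_of_one_lt_left hm hp.one_lt) (Nat.odd_mul.mp hodd).2
        (hsq.squarefree_of_dvd (Dvd.intro_left p rfl))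
        fun j hj h => hc j hj (h.of_dvd (Dvd.intro_left p rfl)))
    rw [← card_divisors_prime_mul hp hm hpm, card_divisors_squarefree hsq]
    -- If `p` were smaller, all prime factors would witness crowding at level `ω(n)`.
    by_contra hlt
    refine hc _ (Finset.card_pos.mpr hne) (Finset.card_le_card fun q hq => ?_)
    have hqp := Nat.prime_of_mem_primeFactors hq
    have hqd := Nat.dvd_of_mem_primeFactors hq
    rw [Finset.mem_filter, mem_oddPrimes]
    refine ⟨⟨lt_of_le_of_lt (hpmax q hq) (not_le.mp hlt), hqp, ?_⟩, hqd⟩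
    rintro rfl
    exact Nat.not_even_iff_odd.mpr hodd (even_iff_two_dvd.mpr hqd)

lemma stronglyMatchable_of_squarefree {n : ℕ} (hsq : Squarefree n)
    (hc : ∀ j, 0 < j → ¬ Crowded j n) : StronglyMatchable n := by
  rcases Nat.even_or_odd n with he | ho
  · obtain ⟨m, rfl⟩ := even_iff_two_dvd.mp he
    have hm : Odd m := by
      rw [← Nat.not_even_iff_odd]
      rintro he'
      obtain ⟨c, rfl⟩ := even_iff_two_dvd.mp he'
      have := Nat.isUnit_iff.mp (hsq 2 ⟨c, by ring⟩)
      omega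
    exact (stronglyMatchable_of_odd m hm (hsq.squarefree_of_dvd (Dvd.intro_left 2 rfl))
      fun j hj h => hc j hj (h.of_dvd (Dvd.intro_left 2 rfl))).two_mul hm
  · exact stronglyMatchable_of_odd n ho hsq hc

/-! ### Counting crowded integers -/

lemma card_multiples_le (x m : ℕ) :
    (((Icc 1 x).filter (m ∣ ·)).card : ℝ) ≤ x / m := by
  have : (Icc 1 x).filter (m ∣ ·) = (Ioc 0 x).filter (m ∣ ·) := by
    congr 1
  rw [this, Nat.Ioc_filter_dvd_card_eq_div]
  exact Nat.cast_div_le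

/-- Rankin's trick: bound the count by the average of `z ^ (number of odd primes below 2 ^ j
dividing n)`, expanded over sets of primes. -/
lemma card_crowded_le (j x : ℕ) {z : ℝ} (hz : 1 ≤ z) :
    (((Icc 1 x).filter (Crowded j)).card : ℝ) ≤
      x * ((∏ p ∈ oddPrimes j, (1 + (z - 1) / p)) / z ^ j) := by
  rw [← mul_div_assoc, le_div_iff₀ (by positivity)]
  have hz0 : 0 ≤ z - 1 := by linarith
  calc (((Icc 1 x).filter (Crowded j)).card : ℝ) * z ^ j
      = ∑ n ∈ (Icc 1 x).filter (Crowded j), z ^ j := by simp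
    _ ≤ ∑ n ∈ (Icc 1 x).filter (Crowded j), z ^ ((oddPrimes j).filter (· ∣ n)).card :=
        Finset.sum_le_sum fun n hn => pow_le_pow_right₀ hz (Finset.mem_filter.mp hn).2
    _ ≤ ∑ n ∈ Icc 1 x, z ^ ((oddPrimes j).filter (· ∣ n)).card :=
        Finset.sum_le_sum_of_subset_of_nonneg (Finset.filter_subset _ _)
          fun _ _ _ => by positivity
    _ = ∑ n ∈ Icc 1 x, ∑ S ∈ (oddPrimes j).powerset,
          if ∀ p ∈ S, p ∣ n then (z - 1) ^ S.card else 0 := by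
        refine Finset.sum_congr rfl fun n _ => ?_
        rw [← Finset.prod_const, Finset.prod_filter]
        have : ∀ p ∈ oddPrimes j, (if p ∣ n then z else 1)
            = 1 + (if p ∣ n then z - 1 else 0) := by
          intro p _; split_ifs <;> ring
        rw [Finset.prod_congr rfl this, Finset.prod_one_add]
        refine Finset.sum_congr rfl fun S _ => ?_
        rw [Finset.prod_ite_zero, Finset.prod_const]
    _ = ∑ S ∈ (oddPrimes j).powerset, (z - 1) ^ S.card *
          (((Icc 1 x).filter fun n => ∀ p ∈ S, p ∣ n).card : ℝ) := by
        rw [Finset.sum_comm]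
        refine Finset.sum_congr rfl fun S _ => ?_
        rw [← Finset.sum_filter, Finset.sum_const, nsmul_eq_mul, mul_comm]
    _ ≤ ∑ S ∈ (oddPrimes j).powerset, (z - 1) ^ S.card * (x / ((∏ p ∈ S, p : ℕ) : ℝ)) := by
        refine Finset.sum_le_sum fun S hS => ?_
        refine mul_le_mul_of_nonneg_left ?_ (by positivity)
        refine le_trans ?_ (card_multiples_le x _)
        refine Nat.cast_le.mpr (Finset.card_le_card
          (Finset.monotone_filter_right _ fun n _ hn => ?_))
        refine Finset.prod_primes_dvd n (fun p hp => ?_) hn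
        exact (mem_oddPrimes.mp (Finset.mem_powerset.mp hS hp)).2.1.prime
    _ = x * ∏ p ∈ oddPrimes j, (1 + (z - 1) / p) := by
        rw [Finset.prod_one_add, Finset.mul_sum]
        refine Finset.sum_congr rfl fun S _ => ?_
        rw [Finset.prod_div_distrib, Finset.prod_const]
        push_cast
        ring

/-- The bound of `card_crowded_le` for the proportion of integers crowded at level `j`, with weight
`z = 2`. -/
noncomputable def levelBound (j : ℕ) : ℝ := (∏ p ∈ oddPrimes j, (1 + 1 / (p : ℝ))) / 2 ^ j

lemma levelBound_nonneg (j : ℕ) : 0 ≤ levelBound j := by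
  unfold levelBound
  exact div_nonneg (Finset.prod_nonneg fun p _ => by positivity) (by positivity)

lemma exp_half_le : Real.exp (1 / 2) ≤ 5 / 3 := by
  have h : Real.exp (1 / 2) ^ 2 = Real.exp 1 := by
    rw [← Real.exp_nat_mul]; norm_num
  have := Real.exp_one_lt_d9
  nlinarith [Real.exp_pos (1 / 2)]

/-- There are at most `2 ^ (j - 1)` odd primes between `2 ^ j` and `2 ^ (j + 1)`, so they multiply
the product by at most `exp (1 / 2) ≤ 5 / 3`. -/
lemma levelBound_succ {j : ℕ} (hj : 0 < j) : levelBound (j + 1) ≤ 5 / 6 * levelBound j := by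
  obtain ⟨i, rfl⟩ : ∃ i, j = i + 1 := ⟨j - 1, by omega⟩
  set N := (oddPrimes (i + 2)) \ oddPrimes (i + 1) with hN
  have hsub : oddPrimes (i + 1) ⊆ oddPrimes (i + 2) := fun p hp => by
    rw [mem_oddPrimes] at hp ⊢
    exact ⟨hp.1.trans (by rw [pow_succ 2 (i + 1)]; have := Nat.two_pow_pos (i+1); omega), hp.2⟩
  have hNmem : ∀ p ∈ N, 2 ^ (i + 1) ≤ p ∧ p < 2 ^ (i + 2) ∧ p % 2 = 1 := by
    intro p hp
    rw [hN, Finset.mem_sdiff, mem_oddPrimes, mem_oddPrimes] at hp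
    obtain ⟨⟨h1, h2, h3⟩, h4⟩ := hp
    exact ⟨not_lt.mp fun h => h4 ⟨h, h2, h3⟩, h1, h2.eq_two_or_odd.resolve_left h3⟩
  have hcard : N.card ≤ 2 ^ i := by
    have : N.card ≤ (Ico (2 ^ i) (2 ^ (i + 1))).card := by
      refine Finset.card_le_card_of_injOn (· / 2) (fun p hp => ?_) fun p hp q hq h => ?_
      · obtain ⟨h1, h2, h3⟩ := hNmem p hp
        rw [Finset.mem_coe, Finset.mem_Ico]
        rw [pow_succ] at h1 h2
        change 2 ^ i ≤ p / 2 ∧ p / 2 < 2 ^ (i + 1)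
        omega
      · have := hNmem p hp
        have := hNmem q hq
        simp only at h
        omega
    rw [Nat.card_Ico, pow_succ] at this
    omega
  have hprod : ∏ p ∈ N, (1 + 1 / (p : ℝ)) ≤ 5 / 3 := by
    calc ∏ p ∈ N, (1 + 1 / (p : ℝ)) ≤ ∏ p ∈ N, Real.exp (1 / 2 ^ (i + 1)) := by
          refine Finset.prod_le_prod (fun p _ => by positivity) fun p hp => ?_
          have h1 : ((2 : ℝ) ^ (i + 1)) ≤ p := by exact_mod_cast (hNmem p hp).1
          have h2 : 1 / (p : ℝ) ≤ 1 / 2 ^ (i + 1) := one_div_le_one_div_of_le (by positivity) h1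
          linarith [Real.add_one_le_exp (1 / (2 : ℝ) ^ (i + 1))]
      _ = Real.exp (N.card * (1 / 2 ^ (i + 1))) := by
          rw [Finset.prod_const, Real.exp_nat_mul]
      _ ≤ Real.exp (1 / 2) := by
          refine Real.exp_le_exp.mpr ?_
          have : (N.card : ℝ) ≤ 2 ^ i := by exact_mod_cast hcard
          calc (N.card : ℝ) * (1 / 2 ^ (i + 1)) ≤ 2 ^ i * (1 / 2 ^ (i + 1)) := by gcongr
            _ = 1 / 2 := by rw [pow_succ]; field_simp
      _ ≤ 5 / 3 := exp_half_le
  have hnn := levelBound_nonneg (i + 1)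
  have key : levelBound (i + 1 + 1) =
      (∏ p ∈ N, (1 + 1 / (p : ℝ))) / 2 * levelBound (i + 1) := by
    unfold levelBound
    rw [← Finset.prod_sdiff hsub, pow_succ 2 (i + 1)]
    field_simp
    rfl
  rw [key]
  nlinarith

lemma oddPrimes_eight : oddPrimes 8 = {3, 5, 7, 11, 13, 17, 19, 23, 29, 31, 37, 41, 43, 47, 53,
    59, 61, 67, 71, 73, 79, 83, 89, 97, 101, 103, 107, 109, 113, 127, 131, 137, 139, 149, 151,
    157, 163, 167, 173, 179, 181, 191, 193, 197, 199, 211, 223, 227, 229, 233, 239, 241, 251} := by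
  decide +kernel

lemma oddPrimes_eq_filter {j : ℕ} (hj : j ≤ 8) :
    oddPrimes j = (oddPrimes 8).filter (· < 2 ^ j) := by
  ext p
  rw [Finset.mem_filter, mem_oddPrimes, mem_oddPrimes]
  have : 2 ^ j ≤ 2 ^ 8 := Nat.pow_le_pow_right two_pos hj
  constructor
  · rintro ⟨h1, h2⟩; exact ⟨⟨by omega, h2⟩, h1⟩
  · rintro ⟨⟨h1, h2⟩, h3⟩; exact ⟨h3, h2⟩

lemma levelBound_eight : levelBound 8 ≤ 0.0158 := by
  rw [levelBound, oddPrimes_eight]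
  norm_num [Finset.prod_insert]

lemma small_levels : ∑ j ∈ Ico 3 8, (∏ p ∈ oddPrimes j, (1 + (12 - 1) / (p : ℝ))) / 12 ^ j
    ≤ 0.0353 := by
  have e : Ico 3 8 = {3, 4, 5, 6, 7} := by decide
  have h3 := oddPrimes_eq_filter (j := 3) (by norm_num)
  have h4 := oddPrimes_eq_filter (j := 4) (by norm_num)
  have h5 := oddPrimes_eq_filter (j := 5) (by norm_num)
  have h6 := oddPrimes_eq_filter (j := 6) (by norm_num)
  have h7 := oddPrimes_eq_filter (j := 7) (by norm_num)
  rw [oddPrimes_eight] at h3 h4 h5 h6 h7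
  rw [e]
  norm_num [Finset.prod_insert, Finset.filter_insert, Finset.filter_singleton, h3, h4, h5, h6, h7]

lemma card_crowded_large (x i : ℕ) :
    (((Icc 1 x).filter (Crowded (8 + i))).card : ℝ) ≤ x * (0.0158 * (5 / 6) ^ i) := by
  have h := card_crowded_le (8 + i) x (z := 2) one_le_two
  have h' : levelBound (8 + i) ≤ 0.0158 * (5 / 6) ^ i := by
    induction i with
    | zero => simpa using levelBound_eight
    | succ i ih =>
      have h1 := levelBound_succ (j := 8 + i) (by omega)
      have h2 := ih (card_crowded_le (8 + i) x (z := 2) one_le_two)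
      rw [← add_assoc, pow_succ]
      linarith
  refine h.trans (mul_le_mul_of_nonneg_left ?_ (Nat.cast_nonneg x))
  refine le_trans (le_of_eq ?_) h'
  unfold levelBound
  norm_num

lemma sum_crowded_le (x : ℕ) :
    ∑ j ∈ Ico 3 (8 + x), (((Icc 1 x).filter (Crowded j)).card : ℝ) ≤ x * 0.1301 := by
  rw [← Finset.sum_Ico_consecutive _ (show 3 ≤ 8 by norm_num) (show 8 ≤ 8 + x by omega),
    Finset.sum_Ico_eq_sum_range _ 8, Nat.add_sub_cancel_left]
  have h1 : ∑ j ∈ Ico 3 8, (((Icc 1 x).filter (Crowded j)).card : ℝ) ≤ x * 0.0353 := by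
    refine le_trans (Finset.sum_le_sum fun j _ => card_crowded_le j x (z := 12) (by norm_num)) ?_
    rw [← Finset.mul_sum]
    exact mul_le_mul_of_nonneg_left small_levels (Nat.cast_nonneg x)
  have h2 : ∑ i ∈ range x, (((Icc 1 x).filter (Crowded (8 + i))).card : ℝ) ≤ x * 0.0948 := by
    refine le_trans (Finset.sum_le_sum fun i _ => card_crowded_large x i) ?_
    rw [← Finset.mul_sum, ← Finset.mul_sum]
    refine mul_le_mul_of_nonneg_left ?_ (Nat.cast_nonneg x)
    have : ∑ i ∈ range x, ((5 : ℝ) / 6) ^ i ≤ 6 := by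
      rw [geom_sum_eq (by norm_num)]
      have : (0 : ℝ) ≤ (5 / 6) ^ x := by positivity
      rw [div_le_iff_of_neg (by norm_num)]
      linarith
    linarith
  linarith

/-! ### The density bound -/

/-- Telescoping, from `1 / (2 * k + 3) ^ 2 ≤ 1 / (4 * (k + 1)) - 1 / (4 * (k + 2))`. -/
lemma sum_odd_squares (x : ℕ) :
    ∑ k ∈ range x, (x : ℝ) / (((2 * k + 3) * (2 * k + 3) : ℕ) : ℝ) ≤ x * (1 / 4) := by
  have h : ∀ N : ℕ, ∑ k ∈ range N, (1 : ℝ) / (((2 * k + 3) * (2 * k + 3) : ℕ) : ℝ) ≤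
      1 / 4 - 1 / (4 * (N + 1)) := by
    intro N
    induction N with
    | zero => norm_num
    | succ N ih =>
      rw [Finset.sum_range_succ]
      have : (1 : ℝ) / (((2 * N + 3) * (2 * N + 3) : ℕ) : ℝ) ≤
          1 / (4 * (N + 1)) - 1 / (4 * ((N + 1 : ℕ) + 1)) := by
        have e : (1 : ℝ) / (4 * (N + 1)) - 1 / (4 * ((N + 1 : ℕ) + 1))
            = 1 / (4 * (N + 1) * (N + 2)) := by
          push_cast
          field_simp
          ring
        rw [e]
        refine one_div_le_one_div_of_le (by positivity) ?_
        push_cast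
        nlinarith
      linarith
  have e : ∀ k ∈ range x, (x : ℝ) / (((2 * k + 3) * (2 * k + 3) : ℕ) : ℝ) =
      x * (1 / (((2 * k + 3) * (2 * k + 3) : ℕ) : ℝ)) := fun k _ => by ring
  rw [Finset.sum_congr rfl e, ← Finset.mul_sum]
  refine mul_le_mul_of_nonneg_left ((h x).trans ?_) (Nat.cast_nonneg x)
  have : (0 : ℝ) ≤ 1 / (4 * (x + 1)) := by positivity
  linarith

open Classical in
/-- Every `n ≤ x` is strongly matchable, or divisible by 4 (density `1 / 4`), or by the square of an
odd number at least 3 (at most `1 / 4`), or crowded at some level (at most `0.1301`). -/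
lemma card_stronglyMatchable_ge (x : ℕ) :
    (x : ℝ) * 0.3699 ≤ (((Icc 1 x).filter fun n => StronglyMatchable n).card : ℝ) := by
  have hcover : Icc 1 x ⊆ ((Icc 1 x).filter fun n => StronglyMatchable n) ∪
      ((Icc 1 x).filter (4 ∣ ·) ∪
        ((range x).biUnion fun k => (Icc 1 x).filter ((2 * k + 3) * (2 * k + 3) ∣ ·)) ∪
        ((Ico 3 (8 + x)).biUnion fun j => (Icc 1 x).filter (Crowded j))) := by
    intro n hn
    obtain ⟨hn1, hnx⟩ := Finset.mem_Icc.mp hn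
    simp only [Finset.mem_union, Finset.mem_biUnion, Finset.mem_filter, hn, true_and]
    by_cases hsq : Squarefree n
    · by_cases hc : ∀ j, 0 < j → ¬ Crowded j n
      · exact Or.inl (stronglyMatchable_of_squarefree hsq hc)
      · push Not at hc
        obtain ⟨j, hj, hjn⟩ := hc
        have h1 := hjn.three_le hj
        have h2 := hjn.le hn1
        exact Or.inr (Or.inr ⟨j, Finset.mem_Ico.mpr ⟨h1, by omega⟩, hjn⟩)
    · rw [Nat.squarefree_iff_prime_squarefree] at hsq
      push Not at hsq
      obtain ⟨p, hp, hpn⟩ := hsq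
      refine Or.inr (Or.inl ?_)
      rcases hp.eq_two_or_odd with rfl | ho
      · exact Or.inl hpn
      · right
        have h1 := hp.two_le
        have h2 := Nat.le_of_dvd hn1 hpn
        have h3 : p ≤ p * p := Nat.le_mul_self p
        refine ⟨(p - 3) / 2, Finset.mem_range.mpr (by omega), ?_⟩
        have : 2 * ((p - 3) / 2) + 3 = p := by omega
        rwa [this]
  have hcard := (Finset.card_le_card hcover).trans (Finset.card_union_le _ _)
  have h1 := Finset.card_union_le ((Icc 1 x).filter (4 ∣ ·) ∪
        ((range x).biUnion fun k => (Icc 1 x).filter ((2 * k + 3) * (2 * k + 3) ∣ ·)))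
        ((Ico 3 (8 + x)).biUnion fun j => (Icc 1 x).filter (Crowded j))
  have h2 := Finset.card_union_le ((Icc 1 x).filter (4 ∣ ·))
        ((range x).biUnion fun k => (Icc 1 x).filter ((2 * k + 3) * (2 * k + 3) ∣ ·))
  have h3 := Finset.card_biUnion_le (s := range x)
    (t := fun k => (Icc 1 x).filter ((2 * k + 3) * (2 * k + 3) ∣ ·))
  have h4 := Finset.card_biUnion_le (s := Ico 3 (8 + x))
    (t := fun j => (Icc 1 x).filter (Crowded j))
  rw [Nat.card_Icc, Nat.add_sub_cancel] at hcard
  have htotal : x ≤ ((Icc 1 x).filter fun n => StronglyMatchable n).card +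
      (((Icc 1 x).filter (4 ∣ ·)).card +
      ∑ k ∈ range x, ((Icc 1 x).filter ((2 * k + 3) * (2 * k + 3) ∣ ·)).card +
      ∑ j ∈ Ico 3 (8 + x), ((Icc 1 x).filter (Crowded j)).card) := by omega
  have hreal : (x : ℝ) ≤ (((Icc 1 x).filter fun n => StronglyMatchable n).card : ℝ) +
      ((((Icc 1 x).filter (4 ∣ ·)).card : ℝ) +
      ∑ k ∈ range x, (((Icc 1 x).filter ((2 * k + 3) * (2 * k + 3) ∣ ·)).card : ℝ) +
      ∑ j ∈ Ico 3 (8 + x), (((Icc 1 x).filter (Crowded j)).card : ℝ)) := by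
    exact_mod_cast htotal
  have b1 := card_multiples_le x 4
  have b2 := (Finset.sum_le_sum fun k (_ : k ∈ range x) =>
    card_multiples_le x ((2 * k + 3) * (2 * k + 3))).trans (sum_odd_squares x)
  have b3 := sum_crowded_le x
  push_cast at b1
  linarith

end

open Classical in
theorem stmt_17 :
    (4 : ℝ) / 11 <
      Filter.liminf
        (fun x : ℕ =>
          (((Finset.Icc 1 x).filter (fun n => StronglyMatchable n)).card : ℝ) / (x : ℝ))
        Filter.atTop := by
  refine lt_of_lt_of_le (by norm_num : (4 : ℝ) / 11 < 0.3699) ?_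
  refine Filter.le_liminf_of_le ?_ ?_
  · refine Filter.IsBoundedUnder.isCoboundedUnder_ge ⟨1, ?_⟩
    rw [Filter.eventually_map]
    filter_upwards with x
    refine div_le_one_of_le₀ ?_ (Nat.cast_nonneg x)
    refine Nat.cast_le.mpr ((Finset.card_filter_le _ _).trans ?_)
    simp
  · filter_upwards [Filter.eventually_gt_atTop 0] with x hx
    rw [le_div_iff₀ (by exact_mod_cast hx), mul_comm]
    exact card_stronglyMatchable_ge x
end

section
/- If n is a strongly matchable positive integer and p is a prime with p not dividing n and p > 2τ(n), then pn is strongly matchable. -/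
theorem divisors_mul_prime {n p : ℕ} (hp : p.Prime) (hpn : ¬ p ∣ n) :
    (p * n).divisors = n.divisors.image (p * ·) ∪ n.divisors := by
  ext x
  have hn : n ≠ 0 := by rintro rfl; simp at hpn
  simp only [Finset.mem_union, Finset.mem_image, Nat.mem_divisors]
  constructor
  · rintro ⟨hx, -⟩
    by_cases hpx : p ∣ x
    · obtain ⟨y, rfl⟩ := hpx
      exact Or.inl ⟨y, ⟨Nat.dvd_of_mul_dvd_mul_left hp.pos hx, hn⟩, rfl⟩
    · exact Or.inr ⟨(((hp.coprime_iff_not_dvd).2 hpx).symm).dvd_of_dvd_mul_left hx, hn⟩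
  · rintro (⟨y, ⟨hy, -⟩, rfl⟩ | ⟨hx, -⟩)
    · exact ⟨Nat.mul_dvd_mul_left p hy, mul_ne_zero hp.ne_zero hn⟩
    · exact ⟨hx.mul_left p, mul_ne_zero hp.ne_zero hn⟩

theorem card_divisors_mul_prime {n p : ℕ} (hp : p.Prime) (hpn : ¬ p ∣ n) :
    (p * n).divisors.card = n.divisors.card + n.divisors.card := by
  rw [divisors_mul_prime hp hpn, Finset.card_union_of_disjoint,
    Finset.card_image_of_injective _ (mul_right_injective₀ hp.ne_zero)]
  rw [Finset.disjoint_left]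
  intro x hx hx'
  obtain ⟨y, -, rfl⟩ := Finset.mem_image.1 hx
  exact hpn ((Dvd.intro y rfl).trans (Nat.dvd_of_mem_divisors hx'))

/-- Two matchings of `D(n)` glue to one of `D(p * n)`: the first, whose target has no multiple of
`p`, is transported to `p * D(n)`. -/
theorem coprimeMatching_mul_prime {n p : ℕ} (hp : p.Prime) (hpn : ¬ p ∣ n) {B C : Finset ℕ}
    (hB : CoprimeMatching n.divisors B) (hC : CoprimeMatching n.divisors C)
    (hBC : Disjoint B C) (hpB : ∀ b ∈ B, ¬ p ∣ b) :
    CoprimeMatching (p * n).divisors (B ∪ C) := by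
  obtain ⟨f, hf, hfc⟩ := hB
  obtain ⟨g, hg, hgc⟩ := hC
  let ψ : ℕ → ℕ := fun x => if p ∣ x then f (x / p) else g x
  have hψ1 : ∀ y, ψ (p * y) = f y := fun y => by
    simp [ψ, Nat.mul_div_cancel_left _ hp.pos]
  have hψ2 : ∀ x ∈ n.divisors, ψ x = g x := fun x hx => by
    have : ¬ p ∣ x := fun h => hpn (h.trans (Nat.dvd_of_mem_divisors hx))
    simp [ψ, this]
  refine ⟨ψ, ?_, ?_⟩
  · rw [divisors_mul_prime hp hpn]
    refine ⟨?_, ?_, ?_⟩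
    · intro x hx
      rcases Finset.mem_union.1 hx with hx | hx
      · obtain ⟨y, hy, rfl⟩ := Finset.mem_image.1 hx
        exact Finset.mem_union_left _ (by simp only [hψ1]; exact hf.mapsTo hy)
      · exact Finset.mem_union_right _ (by rw [hψ2 x hx]; exact hg.mapsTo hx)
    · intro x hx z hz hxz
      rcases Finset.mem_union.1 hx with hx | hx <;> rcases Finset.mem_union.1 hz with hz | hz
      · obtain ⟨y, hy, rfl⟩ := Finset.mem_image.1 hx
        obtain ⟨w, hw, rfl⟩ := Finset.mem_image.1 hz
        simp only [hψ1] at hxz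
        rw [hf.injOn hy hw hxz]
      · obtain ⟨y, hy, rfl⟩ := Finset.mem_image.1 hx
        rw [hψ1, hψ2 z hz] at hxz
        exact absurd (hxz ▸ hg.mapsTo hz) (Finset.disjoint_left.1 hBC (hf.mapsTo hy))
      · obtain ⟨w, hw, rfl⟩ := Finset.mem_image.1 hz
        rw [hψ1, hψ2 x hx] at hxz
        exact absurd (hxz ▸ hg.mapsTo hx) (Finset.disjoint_left.1 hBC (hf.mapsTo hw))
      · rw [hψ2 x hx, hψ2 z hz] at hxz
        exact hg.injOn hx hz hxz
    · intro b hb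
      rcases Finset.mem_union.1 hb with hb | hb
      · obtain ⟨y, hy, rfl⟩ := hf.surjOn hb
        exact ⟨p * y, Finset.mem_union_left _ (Finset.mem_image_of_mem _ hy), hψ1 y⟩
      · obtain ⟨y, hy, rfl⟩ := hg.surjOn hb
        exact ⟨y, Finset.mem_union_right _ hy, hψ2 y hy⟩
  · intro x hx
    rw [divisors_mul_prime hp hpn] at hx
    rcases Finset.mem_union.1 hx with hx | hx
    · obtain ⟨y, hy, rfl⟩ := Finset.mem_image.1 hx
      simp only [hψ1]
      exact Nat.Coprime.mul_left ((hp.coprime_iff_not_dvd).2 (hpB _ (hf.mapsTo hy))) (hfc y hy)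
    · rw [hψ2 x hx]
      exact hgc x hx

/-- A progression with coprime start and difference has at most one multiple of `p` among its
first `p` terms: if `p` divided `d`, it would also divide `a`. -/
theorem eq_of_dvd_progression {p a d i j : ℕ} (hp : p.Prime) (had : Nat.gcd a d = 1)
    (hij : i ≤ j) (hj : j < p) (h1 : p ∣ a + i * d) (h2 : p ∣ a + j * d) : i = j := by
  obtain ⟨k, rfl⟩ := Nat.exists_eq_add_of_le hij
  have h3 : p ∣ k * d := by
    rw [add_mul, ← add_assoc] at h2
    exact (Nat.dvd_add_right h1).1 h2
  rcases hp.dvd_mul.1 h3 with h | h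
  · have := Nat.eq_zero_of_dvd_of_lt h (by omega)
    omega
  · have ha : p ∣ a := (Nat.dvd_add_left (h.mul_left i)).1 h1
    have := Nat.dvd_gcd ha h
    rw [had] at this
    exact absurd this hp.not_dvd_one

theorem stmt_18 (n p : ℕ) (hn : 0 < n) (hp : p.Prime) (hpn : ¬ p ∣ n)
    (hbig : 2 * n.divisors.card < p) (h : StronglyMatchable n) :
    StronglyMatchable (p * n) := by
  intro a d ha hd had
  rw [card_divisors_mul_prime hp hpn]
  have h1 := h a d ha hd had
  have h2 := h (a + n.divisors.card * d) d (by omega) hd (by simpa using had)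
  generalize n.divisors.card = t at *
  set B := (Finset.range t).image (fun i => a + i * d) with hB
  set C := (Finset.range t).image (fun i => a + t * d + i * d) with hC
  have hU : (Finset.range (t + t)).image (fun i => a + i * d) = B ∪ C := by
    rw [Finset.range_add, Finset.image_union, hB, hC, Finset.map_eq_image, Finset.image_image]
    congr 2
    funext i
    simp [add_mul, add_assoc]
  have hBC : Disjoint B C := by
    rw [Finset.disjoint_left]
    intro x hx hx'
    obtain ⟨i, hi, rfl⟩ := Finset.mem_image.1 hx
    obtain ⟨j, hj, hij⟩ := Finset.mem_image.1 hx'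
    have : (t + j) * d = i * d := by linarith
    have := Nat.eq_of_mul_eq_mul_right hd this
    have := Finset.mem_range.1 hi
    omega
  rw [hU]
  by_cases hpB : ∀ b ∈ B, ¬ p ∣ b
  · exact coprimeMatching_mul_prime hp hpn h1 h2 hBC hpB
  · rw [Finset.union_comm]
    refine coprimeMatching_mul_prime hp hpn h2 h1 hBC.symm fun c hc hpc => hpB fun b hb hpb => ?_
    obtain ⟨i, hi, rfl⟩ := Finset.mem_image.1 hb
    obtain ⟨j, hj, rfl⟩ := Finset.mem_image.1 hc
    have hi := Finset.mem_range.1 hi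
    have hj := Finset.mem_range.1 hj
    have hpc : p ∣ a + (t + j) * d := by rwa [add_mul, ← add_assoc]
    have := eq_of_dvd_progression hp had (by omega) (by omega) hpb hpc
    omega
end

section
/- For every prime p, the number M_p = ∏_{q ≤ p, q prime} q^{q−1} (the product taken over all primes q ≤ p) is matchable. -/
/-- The integer whose exponent at each `q ∈ S` is the residue of `n` modulo `q`. -/
def residueDivisor (S : Finset ℕ) (n : ℕ) : ℕ := ∏ q ∈ S, q ^ (n % q)

lemma card_divisors_prod (S : Finset ℕ) (hS : ∀ q ∈ S, q.Prime) :
    (∏ q ∈ S, q ^ (q - 1)).divisors.card = ∏ q ∈ S, q := by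
  induction S using Finset.induction_on with
  | empty => simp
  | insert a s ha ih =>
    have hpa := hS a (Finset.mem_insert_self a s)
    have hs : ∀ q ∈ s, q.Prime := fun q hq => hS q (Finset.mem_insert_of_mem hq)
    rw [Finset.prod_insert ha, Finset.prod_insert ha, Nat.Coprime.card_divisors_mul, ih hs,
      Nat.divisors_prime_pow hpa, Finset.card_map, Finset.card_range,
      Nat.sub_add_cancel hpa.one_le]
    refine Nat.Coprime.prod_right fun q hq => Nat.Coprime.pow _ _ ?_
    exact (Nat.coprime_primes hpa (hs q hq)).2 (fun h => ha (h ▸ hq))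

lemma factorization_residueDivisor (S : Finset ℕ) (hS : ∀ q ∈ S, q.Prime) (n : ℕ) {r : ℕ}
    (hr : r ∈ S) : (residueDivisor S n).factorization r = n % r := by
  unfold residueDivisor
  rw [Nat.factorization_prod fun q hq => pow_ne_zero _ (hS q hq).ne_zero, Finsupp.finsetSum_apply,
    Finset.sum_eq_single r]
  · simp [(hS r hr).factorization_pow]
  · intro q hq hqr
    simp [(hS q hq).factorization_pow, hqr]
  · exact fun h => absurd hr h

lemma residueDivisor_injOn (S : Finset ℕ) (hS : ∀ q ∈ S, q.Prime) :
    Set.InjOn (residueDivisor S) ↑(Finset.Icc 1 (∏ q ∈ S, q)) := by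
  intro m hm n hn hmn
  simp only [Finset.coe_Icc, Set.mem_Icc] at hm hn
  have hmod : m ≡ n [MOD ∏ q ∈ S, q] := by
    rw [Nat.modEq_iff_dvd, Nat.cast_prod]
    refine Finset.prod_dvd_of_coprime (fun a ha b hb hab => ?_) (fun q hq => ?_)
    · exact Nat.Coprime.isCoprime ((Nat.coprime_primes (hS a ha) (hS b hb)).2 hab)
    · rw [← Nat.modEq_iff_dvd, Nat.ModEq, ← factorization_residueDivisor S hS m hq, hmn,
        factorization_residueDivisor S hS n hq]
  -- Two congruent integers of `[1, P]` differ by less than `P`.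
  rw [Nat.modEq_iff_dvd] at hmod
  have := Int.eq_zero_of_abs_lt_dvd hmod (by rw [abs_lt]; constructor <;> omega)
  omega

lemma residueDivisor_dvd (S : Finset ℕ) (hS : ∀ q ∈ S, q.Prime) (n : ℕ) :
    residueDivisor S n ∣ ∏ q ∈ S, q ^ (q - 1) :=
  Finset.prod_dvd_prod_of_dvd _ _ fun q hq =>
    pow_dvd_pow q (Nat.le_sub_one_of_lt (Nat.mod_lt n (hS q hq).pos))

lemma coprime_residueDivisor (S : Finset ℕ) (hS : ∀ q ∈ S, q.Prime) (n : ℕ) :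
    Nat.Coprime (residueDivisor S n) n := by
  refine Nat.Coprime.prod_left fun q hq => ?_
  by_cases h : n % q = 0
  · simp [h]
  · exact Nat.Coprime.pow_left _
      ((hS q hq).coprime_iff_not_dvd.2 fun hd => h (Nat.mod_eq_zero_of_dvd hd))

theorem stmt_19 (p : ℕ) (hp : p.Prime) :
    Matchable (∏ q ∈ (Finset.range (p + 1)).filter Nat.Prime, q ^ (q - 1)) := by
  set S := (Finset.range (p + 1)).filter Nat.Prime
  have hS : ∀ q ∈ S, q.Prime := fun q hq => (Finset.mem_filter.1 hq).2
  have hne : ∏ q ∈ S, q ^ (q - 1) ≠ 0 :=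
    Finset.prod_ne_zero_iff.2 fun q hq => pow_ne_zero _ (hS q hq).ne_zero
  have hcard := card_divisors_prod S hS
  have hmaps : Set.MapsTo (residueDivisor S) ↑(Finset.Icc 1 (∏ q ∈ S, q))
      ↑(∏ q ∈ S, q ^ (q - 1)).divisors :=
    fun n _ => Nat.mem_divisors.2 ⟨residueDivisor_dvd S hS n, hne⟩
  have hinj := residueDivisor_injOn S hS
  have hbij : Set.BijOn (residueDivisor S) ↑(Finset.Icc 1 (∏ q ∈ S, q))
      ↑(∏ q ∈ S, q ^ (q - 1)).divisors :=
    ⟨hmaps, hinj, Finset.surjOn_of_injOn_of_card_le _ hmaps hinj (by simp [hcard])⟩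
  have hinv := hbij.invOn_invFunOn
  refine ⟨Function.invFunOn (residueDivisor S) ↑(Finset.Icc 1 (∏ q ∈ S, q)), ?_, ?_⟩
  · rw [hcard]
    exact hbij.symm hinv.symm
  · intro d hd
    have h := coprime_residueDivisor S hS
      (Function.invFunOn (residueDivisor S) ↑(Finset.Icc 1 (∏ q ∈ S, q)) d)
    rwa [hinv.2 hd] at h
end
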